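/- arXiv:2404.01666 — 2 statements merged into one kernel-verified Lean document; each statement's English description precedes it below -/
import Mathlib

section
/- For the exponential random graph model with parameter β in the subcritical region, let H be any fixed finite graph, possibly with isolated vertices, with v ≥ 3 vertices and e ≥ 1 edges. Then there exists a constant C > 0, depending only on β₁,…,β_k, H₁,…,H_k and H, such that for all n, Var(|Hom(H, G_Y)| − 2 n^{v−2} e p^{e−1} σ_n W_n) ≤ C n^{2v − 5/2}. -/
open MeasureTheory ProbabilityTheory Real Finset

noncomputable section

/-- The index set `I = {(i,j) : 1 ≤ i < j ≤ n}` of potential edges on `n` labeled vertices. -/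
def EdgeIdx (n : ℕ) : Type := {p : Fin n × Fin n // p.1 < p.2}

instance (n : ℕ) : Fintype (EdgeIdx n) := by unfold EdgeIdx; infer_instance
instance (n : ℕ) : DecidableEq (EdgeIdx n) := by unfold EdgeIdx; infer_instance

/-- Adjacency of the graph `G_y` encoded by the edge-indicator vector `y`. -/
def yAdj {n : ℕ} (y : EdgeIdx n → Bool) (a b : Fin n) : Bool :=
  if h : a < b then y ⟨(a, b), h⟩ else if h' : b < a then y ⟨(b, a), h'⟩ else false

/-- The number of edges of a graph `H`. -/
def eCount {V : Type} [Fintype V] (H : SimpleGraph V) : ℕ :=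
  Nat.card H.edgeSet

/-- `|Hom(H, G_y)|`: the number of injective maps from the vertex set of `H` to `Fin n`
mapping every edge of `H` to an edge of `G_y`. -/
def homCount {V : Type} [Fintype V] {n : ℕ} (H : SimpleGraph V) (y : EdgeIdx n → Bool) : ℕ :=
  Nat.card {φ : V → Fin n //
    Function.Injective φ ∧ ∀ a b, H.Adj a b → yAdj y (φ a) (φ b) = true}

/-- `|Hom(H, G_y, s)|`: the number of pairs `(φ, (u, v))` where `φ` is injective, `(u, v)` is
an ordered pair of adjacent vertices of `H` with `{φ u, φ v} = s`, and every edge of `H` other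
than `{u, v}` is mapped by `φ` to an edge of `G_y` (regardless of whether the edge `s` is
present in `G_y`). -/
def homCountAt {V : Type} [Fintype V] {n : ℕ} (H : SimpleGraph V) (y : EdgeIdx n → Bool)
    (s : EdgeIdx n) : ℕ :=
  Nat.card {t : (V → Fin n) × V × V //
    Function.Injective t.1 ∧ H.Adj t.2.1 t.2.2 ∧
    Sym2.mk (t.1 t.2.1, t.1 t.2.2) = Sym2.mk (s.1.1, s.1.2) ∧
    ∀ a b, H.Adj a b → Sym2.mk (a, b) ≠ Sym2.mk (t.2.1, t.2.2) →
      yAdj y (t.1 a) (t.1 b) = true}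

section ERGM

variable {k : ℕ} (β : Fin (k + 1) → ℝ) (v : Fin (k + 1) → ℕ)
  (H : ∀ j : Fin (k + 1), SimpleGraph (Fin (v j)))

/-- The (unnormalized) ERGM weight `exp (Σ_j β_j n^{2−v_j} |Hom(H_j, G_y)|)`. -/
def ergmWeight (n : ℕ) (y : EdgeIdx n → Bool) : ℝ :=
  Real.exp (∑ j, β j * (n : ℝ) ^ ((2 : ℤ) - (v j : ℤ)) * (homCount (H j) y : ℝ))

/-- The ERGM normalizing constant. -/
def ergmZ (n : ℕ) : ℝ := ∑ y : EdgeIdx n → Bool, ergmWeight β v H n y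

/-- The ERGM probability of the configuration `y`. -/
def ergmProb (n : ℕ) (y : EdgeIdx n → Bool) : ℝ := ergmWeight β v H n y / ergmZ β v H n

/-- Expectation of `G(Y)` under the ERGM. -/
def ergmExp (n : ℕ) (G : (EdgeIdx n → Bool) → ℝ) : ℝ :=
  ∑ y : EdgeIdx n → Bool, ergmProb β v H n y * G y

/-- Variance of `G(Y)` under the ERGM. -/
def ergmVar (n : ℕ) (G : (EdgeIdx n → Bool) → ℝ) : ℝ :=
  ergmExp β v H n (fun y => (G y - ergmExp β v H n G) ^ 2)

/-- The total number of edges of `G_y`. -/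
def edgeSum {n : ℕ} (y : EdgeIdx n → Bool) : ℝ :=
  ∑ s : EdgeIdx n, (if y s then (1 : ℝ) else 0)

/-- `Φ_β(a) = Σ_j β_j e_j a^{e_j − 1}`. -/
def PhiFn : ℝ → ℝ := fun a =>
  ∑ j, β j * (eCount (H j) : ℝ) * a ^ (eCount (H j) - 1)

/-- `φ_β(a) = e^{2Φ_β(a)} / (e^{2Φ_β(a)} + 1)`. -/
def phiFn : ℝ → ℝ := fun a =>
  Real.exp (2 * PhiFn β v H a) / (Real.exp (2 * PhiFn β v H a) + 1)

/-- `σ_n² = N p (1−p) / (1 − 2 p (1−p) Φ_β'(p))` with `N = n(n−1)/2`. -/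
def sigmaSq (p : ℝ) (n : ℕ) : ℝ :=
  ((n : ℝ) * ((n : ℝ) - 1) / 2) * p * (1 - p) /
    (1 - 2 * p * (1 - p) * deriv (PhiFn β v H) p)

/-- `μ_n = E Σ_{s ∈ I} Y_s`. -/
def muN (n : ℕ) : ℝ := ergmExp β v H n (edgeSum)

/-- The standardized number of edges `W_n`. -/
def Wn (p : ℝ) (n : ℕ) (y : EdgeIdx n → Bool) : ℝ :=
  (edgeSum y - muN β v H n) / Real.sqrt (sigmaSq β v H p n)

end ERGM

/-!
The law of the model is the Gibbs measure of a supermodular Hamiltonian `U` on the cube, so it is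
positively associated. For a monotone statistic `X` with small discrete derivatives, replacing the
coordinates one by one by independent Bernoulli(`q`) ones costs only a subgaussian error in the
exponential moments as long as all conditional edge probabilities lie below `q`. This gives upper
tail bounds for `X` around its mean-field value at `q`, and symmetrically lower tail bounds.
Applied to the discrete derivatives of `U`, whose sigmoids are the conditional probabilities, it
improves a bound `r` on the distance of these probabilities to `p` to `θ r + o(1)` with `θ < 1`, as
`p` attracts all of `[0, 1]`. Iterating logarithmically often, the conditional probabilities, and
with them all derivatives of subgraph counts, are within `O(n ^ (-1 / 4))` of their mean-field
values off an event of superpolynomially small probability.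

By positive association, `|∂ f| ≤ ∂ g` implies `Var f ≤ Var g`, since the covariance of `g - f` and
`g + f` is nonnegative; when the inequality holds only on an order-convex set of high probability,
a small error appears. The sum `S` of the conditional probabilities has derivatives at most `θ < 1`
on the good set, so `Var W ≤ cov(W, S) + N` for the number of edges `W` gives `Var W = O(n ^ 2)`.
Comparing the centred and rescaled subgraph count with `g = O(n ^ (-1 / 4)) * W` then proves the
theorem.
-/

/-! ### Discrete calculus on the Boolean cube -/

section Cube

variable {I : Type*} [DecidableEq I]

/-- The discrete derivative of a function on the Boolean cube in the coordinate `s`. -/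
def discDeriv (s : I) : ((I → Bool) → ℝ) →ₗ[ℝ] ((I → Bool) → ℝ) where
  toFun f y := f (Function.update y s true) - f (Function.update y s false)
  map_add' f g := by ext y; simp only [Pi.add_apply]; ring
  map_smul' a f := by ext y; simp only [Pi.smul_apply, smul_eq_mul, RingHom.id_apply]; ring

/-- Averaging over the coordinate `s`, replaced by an independent Bernoulli variable of
parameter `q`. -/
def resample (q : ℝ) (s : I) : ((I → Bool) → ℝ) →ₗ[ℝ] ((I → Bool) → ℝ) where
  toFun f y := q * f (Function.update y s true) + (1 - q) * f (Function.update y s false)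
  map_add' f g := by ext y; simp only [Pi.add_apply]; ring
  map_smul' a f := by ext y; simp only [Pi.smul_apply, smul_eq_mul, RingHom.id_apply]; ring

/-- Averaging successively over the coordinates of a list. When the list exhausts `I` this is
the expectation under the product Bernoulli measure of parameter `q`, as a constant function. -/
def sweep (q : ℝ) (l : List I) : Module.End ℝ ((I → Bool) → ℝ) := (l.map (resample q)).prod

/-- The sum of the discrete derivatives in all coordinates. -/
def totalDeriv [Fintype I] : ((I → Bool) → ℝ) →ₗ[ℝ] ((I → Bool) → ℝ) := ∑ s, discDeriv s

lemma discDeriv_apply (s : I) (f : (I → Bool) → ℝ) (y : I → Bool) :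
    discDeriv s f y = f (Function.update y s true) - f (Function.update y s false) := rfl

lemma resample_apply (q : ℝ) (s : I) (f : (I → Bool) → ℝ) (y : I → Bool) :
    resample q s f y =
      q * f (Function.update y s true) + (1 - q) * f (Function.update y s false) := rfl

@[simp] lemma sweep_nil (q : ℝ) (f : (I → Bool) → ℝ) : sweep q [] f = f := rfl

lemma sweep_cons (q : ℝ) (s : I) (l : List I) (f : (I → Bool) → ℝ) :
    sweep q (s :: l) f = resample q s (sweep q l f) := by
  simp only [sweep, List.map_cons, List.prod_cons, Module.End.mul_apply]

@[simp] lemma discDeriv_update (s : I) (b : Bool) (f : (I → Bool) → ℝ) (y : I → Bool) :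
    discDeriv s f (Function.update y s b) = discDeriv s f y := by
  simp only [discDeriv_apply, Function.update_idem]

@[simp] lemma resample_update (q : ℝ) (s : I) (b : Bool) (f : (I → Bool) → ℝ) (y : I → Bool) :
    resample q s f (Function.update y s b) = resample q s f y := by
  simp only [resample_apply, Function.update_idem]

lemma resample_eq_add_mul_discDeriv (q : ℝ) (s : I) (f : (I → Bool) → ℝ) (y : I → Bool) :
    resample q s f y = f (Function.update y s false) + q * discDeriv s f y := by
  rw [resample_apply, discDeriv_apply]
  ring

lemma discDeriv_resample_self (q : ℝ) (s : I) (f : (I → Bool) → ℝ) :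
    discDeriv s (resample q s f) = 0 := by
  ext y
  simp [discDeriv_apply (f := resample q s f)]

lemma discDeriv_resample_of_ne (q : ℝ) {s u : I} (hus : u ≠ s) (f : (I → Bool) → ℝ) :
    discDeriv u (resample q s f) = resample q s (discDeriv u f) := by
  ext y
  simp only [discDeriv_apply, resample_apply, Function.update_comm hus]
  ring

lemma discDeriv_comm (s u : I) (f : (I → Bool) → ℝ) :
    discDeriv s (discDeriv u f) = discDeriv u (discDeriv s f) := by
  rcases eq_or_ne s u with rfl | hsu
  · rfl
  · ext y
    simp only [discDeriv_apply, Function.update_comm hsu]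
    ring

lemma totalDeriv_eq_sum [Fintype I] (f : (I → Bool) → ℝ) : totalDeriv f = ∑ s, discDeriv s f := by
  rw [totalDeriv, LinearMap.sum_apply]

lemma totalDeriv_discDeriv [Fintype I] (s : I) (f : (I → Bool) → ℝ) :
    totalDeriv (discDeriv s f) = discDeriv s (totalDeriv f) := by
  simp only [totalDeriv_eq_sum, map_sum, discDeriv_comm]

lemma resample_mem_of_convex {C : Set ℝ} (hC : Convex ℝ C) {q : ℝ} (hq : q ∈ Set.Icc (0 : ℝ) 1)
    (s : I) {f : (I → Bool) → ℝ} (hf : ∀ y, f y ∈ C) (y : I → Bool) : resample q s f y ∈ C :=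
  hC (hf _) (hf _) hq.1 (sub_nonneg.2 hq.2) (add_sub_cancel q 1)

lemma sweep_mem_of_convex {C : Set ℝ} (hC : Convex ℝ C) {q : ℝ} (hq : q ∈ Set.Icc (0 : ℝ) 1)
    (l : List I) {f : (I → Bool) → ℝ} (hf : ∀ y, f y ∈ C) : ∀ y, sweep q l f y ∈ C := by
  induction l with
  | nil => exact hf
  | cons s l ih => simpa only [sweep_cons] using resample_mem_of_convex hC hq s ih

lemma discDeriv_sweep_mem_of_convex {C : Set ℝ} (hC : Convex ℝ C) (hC0 : (0 : ℝ) ∈ C) {q : ℝ}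
    (hq : q ∈ Set.Icc (0 : ℝ) 1) (l : List I) {u : I} {f : (I → Bool) → ℝ}
    (hf : ∀ y, discDeriv u f y ∈ C) : ∀ y, discDeriv u (sweep q l f) y ∈ C := by
  induction l with
  | nil => exact hf
  | cons s l ih =>
    rw [sweep_cons]
    rcases eq_or_ne u s with rfl | hus
    · simpa only [discDeriv_resample_self, Pi.zero_apply] using fun _ => hC0
    · simpa only [discDeriv_resample_of_ne q hus] using resample_mem_of_convex hC hq s ih

lemma sweep_mono {q : ℝ} (hq : q ∈ Set.Icc (0 : ℝ) 1) (l : List I) : Monotone (sweep q l) := by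
  intro f g hfg
  rw [← sub_nonneg, ← map_sub]
  exact sweep_mem_of_convex (convex_Ici 0) hq l fun y => sub_nonneg.2 (hfg y)

/-- `f` is increasing in every coordinate if `τ = 1`, and decreasing if `τ = -1`. Carrying the
sign as a real number lets upper and lower tails be treated together. -/
def SignedMono (τ : ℝ) (f : (I → Bool) → ℝ) : Prop := ∀ s y, 0 ≤ τ * discDeriv s f y

lemma SignedMono.sweep {τ q : ℝ} (hq : q ∈ Set.Icc (0 : ℝ) 1) {f : (I → Bool) → ℝ}
    (hf : SignedMono τ f) (l : List I) : SignedMono τ (sweep q l f) := fun s =>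
  discDeriv_sweep_mem_of_convex (C := {x | 0 ≤ τ * x})
    ((convex_Ici (0 : ℝ)).linear_preimage (LinearMap.mulLeft ℝ τ))
    (by simp) hq l (hf s)

lemma monotoneOn_of_discDeriv_nonneg [Finite I] {G : Set (I → Bool)} (hG : G.OrdConnected)
    {f : (I → Bool) → ℝ}
    (hf : ∀ y s, Function.update y s false ∈ G → Function.update y s true ∈ G →
      0 ≤ discDeriv s f y) : MonotoneOn f G := by
  classical
  have : Fintype I := Fintype.ofFinite I
  let _ : LocallyFiniteOrder G := Fintype.toLocallyFiniteOrder
  rw [Set.monotoneOn_iff_monotone, monotone_iff_forall_covBy]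
  rintro ⟨x, hx⟩ ⟨y, hy⟩ hxy
  have hcov : x ⋖ y := by
    rw [← Subtype.range_coe (s := G)] at hG
    exact (hG.apply_covBy_apply_iff (OrderEmbedding.subtype (· ∈ G))).2 hxy
  obtain ⟨s, hs, hne⟩ := Pi.covBy_iff.1 hcov
  obtain ⟨hxs, hys⟩ : x s = false ∧ y s = true := by
    revert hs; cases x s <;> cases y s <;> decide
  have hx' : Function.update y s false = x := by
    rw [Function.update_eq_iff]
    exact ⟨hxs.symm, fun u hu => (hne u hu).symm⟩
  have hy' : Function.update y s true = y := by rw [← hys, Function.update_eq_self]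
  have h := hf y s (by rwa [hx']) (by rwa [hy'])
  rwa [discDeriv_apply, hx', hy', sub_nonneg] at h

lemma monotone_of_signedMono [Finite I] {f : (I → Bool) → ℝ} (hf : SignedMono 1 f) :
    Monotone f :=
  monotoneOn_univ.1 <| monotoneOn_of_discDeriv_nonneg Set.ordConnected_univ fun y s _ _ => by
    simpa using hf s y

end Cube

lemma two_point_exp_le {q : ℝ} (hq : q ∈ Set.Icc (0 : ℝ) 1) (a b : ℝ) :
    q * exp a + (1 - q) * exp b ≤ exp ((a - b) ^ 2 / 8) * exp (q * a + (1 - q) * b) := by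
  have hsub := hasSubgaussianMGF_of_mem_Icc (X := id) (a := min a b) (b := max a b)
    (μ := bernoulliMeasure a b (⟨q, hq⟩ : unitInterval)) aemeasurable_id
    (by simp [ae_iff, bernoulliMeasure_def])
  have hmgf := hsub.mgf_le 1
  simp only [mgf, id_eq, integral_bernoulliMeasure, smul_eq_mul,
    one_mul, exp_sub, NNReal.coe_pow, NNReal.coe_div, coe_nnnorm, max_sub_min_eq_abs,
    norm_eq_abs, abs_abs, NNReal.coe_ofNat, div_pow, sq_abs, one_pow, mul_one] at hmgf
  rw [← mul_div_assoc, ← mul_div_assoc, ← add_div, div_le_iff₀ (exp_pos _)] at hmgf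
  rwa [show (a - b) ^ 2 / 8 = (b - a) ^ 2 / 2 ^ 2 / 2 by ring]

section Cube

variable {I : Type*} [DecidableEq I]

lemma sweep_exp_le {q : ℝ} (hq : q ∈ Set.Icc (0 : ℝ) 1) {f : (I → Bool) → ℝ} {c : I → ℝ}
    (hf : ∀ u y, |discDeriv u f y| ≤ c u) (l : List I) (y : I → Bool) :
    sweep q l (fun y => exp (f y)) y ≤
      exp ((l.map fun u => c u ^ 2 / 8).sum) * exp (sweep q l f y) := by
  induction l generalizing y with
  | nil => simp
  | cons s l ih =>
    have hd : |discDeriv s (sweep q l f) y| ≤ c s := by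
      simpa only [Set.mem_Icc, ← abs_le] using
        discDeriv_sweep_mem_of_convex (convex_Icc (-c s) (c s))
          (by simpa using (abs_nonneg _).trans (hf s y)) hq l
          (fun y => abs_le.1 (hf s y)) y
    simp only [sweep_cons, List.map_cons, List.sum_cons, resample_apply]
    set S := (l.map fun u => c u ^ 2 / 8).sum
    set yt := Function.update y s true
    set yf := Function.update y s false
    calc q * sweep q l (fun y => exp (f y)) yt + (1 - q) * sweep q l (fun y => exp (f y)) yf
        ≤ q * (exp S * exp (sweep q l f yt)) + (1 - q) * (exp S * exp (sweep q l f yf)) := by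
          have := sub_nonneg.2 hq.2
          gcongr
          exacts [hq.1, ih _, ih _]
      _ = exp S * (q * exp (sweep q l f yt) + (1 - q) * exp (sweep q l f yf)) := by ring
      _ ≤ exp S * (exp (c s ^ 2 / 8) * exp (q * sweep q l f yt + (1 - q) * sweep q l f yf)) := by
          gcongr
          refine (two_point_exp_le hq _ _).trans ?_
          have hsq := sq_le_sq.2 (hd.trans (le_abs_self _))
          gcongr ?_ * _
          exact exp_le_exp.2 (div_le_div_of_nonneg_right hsq (by norm_num))
      _ = _ := by rw [exp_add (c s ^ 2 / 8)]; ring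

/-- The monomial `∏_{u ∈ T} y_u` in the coordinates of the cube. -/
def cubeMonomial {I : Type*} (T : Finset I) (y : I → Bool) : ℝ :=
  if ∀ u ∈ T, y u = true then 1 else 0

lemma cubeMonomial_mem_Icc {I : Type*} (T : Finset I) (y : I → Bool) :
    cubeMonomial T y ∈ Set.Icc (0 : ℝ) 1 := by
  unfold cubeMonomial
  split_ifs <;> simp

lemma cubeMonomial_update_true (T : Finset I) (s : I) (y : I → Bool) :
    cubeMonomial T (Function.update y s true) = cubeMonomial (T.erase s) y := by
  refine if_congr (forall_congr' fun u => ?_) rfl rfl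
  by_cases hu : u = s <;> simp [hu]

lemma cubeMonomial_update_false (T : Finset I) (s : I) (y : I → Bool) :
    cubeMonomial T (Function.update y s false) = if s ∈ T then 0 else cubeMonomial T y := by
  split_ifs with hs
  · exact if_neg fun h => by simpa using h s hs
  · refine if_congr (forall₂_congr fun u hu => ?_) rfl rfl
    rw [Function.update_of_ne (ne_of_mem_of_not_mem hu hs)]

lemma discDeriv_cubeMonomial (T : Finset I) (s : I) :
    discDeriv s (cubeMonomial T) = if s ∈ T then cubeMonomial (T.erase s) else 0 := by
  ext y
  rw [discDeriv_apply, cubeMonomial_update_true, cubeMonomial_update_false]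
  split_ifs with hs
  · rw [sub_zero]
  · rw [Finset.erase_eq_of_notMem hs, sub_self, Pi.zero_apply]

lemma totalDeriv_cubeMonomial [Fintype I] (T : Finset I) :
    totalDeriv (cubeMonomial T) = ∑ s ∈ T, cubeMonomial (T.erase s) := by
  simp only [totalDeriv_eq_sum, discDeriv_cubeMonomial, Finset.sum_ite_mem, univ_inter]

lemma resample_cubeMonomial (q : ℝ) (T : Finset I) (s : I) :
    resample q s (cubeMonomial T) = (if s ∈ T then q else 1) • cubeMonomial (T.erase s) := by
  ext y
  rw [resample_apply, cubeMonomial_update_true, cubeMonomial_update_false, Pi.smul_apply,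
    smul_eq_mul]
  split_ifs with hs
  · ring
  · rw [Finset.erase_eq_of_notMem hs]; ring

lemma sweep_cubeMonomial (q : ℝ) (T : Finset I) {l : List I} (hl : l.Nodup) :
    sweep q l (cubeMonomial T) = q ^ #(T ∩ l.toFinset) • cubeMonomial (T \ l.toFinset) := by
  induction l with
  | nil => simp
  | cons s l ih =>
    obtain ⟨hs, hl⟩ := List.nodup_cons.1 hl
    rw [sweep_cons, ih hl, map_smul, resample_cubeMonomial, smul_smul, List.toFinset_cons,
      Finset.sdiff_insert]
    congr 1
    by_cases hT : s ∈ T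
    · rw [if_pos (by simp [hT, hs]), Finset.inter_insert_of_mem hT,
        Finset.card_insert_of_notMem (by simp [hs]), pow_succ]
    · rw [if_neg (by simp [hT]), Finset.inter_insert_of_notMem hT, mul_one]

lemma sweep_univ_cubeMonomial [Fintype I] (q : ℝ) (T : Finset I) (y : I → Bool) :
    sweep q univ.toList (cubeMonomial T) y = q ^ #T := by
  simp [sweep_cubeMonomial q T (Finset.nodup_toList _), cubeMonomial]

end Cube

/-! ### Gibbs measures on the Boolean cube -/

section Gibbs

variable {I : Type*}

/-- The Gibbs measure on the Boolean cube, with weights proportional to `exp H`. -/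
def gibbs (H : (I → Bool) → ℝ) : Measure (I → Bool) := Measure.count.tilted H

instance [Finite I] (H : (I → Bool) → ℝ) : IsProbabilityMeasure (gibbs H) :=
  isProbabilityMeasure_tilted Integrable.of_finite

variable [DecidableEq I] {H : (I → Bool) → ℝ}

lemma integral_gibbs [Fintype I] (f : (I → Bool) → ℝ) :
    ∫ y, f y ∂gibbs H = ∑ y, exp (H y) / (∑ z, exp (H z)) * f y := by
  simp only [gibbs, integral_tilted, integral_count, smul_eq_mul]

lemma two_mul_sum_eq_sum_update [Fintype I] (s : I) (g : (I → Bool) → ℝ) :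
    2 * ∑ y, g y = ∑ y, (g (Function.update y s true) + g (Function.update y s false)) := by
  have hflip : ∑ y, g (Function.update y s (!y s)) = ∑ y, g y :=
    Fintype.sum_bijective (fun y => Function.update y s (!y s))
      (Function.Involutive.bijective fun y => by simp) _ _ fun _ => rfl
  rw [two_mul]
  nth_rewrite 2 [← hflip]
  rw [← Finset.sum_add_distrib]
  refine Finset.sum_congr rfl fun y _ => ?_
  have hself := Function.update_eq_self s y
  rcases h : y s <;> rw [h] at hself <;> simp only [hself, Bool.not_true, Bool.not_false, add_comm]

lemma sigmoid_discDeriv (s : I) (H : (I → Bool) → ℝ) (y : I → Bool) :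
    sigmoid (discDeriv s H y) = exp (H (Function.update y s true)) /
      (exp (H (Function.update y s true)) + exp (H (Function.update y s false))) := by
  rw [sigmoid_def, discDeriv_apply, neg_sub, exp_sub]
  field_simp

-- `sigmoid (discDeriv s H y)` is the conditional probability of `y s = true` given the others.
lemma integral_resample [Finite I] (s : I) (f : (I → Bool) → ℝ) :
    ∫ y, resample (sigmoid (discDeriv s H y)) s f y ∂gibbs H = ∫ y, f y ∂gibbs H := by
  have : Fintype I := Fintype.ofFinite I
  simp only [integral_gibbs, div_mul_eq_mul_div, ← Finset.sum_div]
  congr 1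
  rw [← mul_right_inj' (two_ne_zero (α := ℝ)), two_mul_sum_eq_sum_update s,
    two_mul_sum_eq_sum_update s]
  refine Finset.sum_congr rfl fun y _ => ?_
  have := exp_pos (H (Function.update y s true))
  have := exp_pos (H (Function.update y s false))
  rw [discDeriv_update, discDeriv_update, resample_update, resample_update, sigmoid_discDeriv,
    resample_apply]
  field_simp
  ring

lemma integral_le_integral_sweep_add [Finite I] {q τ : ℝ} (hq : q ∈ Set.Icc (0 : ℝ) 1)
    (hτ : |τ| = 1)
    {A : Set (I → Bool)} (hA : ∀ y ∈ A, ∀ s, 0 ≤ τ * (q - sigmoid (discDeriv s H y)))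
    {f : (I → Bool) → ℝ} (hf : SignedMono τ f) (hf1 : ∀ y, f y ∈ Set.Icc (0 : ℝ) 1) (l : List I) :
    ∫ y, f y ∂gibbs H ≤ ∫ y, sweep q l f y ∂gibbs H + l.length * (gibbs H).real Aᶜ := by
  induction l with
  | nil => simp
  | cons s l ih =>
    set g := sweep q l f
    have hg : ∀ y, g y ∈ Set.Icc (0 : ℝ) 1 := sweep_mem_of_convex (convex_Icc 0 1) hq l hf1
    -- On `A`, replacing the conditional probability by `q` can only increase the average of `g`.
    have hpt : ∀ y, resample (sigmoid (discDeriv s H y)) s g y ≤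
        resample q s g y + Aᶜ.indicator 1 y := by
      intro y
      by_cases hy : y ∈ A
      · have hsign : 0 ≤ _ * (τ * discDeriv s g y) := mul_nonneg (hA y hy s) (hf.sweep hq l s y)
        have hτ2 : τ * τ = 1 := by rw [← abs_mul_abs_self, hτ, one_mul]
        rw [Set.indicator_of_notMem (by simpa using hy), resample_eq_add_mul_discDeriv,
          resample_eq_add_mul_discDeriv]
        linear_combination hsign + (q - sigmoid (discDeriv s H y)) * discDeriv s g y * hτ2
      · have h1 := resample_mem_of_convex (convex_Icc 0 1)
          ⟨sigmoid_nonneg (discDeriv s H y), sigmoid_le_one _⟩ s hg y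
        have h0 := resample_mem_of_convex (convex_Icc 0 1) hq s hg y
        rw [Set.indicator_of_mem (by simpa using hy), Pi.one_apply]
        linarith [h1.2, h0.1]
    have hstep : ∫ y, g y ∂gibbs H ≤
        ∫ y, sweep q (s :: l) f y ∂gibbs H + (gibbs H).real Aᶜ := by
      rw [← integral_resample s g, ← integral_indicator_one .of_discrete,
        ← integral_add .of_finite .of_finite]
      simpa only [sweep_cons] using integral_mono .of_finite .of_finite hpt
    rw [List.length_cons, Nat.cast_add_one, add_mul, one_mul]
    linarith

lemma sweep_indicator_le_of_bounded_diff {q : ℝ} (hq : q ∈ Set.Icc (0 : ℝ) 1)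
    {X : (I → Bool) → ℝ} {c : I → ℝ} (hc : ∀ u y, |discDeriv u X y| ≤ c u) {l : List I} {V : ℝ}
    (hV : 0 < V) (hcV : (l.map fun u => c u ^ 2).sum ≤ V) {m ε : ℝ} (hε : 0 ≤ ε) (y : I → Bool)
    (hm : sweep q l X y ≤ m) :
    sweep q l ({y | m + ε ≤ X y}.indicator 1) y ≤ exp (-(2 * ε ^ 2 / V)) := by
  set t := 4 * ε / V
  have ht : 0 ≤ t := by positivity
  have hchernoff : {y | m + ε ≤ X y}.indicator 1 ≤
      exp (-(t * (m + ε))) • fun y => exp ((t • X) y) := by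
    refine Set.indicator_le' (fun y hy => ?_) fun y _ =>
      mul_nonneg (exp_pos _).le (exp_pos _).le
    rw [Pi.smul_apply, smul_eq_mul, ← exp_add, Pi.one_apply, Pi.smul_apply, smul_eq_mul]
    exact one_le_exp (by nlinarith [hy.out])
  have hdiff : ∀ u y, |discDeriv u (t • X) y| ≤ t * c u := fun u y => by
    rw [map_smul, Pi.smul_apply, smul_eq_mul, abs_mul, abs_of_nonneg ht]
    exact mul_le_mul_of_nonneg_left (hc u y) ht
  have hsum : (l.map fun u => (t * c u) ^ 2 / 8).sum ≤ t ^ 2 * V / 8 := by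
    simp only [mul_pow, mul_div_right_comm, List.sum_map_mul_left]
    gcongr
  calc sweep q l ({y | m + ε ≤ X y}.indicator 1) y
      ≤ exp (-(t * (m + ε))) * sweep q l (fun y => exp ((t • X) y)) y := by
        simpa only [map_smul, Pi.smul_apply, smul_eq_mul] using sweep_mono hq l hchernoff y
    _ ≤ exp (-(t * (m + ε))) * (exp (t ^ 2 * V / 8) * exp (t * m)) := by
        gcongr
        refine (sweep_exp_le hq hdiff l y).trans ?_
        rw [map_smul, Pi.smul_apply, smul_eq_mul]
        gcongr
    _ = exp (-(2 * ε ^ 2 / V)) := by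
        rw [← exp_add, ← exp_add]
        congr 1
        simp only [t]
        field_simp
        ring

lemma SignedMono.indicator {τ : ℝ} (hτ : |τ| = 1) {X : (I → Bool) → ℝ} (hX : SignedMono 1 X)
    (a : ℝ) : SignedMono τ ({y | a ≤ τ * X y}.indicator 1) := by
  intro s y
  have hXs := hX s y
  simp only [discDeriv_apply, Set.indicator, Set.mem_ofPred_eq, Pi.one_apply, one_mul] at hXs ⊢
  rcases (abs_eq zero_le_one).1 hτ with rfl | rfl <;> split_ifs <;> linarith

lemma gibbs_real_tail_le [Fintype I] {q τ : ℝ} (hq : q ∈ Set.Icc (0 : ℝ) 1) (hτ : |τ| = 1)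
    {A : Set (I → Bool)} (hA : ∀ y ∈ A, ∀ s, 0 ≤ τ * (q - sigmoid (discDeriv s H y)))
    {X : (I → Bool) → ℝ} (hX : SignedMono 1 X) {c : I → ℝ}
    (hc : ∀ u y, |discDeriv u X y| ≤ c u) {V : ℝ} (hV : 0 < V) (hcV : ∑ u, c u ^ 2 ≤ V)
    {m ε : ℝ} (hm : ∀ y, τ * sweep q univ.toList X y ≤ m) (hε : 0 ≤ ε) :
    (gibbs H).real {y | m + ε ≤ τ * X y} ≤
      exp (-(2 * ε ^ 2 / V)) + Fintype.card I * (gibbs H).real Aᶜ := by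
  have hcompare := integral_le_integral_sweep_add hq hτ hA (hX.indicator hτ (m + ε))
    (fun y => by by_cases hy : y ∈ {y | m + ε ≤ τ * X y} <;> simp [hy]) univ.toList
  rw [integral_indicator_one .of_discrete, Finset.length_toList, Finset.card_univ] at hcompare
  refine hcompare.trans (add_le_add_left ?_ _)
  have hpt : ∀ y, sweep q univ.toList ({y | m + ε ≤ τ * X y}.indicator 1) y ≤
      exp (-(2 * ε ^ 2 / V)) := fun y =>
    sweep_indicator_le_of_bounded_diff (X := τ • X) hq
      (by simpa only [map_smul, Pi.smul_apply, smul_eq_mul, abs_mul, hτ, one_mul] using hc) hV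
      (by rwa [Finset.sum_map_toList]) hε y
      (by simpa only [map_smul, Pi.smul_apply, smul_eq_mul] using hm y)
  simpa using integral_mono (μ := gibbs H) .of_finite .of_finite hpt

end Gibbs

/-! ### Correlation inequalities -/

section Covariance

variable {Ω : Type*} [MeasurableSpace Ω] {μ : Measure Ω}

lemma abs_integral_le_of_eqOn_zero [IsFiniteMeasure μ] {G : Set Ω} {f : Ω → ℝ} {M : ℝ}
    (hG : Set.EqOn f 0 G) (hM : ∀ y, |f y| ≤ M) : |∫ y, f y ∂μ| ≤ M * μ.real Gᶜ := by
  rw [← setIntegral_eq_integral_of_forall_compl_eq_zero fun y hy => hG (not_not.1 hy)]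
  exact norm_setIntegral_le_of_norm_le_const (f := f) (measure_lt_top _ _) fun y _ => hM y

lemma abs_covariance_le_of_eqOn_zero [IsProbabilityMeasure μ] {G : Set Ω} {f g : Ω → ℝ}
    {M K : ℝ} (hf : MemLp f 2 μ) (hg : MemLp g 2 μ) (hG : Set.EqOn f 0 G)
    (hfM : ∀ y, |f y| ≤ M) (hgK : ∀ y, |g y| ≤ K) : |cov[f, g; μ]| ≤ 2 * M * K * μ.real Gᶜ := by
  have hmul : |∫ y, (f * g) y ∂μ| ≤ M * K * μ.real Gᶜ :=
    abs_integral_le_of_eqOn_zero (fun y hy => by simp [hG hy]) fun y => by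
      rw [Pi.mul_apply, abs_mul]
      exact mul_le_mul (hfM y) (hgK y) (abs_nonneg _) ((abs_nonneg _).trans (hfM y))
  have hfint : |∫ y, f y ∂μ| ≤ M * μ.real Gᶜ := abs_integral_le_of_eqOn_zero hG hfM
  have hgint : |∫ y, g y ∂μ| ≤ K := by
    simpa using norm_integral_le_of_norm_le_const (μ := μ) (f := g) (.of_forall hgK)
  calc |cov[f, g; μ]| ≤ |∫ y, (f * g) y ∂μ| + |∫ y, f y ∂μ| * |∫ y, g y ∂μ| := by
        rw [covariance_eq_sub hf hg, ← abs_mul]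
        exact abs_sub _ _
    _ ≤ M * K * μ.real Gᶜ + M * μ.real Gᶜ * K :=
        add_le_add hmul (mul_le_mul hfint hgint (abs_nonneg _) ((abs_nonneg _).trans hfint))
    _ = 2 * M * K * μ.real Gᶜ := by ring

end Covariance

section Correlation

variable {I : Type*} {H : (I → Bool) → ℝ}

/-- Supermodularity, the lattice condition under which the Gibbs measure of `H` is positively
associated. -/
def Supermodular (H : (I → Bool) → ℝ) : Prop := ∀ x y, H x + H y ≤ H (x ⊓ y) + H (x ⊔ y)

variable [Finite I]

lemma covariance_gibbs_nonneg (hH : Supermodular H) {f g : (I → Bool) → ℝ}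
    (hf : Monotone f) (hg : Monotone g) : 0 ≤ cov[f, g; gibbs H] := by
  classical
  have : Fintype I := Fintype.ofFinite I
  have hfkg := fkg (fun y => f y - f ⊥) (fun y => g y - g ⊥) (fun y => exp (H y))
    (fun y => (exp_pos _).le) (fun y => sub_nonneg.2 (hf bot_le))
    (fun y => sub_nonneg.2 (hg bot_le)) (fun x y hxy => sub_le_sub_right (hf hxy) _)
    (fun x y hxy => sub_le_sub_right (hg hxy) _)
    (fun x y => by rw [← exp_add, ← exp_add]; exact exp_le_exp.2 (hH x y))
  have hZ : 0 < ∑ y, exp (H y) := Finset.sum_pos (fun _ _ => exp_pos _) Finset.univ_nonempty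
  rw [← covariance_sub_const_left .of_finite (f ⊥), ← covariance_sub_const_right .of_finite (g ⊥),
    covariance_eq_sub .of_discrete .of_discrete, sub_nonneg]
  simp only [integral_gibbs, div_mul_eq_mul_div, ← Finset.sum_div, Pi.mul_apply]
  rw [div_le_div_iff_of_pos_right hZ, mul_div_assoc', div_le_iff₀ hZ]
  linarith

lemma exists_monotone_bounded_extension {G : Set (I → Bool)} {f : (I → Bool) → ℝ} {M : ℝ}
    (hf : MonotoneOn f G) (hM : ∀ y, |f y| ≤ M) :
    ∃ g : (I → Bool) → ℝ, Monotone g ∧ Set.EqOn f g G ∧ ∀ y, |g y| ≤ M := by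
  have hM0 : 0 ≤ M := (abs_nonneg _).trans (hM ⊥)
  have hfin : ∀ y, (insert (-M) (f '' (G ∩ Set.Iic y))).Finite := fun y => Set.toFinite _
  refine ⟨fun y => sSup (insert (-M) (f '' (G ∩ Set.Iic y))), fun x y hxy => ?_,
    fun y hy => ?_, fun y => abs_le.2 ⟨le_csSup (hfin y).bddAbove (Set.mem_insert _ _),
      csSup_le (Set.insert_nonempty _ _) ?_⟩⟩
  · refine csSup_le_csSup (hfin y).bddAbove (Set.insert_nonempty _ _) ?_
    gcongr
  · have hgreatest : IsGreatest (insert (-M) (f '' (G ∩ Set.Iic y))) (f y) := by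
      refine ⟨Or.inr ⟨y, ⟨hy, Set.mem_Iic.2 le_rfl⟩, rfl⟩, ?_⟩
      rintro _ (rfl | ⟨x, ⟨hx, hxy⟩, rfl⟩)
      exacts [(abs_le.1 (hM y)).1, hf hx hy hxy]
    exact hgreatest.csSup_eq.symm
  · rintro _ (rfl | ⟨x, -, rfl⟩)
    exacts [neg_le_self hM0, (abs_le.1 (hM x)).2]

lemma neg_le_covariance_gibbs_of_monotoneOn (hH : Supermodular H) {G : Set (I → Bool)}
    {f g : (I → Bool) → ℝ} {M : ℝ} (hf : MonotoneOn f G) (hg : MonotoneOn g G)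
    (hfM : ∀ y, |f y| ≤ M) (hgM : ∀ y, |g y| ≤ M) :
    -(8 * M ^ 2 * (gibbs H).real Gᶜ) ≤ cov[f, g; gibbs H] := by
  obtain ⟨f', hf', hff', hfM'⟩ := exists_monotone_bounded_extension hf hfM
  obtain ⟨g', hg', hgg', hgM'⟩ := exists_monotone_bounded_extension hg hgM
  have hdiff : ∀ {h h' : (I → Bool) → ℝ}, (∀ y, |h y| ≤ M) → (∀ y, |h' y| ≤ M) →
      ∀ y, |(h - h') y| ≤ 2 * M := fun hM hM' y =>
    (abs_sub _ _).trans (by linarith [hM y, hM' y])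
  have hcov_f := abs_le.1 <| abs_covariance_le_of_eqOn_zero (μ := gibbs H) (G := G) .of_discrete
    .of_discrete (fun y hy => by simp [hff' hy]) (hdiff hfM hfM') hgM
  have hcov_g := abs_le.1 <| abs_covariance_le_of_eqOn_zero (μ := gibbs H) (G := G) .of_discrete
    .of_discrete (fun y hy => by simp [hgg' hy]) (hdiff hgM hgM') hfM'
  rw [covariance_sub_left .of_discrete .of_discrete .of_discrete] at hcov_f hcov_g
  rw [covariance_comm g, covariance_comm g'] at hcov_g
  linarith [hcov_f.1, hcov_g.1, covariance_gibbs_nonneg hH hf' hg']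

variable [DecidableEq I]

-- `Var g - Var f` is the covariance of `g - f` and `g + f`, which are both increasing on `G`.
lemma variance_gibbs_le_of_abs_discDeriv_le (hH : Supermodular H) {G : Set (I → Bool)}
    (hG : G.OrdConnected) {f g : (I → Bool) → ℝ} {M : ℝ}
    (hfg : ∀ y s, Function.update y s false ∈ G → Function.update y s true ∈ G →
      |discDeriv s f y| ≤ discDeriv s g y)
    (hM : ∀ y, |f y| + |g y| ≤ M) :
    Var[f; gibbs H] ≤ Var[g; gibbs H] + 8 * M ^ 2 * (gibbs H).real Gᶜ := by
  have hsub : MonotoneOn (g - f) G := monotoneOn_of_discDeriv_nonneg hG fun y s h0 h1 => by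
    rw [map_sub, Pi.sub_apply]
    linarith [(abs_le.1 (hfg y s h0 h1)).2]
  have hadd : MonotoneOn (g + f) G := monotoneOn_of_discDeriv_nonneg hG fun y s h0 h1 => by
    rw [map_add, Pi.add_apply]
    linarith [(abs_le.1 (hfg y s h0 h1)).1]
  have hcov := neg_le_covariance_gibbs_of_monotoneOn hH hsub hadd
    (fun y => (abs_sub _ _).trans (by linarith [hM y]))
    (fun y => (abs_add_le _ _).trans (by linarith [hM y]))
  rw [covariance_sub_left .of_discrete .of_discrete .of_discrete,
    covariance_add_right .of_discrete .of_discrete .of_discrete,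
    covariance_add_right .of_discrete .of_discrete .of_discrete,
    covariance_self .of_discrete, covariance_self .of_discrete, covariance_comm f g] at hcov
  linarith

end Correlation

section HammingWeight

variable {I : Type*} [Fintype I] {H : (I → Bool) → ℝ}

/-- The number of coordinates that are switched on. -/
def hammingWeight (y : I → Bool) : ℝ := ∑ s, if y s then (1 : ℝ) else 0

lemma hammingWeight_mem_Icc (y : I → Bool) :
    hammingWeight y ∈ Set.Icc (0 : ℝ) (Fintype.card I) := by
  constructor
  · exact Finset.sum_nonneg fun s _ => by split_ifs <;> simp
  · calc hammingWeight y ≤ ∑ _s : I, (1 : ℝ) :=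
          Finset.sum_le_sum fun s _ => by split_ifs <;> simp
      _ = _ := by simp

variable [DecidableEq I]

lemma discDeriv_hammingWeight (s : I) (y : I → Bool) : discDeriv s hammingWeight y = 1 := by
  simp only [discDeriv_apply, hammingWeight]
  rw [← Finset.sum_sub_distrib, Finset.sum_eq_single s]
  · simp
  · intro u _ hu; simp [hu]
  · simp

/-- The sum over all coordinates of the conditional probability, under the Gibbs measure of `H`,
that the coordinate is on given all the others. -/
def sumCondProb (H : (I → Bool) → ℝ) (y : I → Bool) : ℝ := ∑ u, sigmoid (discDeriv u H y)

lemma sumCondProb_mem_Icc (y : I → Bool) : sumCondProb H y ∈ Set.Icc (0 : ℝ) (Fintype.card I) := by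
  refine ⟨Finset.sum_nonneg fun u _ => sigmoid_nonneg _, ?_⟩
  calc sumCondProb H y ≤ ∑ _u : I, (1 : ℝ) := Finset.sum_le_sum fun u _ => sigmoid_le_one _
    _ = _ := by simp

lemma integral_mul_hammingWeight (f : (I → Bool) → ℝ) :
    ∫ y, f y * hammingWeight y ∂gibbs H =
      ∫ y, ∑ u, sigmoid (discDeriv u H y) * f (Function.update y u true) ∂gibbs H := by
  simp only [hammingWeight, Finset.mul_sum]
  rw [integral_finsetSum _ fun _ _ => .of_finite, integral_finsetSum _ fun _ _ => .of_finite]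
  refine Finset.sum_congr rfl fun u _ => ?_
  rw [← integral_resample u fun y => f y * if y u then 1 else 0]
  simp [resample_apply]

lemma variance_hammingWeight_le_covariance_add :
    Var[hammingWeight; gibbs H] ≤
      cov[hammingWeight, sumCondProb H; gibbs H] + Fintype.card I := by
  have hmean : ∫ y, hammingWeight y ∂gibbs H = ∫ y, sumCondProb H y ∂gibbs H := by
    simpa [sumCondProb] using integral_mul_hammingWeight (H := H) fun _ => 1
  have hpt : ∀ y, ∑ u, sigmoid (discDeriv u H y) * hammingWeight (Function.update y u true) ≤
      hammingWeight y * sumCondProb H y + Fintype.card I := by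
    intro y
    rw [sumCondProb, Finset.mul_sum, ← Finset.card_univ, ← nsmul_one,
      ← Finset.sum_const, ← Finset.sum_add_distrib]
    refine Finset.sum_le_sum fun u _ => ?_
    have hflip : hammingWeight (Function.update y u true) ≤ hammingWeight y + 1 := by
      have h1 := discDeriv_hammingWeight u y
      have hself := Function.update_eq_self u y
      rw [discDeriv_apply] at h1
      rcases h : y u <;> rw [h] at hself <;> rw [hself] at h1 <;> grind
    nlinarith [sigmoid_nonneg (discDeriv u H y), sigmoid_le_one (discDeriv u H y)]
  have hsecond : ∫ y, hammingWeight y * hammingWeight y ∂gibbs H ≤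
      ∫ y, hammingWeight y * sumCondProb H y ∂gibbs H + Fintype.card I := by
    simpa [integral_mul_hammingWeight, integral_add (.of_finite) (.of_finite)] using
      integral_mono (μ := gibbs H) .of_finite .of_finite hpt
  rw [← covariance_self .of_discrete, covariance_eq_sub .of_discrete .of_discrete,
    covariance_eq_sub .of_discrete .of_discrete, ← hmean]
  simp only [Pi.mul_apply]
  linarith

lemma variance_hammingWeight_le (hH : Supermodular H) {G : Set (I → Bool)}
    (hG : G.OrdConnected) {θ : ℝ} (hθ : θ ∈ Set.Icc (0 : ℝ) 1)
    (hcontr : ∀ y s, Function.update y s false ∈ G → Function.update y s true ∈ G →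
      discDeriv s (sumCondProb H) y ≤ θ) :
    (1 - θ) * Var[hammingWeight; gibbs H] ≤
      Fintype.card I + 8 * (Fintype.card I : ℝ) ^ 2 * (gibbs H).real Gᶜ := by
  have hmonoW : MonotoneOn (hammingWeight : (I → Bool) → ℝ) G :=
    monotoneOn_of_discDeriv_nonneg hG fun y s _ _ => by
      rw [discDeriv_hammingWeight]
      exact zero_le_one
  have hmono : MonotoneOn (θ • hammingWeight - sumCondProb H) G :=
    monotoneOn_of_discDeriv_nonneg hG fun y s h0 h1 => by
      rw [map_sub, map_smul, Pi.sub_apply, Pi.smul_apply, discDeriv_hammingWeight]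
      simpa using hcontr y s h0 h1
  have hcov := neg_le_covariance_gibbs_of_monotoneOn hH hmonoW hmono (M := Fintype.card I)
    (fun y => by
      rw [abs_of_nonneg (hammingWeight_mem_Icc y).1]
      exact (hammingWeight_mem_Icc y).2)
    (fun y => by
      have hW := hammingWeight_mem_Icc y
      have hQ := sumCondProb_mem_Icc (H := H) y
      simp only [Pi.sub_apply, Pi.smul_apply, smul_eq_mul]
      exact abs_le.2 ⟨by nlinarith [hW.1, hQ.2, hθ.1], by nlinarith [hW.1, hW.2, hQ.1, hθ.2]⟩)
  rw [covariance_sub_right .of_discrete .of_discrete .of_discrete, covariance_smul_right,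
    covariance_self .of_discrete] at hcov
  linarith [variance_hammingWeight_le_covariance_add (H := H)]

end HammingWeight

/-! ### Concentration under a contraction hypothesis -/

lemma sigmoid_sub_sigmoid_le {D : Set ℝ} (hD : Convex ℝ D) {L : ℝ}
    (hL : ∀ x ∈ D, sigmoid x * (1 - sigmoid x) ≤ L) {a b : ℝ} (ha : a ∈ D) (hb : b ∈ D)
    (hab : a ≤ b) : sigmoid b - sigmoid a ≤ L * (b - a) :=
  hD.image_sub_le_mul_sub_of_deriv_le continuous_sigmoid.continuousOn
    differentiable_sigmoid.differentiableOn
    (fun x hx => by rw [deriv_sigmoid]; exact hL x (interior_subset hx)) a ha b hb hab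

lemma signed_sigmoid_sub_le {τ : ℝ} (hτ : |τ| = 1) {a b δ : ℝ} (hδ : 0 ≤ δ)
    (h : τ * a ≤ τ * b + δ) : τ * (sigmoid a - sigmoid b) ≤ δ := by
  have hlip : ∀ {a b : ℝ}, a ≤ b → sigmoid b - sigmoid a ≤ 1 * (b - a) :=
    sigmoid_sub_sigmoid_le convex_univ
      (fun x _ => by nlinarith [sigmoid_nonneg x, sigmoid_le_one x]) trivial trivial
  rcases (abs_eq zero_le_one).1 hτ with rfl | rfl <;> rcases le_total a b with hab | hab <;>
    linarith [sigmoid_le hab, hlip hab]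

section Concentration

variable {I : Type*} [DecidableEq I] {H X : (I → Bool) → ℝ}

/-- Configurations in which all conditional probabilities exceed `p` (in the direction `τ`) by at
most `r`. -/
def levelSet (H : (I → Bool) → ℝ) (p τ r : ℝ) : Set (I → Bool) :=
  {y | ∀ s, τ * (sigmoid (discDeriv s H y) - p) ≤ r}

lemma exists_density_of_levelSet {p τ r : ℝ} (hp : p ∈ Set.Icc (0 : ℝ) 1) (hτ : |τ| = 1)
    (hr : 0 ≤ r) :
    ∃ q ∈ Set.Icc (0 : ℝ) 1, |q - p| ≤ r ∧
      ∀ y ∈ levelSet H p τ r, ∀ s, 0 ≤ τ * (q - sigmoid (discDeriv s H y)) := by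
  rcases (abs_eq zero_le_one).1 hτ with rfl | rfl
  · refine ⟨min 1 (p + r), ⟨le_min zero_le_one (by linarith [hp.1]), min_le_left _ _⟩,
      abs_le.2 ⟨?_, ?_⟩, fun y hy s => ?_⟩
    · linarith [le_min hp.2 (le_add_of_nonneg_right hr)]
    · linarith [min_le_right 1 (p + r)]
    · linarith [le_min (sigmoid_le_one _) (by linarith [hy s] :
        sigmoid (discDeriv s H y) ≤ p + r)]
  · refine ⟨max 0 (p - r), ⟨le_max_left _ _, max_le zero_le_one (by linarith [hp.2])⟩,
      abs_le.2 ⟨?_, ?_⟩, fun y hy s => ?_⟩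
    · linarith [le_max_right 0 (p - r)]
    · linarith [max_le hp.1 (sub_le_self p hr)]
    · linarith [max_le (sigmoid_nonneg _) (by linarith [hy s] :
        p - r ≤ sigmoid (discDeriv s H y))]

variable [Fintype I] {g : ℝ → ℝ} {ν D : ℝ}

/-- `X` has bounded differences of order `1 / ν`, of total size at most `D`. -/
def BoundedDiff (ν D : ℝ) (X : (I → Bool) → ℝ) : Prop :=
  ∃ c : I → ℝ, (∀ u y, |discDeriv u X y| ≤ c u) ∧ (∀ u, c u ≤ D / ν) ∧ ∑ u, c u ≤ D

/-- A monotone observable with differences of order `1 / ν` whose mean under the product measure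
of density `q` is `g q`, up to an error of order `1 / ν`. -/
structure Regular (ν D : ℝ) (g : ℝ → ℝ) (X : (I → Bool) → ℝ) : Prop where
  signedMono : SignedMono 1 X
  boundedDiff : BoundedDiff ν D X
  mean : ∀ q ∈ Set.Icc (0 : ℝ) 1, ∀ y, |sweep q univ.toList X y - g q| ≤ D / ν

lemma BoundedDiff.mono {D' : ℝ} (hν : 0 < ν) (hD : D ≤ D') (h : BoundedDiff ν D X) :
    BoundedDiff ν D' X :=
  let ⟨c, hc, hcν, hcD⟩ := h
  ⟨c, hc, fun u => (hcν u).trans (by gcongr), hcD.trans hD⟩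

lemma Regular.mono {D' : ℝ} (hν : 0 < ν) (hD : D ≤ D') (h : Regular ν D g X) :
    Regular ν D' g X :=
  ⟨h.signedMono, h.boundedDiff.mono hν hD, fun q hq y => (h.mean q hq y).trans (by gcongr)⟩

lemma BoundedDiff.sum {ι : Type*} {S : Finset ι} {a D : ι → ℝ} {X : ι → (I → Bool) → ℝ}
    (hX : ∀ i ∈ S, BoundedDiff ν (D i) (X i)) :
    BoundedDiff ν (∑ i ∈ S, |a i| * D i) (∑ i ∈ S, a i • X i) := by
  choose! c hc hcν hcD using hX
  refine ⟨fun u => ∑ i ∈ S, |a i| * c i u, fun u y => ?_, fun u => ?_, ?_⟩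
  · simp only [map_sum, map_smul, Finset.sum_apply, Pi.smul_apply, smul_eq_mul]
    refine (Finset.abs_sum_le_sum_abs _ _).trans (Finset.sum_le_sum fun i hi => ?_)
    rw [abs_mul]
    exact mul_le_mul_of_nonneg_left (hc i hi u y) (abs_nonneg _)
  · simp only [Finset.sum_div, mul_div_assoc]
    exact Finset.sum_le_sum fun i hi => mul_le_mul_of_nonneg_left (hcν i hi u) (abs_nonneg _)
  · rw [Finset.sum_comm]
    simp only [← Finset.mul_sum]
    exact Finset.sum_le_sum fun i hi => mul_le_mul_of_nonneg_left (hcD i hi) (abs_nonneg _)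

lemma Regular.sum {ι : Type*} {S : Finset ι} {a D : ι → ℝ} {g : ι → ℝ → ℝ}
    {X : ι → (I → Bool) → ℝ} (ha : ∀ i ∈ S, SignedMono (a i) (X i))
    (hX : ∀ i ∈ S, Regular ν (D i) (g i) (X i)) :
    Regular ν (∑ i ∈ S, |a i| * D i) (fun q => ∑ i ∈ S, a i * g i q) (∑ i ∈ S, a i • X i) where
  signedMono s y := by
    simp only [map_sum, map_smul, Finset.sum_apply, Pi.smul_apply, smul_eq_mul, one_mul]
    exact Finset.sum_nonneg fun i hi => ha i hi s y
  boundedDiff := .sum fun i hi => (hX i hi).boundedDiff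
  mean q hq y := by
    simp only [map_sum, map_smul, Finset.sum_apply, Pi.smul_apply, smul_eq_mul]
    rw [← Finset.sum_sub_distrib, Finset.sum_div]
    refine (Finset.abs_sum_le_sum_abs _ _).trans (Finset.sum_le_sum fun i hi => ?_)
    rw [← mul_sub, abs_mul, mul_div_assoc]
    exact mul_le_mul_of_nonneg_left ((hX i hi).mean q hq y) (abs_nonneg _)

lemma Regular.gibbs_real_tail_le (hX : Regular ν D g X) (hν : 0 < ν) (hD : 0 < D) {q τ ε : ℝ}
    (hq : q ∈ Set.Icc (0 : ℝ) 1) (hτ : |τ| = 1) {A : Set (I → Bool)}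
    (hA : ∀ y ∈ A, ∀ s, 0 ≤ τ * (q - sigmoid (discDeriv s H y))) (hε : 0 ≤ ε) :
    (gibbs H).real {y | τ * g q + D / ν + ε ≤ τ * X y} ≤
      exp (-(2 * ε ^ 2 / (D ^ 2 / ν))) + Fintype.card I * (gibbs H).real Aᶜ := by
  obtain ⟨c, hc, hcν, hcD⟩ := hX.boundedDiff
  refine _root_.gibbs_real_tail_le hq hτ hA hX.signedMono hc (by positivity) ?_ (fun y => ?_) hε
  · calc ∑ u, c u ^ 2 ≤ ∑ u, D / ν * c u := Finset.sum_le_sum fun u _ => by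
          rw [pow_two]
          exact mul_le_mul_of_nonneg_right (hcν u)
            ((abs_nonneg _).trans (hc u fun _ => false))
      _ ≤ D / ν * D := by rw [← Finset.mul_sum]; gcongr
      _ = D ^ 2 / ν := by ring
  · have hmean := abs_le.1 (hX.mean q hq y)
    rcases (abs_eq zero_le_one).1 hτ with rfl | rfl <;> linarith [hmean.1, hmean.2]

variable {p θ τ ε : ℝ} {x : ℝ → ℝ}

lemma gibbs_real_levelSet_compl_step (hν : 0 < ν) (hD : 0 < D) (hp : p ∈ Set.Icc (0 : ℝ) 1)
    (hτ : |τ| = 1) (hθ : 0 ≤ θ)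
    (hcontr : ∀ q ∈ Set.Icc (0 : ℝ) 1, |sigmoid (x q) - p| ≤ θ * |q - p|)
    (hH : ∀ s, Regular ν D x (discDeriv s H)) (hε : 0 ≤ ε) {r : ℝ} (hr : 0 ≤ r) :
    (gibbs H).real (levelSet H p τ (θ * r + D / ν + ε))ᶜ ≤ Fintype.card I *
      (exp (-(2 * ε ^ 2 / (D ^ 2 / ν))) +
        Fintype.card I * (gibbs H).real (levelSet H p τ r)ᶜ) := by
  obtain ⟨q, hq, hqp, hqA⟩ := exists_density_of_levelSet (H := H) hp hτ hr
  have hsub : (levelSet H p τ (θ * r + D / ν + ε))ᶜ ⊆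
      ⋃ s, {y | τ * x q + D / ν + ε ≤ τ * discDeriv s H y} := by
    intro y hy
    by_contra hcon
    simp only [Set.mem_iUnion, Set.mem_ofPred_eq, not_exists, not_le] at hcon
    refine hy fun s => ?_
    have hclose : τ * (sigmoid (discDeriv s H y) - sigmoid (x q)) ≤ D / ν + ε :=
      signed_sigmoid_sub_le hτ (by positivity) (by linarith [hcon s])
    have hmove : τ * (sigmoid (x q) - p) ≤ θ * r := calc
      τ * (sigmoid (x q) - p) ≤ |sigmoid (x q) - p| := by
        simpa only [abs_mul, hτ, one_mul] using le_abs_self (τ * (sigmoid (x q) - p))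
      _ ≤ θ * |q - p| := hcontr q hq
      _ ≤ θ * r := by gcongr
    linarith
  calc _ ≤ ∑ s : I, (gibbs H).real {y | τ * x q + D / ν + ε ≤ τ * discDeriv s H y} :=
        (measureReal_mono hsub).trans (measureReal_iUnion_fintype_le _)
    _ ≤ ∑ _s : I, (exp (-(2 * ε ^ 2 / (D ^ 2 / ν))) +
          Fintype.card I * (gibbs H).real (levelSet H p τ r)ᶜ) :=
        Finset.sum_le_sum fun s _ => (hH s).gibbs_real_tail_le hν hD hq hτ hqA hε
    _ = _ := by rw [Finset.sum_const, Finset.card_univ, nsmul_eq_mul]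

-- Each application of the contraction shrinks the level set by a factor `θ`, at the price of a
-- union bound over all coordinates.
lemma gibbs_real_levelSet_compl_le (hν : 0 < ν) (hD : 0 < D) (hp : p ∈ Set.Icc (0 : ℝ) 1)
    (hτ : |τ| = 1) (hθ : θ ∈ Set.Ico (0 : ℝ) 1)
    (hcontr : ∀ q ∈ Set.Icc (0 : ℝ) 1, |sigmoid (x q) - p| ≤ θ * |q - p|)
    (hH : ∀ s, Regular ν D x (discDeriv s H)) (hε : 0 ≤ ε) {N : ℝ} (hN : 1 ≤ N)
    (hIN : Fintype.card I ≤ N) (K : ℕ) :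
    (gibbs H).real (levelSet H p τ (θ ^ K + (D / ν + ε) / (1 - θ)))ᶜ ≤
      K * N ^ (2 * K) * exp (-(2 * ε ^ 2 / (D ^ 2 / ν))) := by
  obtain ⟨hθ0, hθ1⟩ := hθ
  have hδ : 0 ≤ (D / ν + ε) / (1 - θ) := div_nonneg (by positivity) (by linarith)
  induction K with
  | zero =>
    have huniv : levelSet H p τ (θ ^ 0 + (D / ν + ε) / (1 - θ)) = Set.univ := by
      refine Set.eq_univ_of_forall fun y s => ?_
      rw [pow_zero]
      rcases (abs_eq zero_le_one).1 hτ with rfl | rfl <;>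
        linarith [hp.1, hp.2, sigmoid_nonneg (discDeriv s H y), sigmoid_le_one (discDeriv s H y)]
    rw [huniv]
    simp
  | succ K ih =>
    set t := exp (-(2 * ε ^ 2 / (D ^ 2 / ν)))
    have : 0 < t := exp_pos _
    have hrec : θ ^ (K + 1) + (D / ν + ε) / (1 - θ) =
        θ * (θ ^ K + (D / ν + ε) / (1 - θ)) + D / ν + ε := by
      have : 1 - θ ≠ 0 := by linarith
      field_simp
      ring
    rw [hrec]
    refine (gibbs_real_levelSet_compl_step hν hD hp hτ hθ0 hcontr hH hε (by positivity)).trans ?_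
    calc _ ≤ N * (t + N * (K * N ^ (2 * K) * t)) := by gcongr
      _ = N * t * 1 + K * N ^ (2 * K + 2) * t := by ring
      _ ≤ N * t * N ^ (2 * K + 1) + K * N ^ (2 * K + 2) * t := by
        gcongr
        exact one_le_pow₀ hN
      _ = _ := by push_cast; ring

lemma Regular.gibbs_real_signed_sub_le (hX : Regular ν D g X) (hν : 0 < ν) (hD : 0 < D)
    (hp : p ∈ Set.Icc (0 : ℝ) 1) (hτ : |τ| = 1) (hθ : θ ∈ Set.Ico (0 : ℝ) 1)
    (hcontr : ∀ q ∈ Set.Icc (0 : ℝ) 1, |sigmoid (x q) - p| ≤ θ * |q - p|)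
    (hH : ∀ s, Regular ν D x (discDeriv s H)) (hε : 0 ≤ ε) {N : ℝ} (hN : 1 ≤ N)
    (hIN : Fintype.card I ≤ N) {L : ℝ} (hL : 0 ≤ L)
    (hg : ∀ q ∈ Set.Icc (0 : ℝ) 1, |g q - g p| ≤ L * |q - p|) (K : ℕ) :
    (gibbs H).real {y | L * (θ ^ K + (D / ν + ε) / (1 - θ)) + D / ν + ε ≤ τ * (X y - g p)} ≤
      (K + 1) * N ^ (2 * K + 1) * exp (-(2 * ε ^ 2 / (D ^ 2 / ν))) := by
  set δ := θ ^ K + (D / ν + ε) / (1 - θ)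
  set t := exp (-(2 * ε ^ 2 / (D ^ 2 / ν)))
  have : 0 < t := exp_pos _
  have hδ : 0 ≤ δ :=
    add_nonneg (pow_nonneg hθ.1 _) (div_nonneg (by positivity) (sub_nonneg.2 hθ.2.le))
  obtain ⟨q, hq, hqp, hqA⟩ := exists_density_of_levelSet (H := H) hp hτ hδ
  have hgqp : τ * (g q - g p) ≤ L * δ := calc
    τ * (g q - g p) ≤ |g q - g p| := by
      simpa only [abs_mul, hτ, one_mul] using le_abs_self (τ * (g q - g p))
    _ ≤ L * |q - p| := hg q hq
    _ ≤ L * δ := by gcongr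
  have hsub : {y | L * δ + D / ν + ε ≤ τ * (X y - g p)} ⊆
      {y | τ * g q + D / ν + ε ≤ τ * X y} := fun y hy => by
    have := hy.out
    rw [Set.mem_ofPred_eq]
    linarith
  refine (measureReal_mono hsub).trans ((hX.gibbs_real_tail_le hν hD hq hτ hqA hε).trans ?_)
  have hlevel := gibbs_real_levelSet_compl_le hν hD hp hτ hθ hcontr hH hε hN hIN K
  calc _ ≤ t * 1 + N * (K * N ^ (2 * K) * t) := by rw [mul_one]; gcongr
    _ ≤ t * N ^ (2 * K + 1) + N * (K * N ^ (2 * K) * t) := by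
      gcongr
      exact one_le_pow₀ hN
    _ = _ := by ring

lemma Regular.gibbs_real_abs_sub_le (hX : Regular ν D g X) (hν : 0 < ν) (hD : 0 < D)
    (hp : p ∈ Set.Icc (0 : ℝ) 1) (hθ : θ ∈ Set.Ico (0 : ℝ) 1)
    (hcontr : ∀ q ∈ Set.Icc (0 : ℝ) 1, |sigmoid (x q) - p| ≤ θ * |q - p|)
    (hH : ∀ s, Regular ν D x (discDeriv s H)) (hε : 0 ≤ ε) {N : ℝ} (hN : 1 ≤ N)
    (hIN : Fintype.card I ≤ N) {L : ℝ} (hL : 0 ≤ L)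
    (hg : ∀ q ∈ Set.Icc (0 : ℝ) 1, |g q - g p| ≤ L * |q - p|) (K : ℕ) :
    (gibbs H).real {y | L * (θ ^ K + (D / ν + ε) / (1 - θ)) + D / ν + ε ≤ |X y - g p|} ≤
      2 * ((K + 1) * N ^ (2 * K + 1) * exp (-(2 * ε ^ 2 / (D ^ 2 / ν)))) := by
  set δ := L * (θ ^ K + (D / ν + ε) / (1 - θ)) + D / ν + ε
  have hsub : {y | δ ≤ |X y - g p|} ⊆
      {y | δ ≤ 1 * (X y - g p)} ∪ {y | δ ≤ -1 * (X y - g p)} := fun y hy => by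
    simpa only [Set.mem_union, Set.mem_ofPred_eq, one_mul, neg_one_mul] using le_abs.1 hy.out
  have hsided : ∀ τ : ℝ, |τ| = 1 → (gibbs H).real {y | δ ≤ τ * (X y - g p)} ≤ _ := fun τ hτ =>
    hX.gibbs_real_signed_sub_le hν hD hp hτ hθ hcontr hH hε hN hIN hL hg K
  refine (measureReal_mono hsub).trans ((measureReal_union_le _ _).trans ?_)
  linarith [hsided 1 (by simp), hsided (-1) (by simp)]

end Concentration

lemma eventually_sq_log_le_rpow {s c : ℝ} (hs : 0 < s) (hc : 0 < c) :
    ∀ᶠ n : ℕ in Filter.atTop, log n ^ 2 ≤ c * (n : ℝ) ^ s := by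
  have hlittle := ((isLittleO_log_rpow_rpow_atTop 2 hs).comp_tendsto
    tendsto_natCast_atTop_atTop).bound hc
  filter_upwards [hlittle] with n hn
  simp only [Function.comp_apply, norm_eq_abs, rpow_two] at hn
  rwa [abs_of_nonneg (by positivity), abs_of_nonneg (by positivity)] at hn

lemma eventually_union_bound_le {a c s : ℝ} (ha : 0 ≤ a) (hc : 0 < c) (hs : 0 < s) (M : ℕ) :
    ∀ᶠ n : ℕ in Filter.atTop, ∀ K : ℕ, (K : ℝ) ≤ a * log n + 1 →
      2 * (((K : ℝ) + 1) * ((n : ℝ) ^ 2) ^ (2 * K + 1) * exp (-(c * (n : ℝ) ^ s))) ≤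
        ((n : ℝ) ^ M)⁻¹ := by
  set C : ℝ := 5 * a + 8 + M with hC
  have hC0 : 0 < C := by positivity
  have hlog : ∀ᶠ n : ℕ in Filter.atTop, 1 ≤ log n :=
    (tendsto_log_atTop.comp tendsto_natCast_atTop_atTop).eventually_ge_atTop 1
  filter_upwards [eventually_sq_log_le_rpow hs (div_pos hc hC0), hlog,
    Filter.eventually_ge_atTop 1] with n hsq hl hn K hK
  set l := log n
  have hnl : (n : ℝ) = exp l := (exp_log (by exact_mod_cast hn)).symm
  set u : ℝ := (n : ℝ) ^ s
  rw [div_mul_eq_mul_div, le_div_iff₀ hC0] at hsq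
  have hpow : ((n : ℝ) ^ 2) ^ (2 * K + 1) = exp ((4 * K + 2) * l) := by
    rw [hnl, ← pow_mul, ← exp_nat_mul]
    congr 1; push_cast; ring
  have hM : ((n : ℝ) ^ M)⁻¹ = exp (-(M * l)) := by rw [hnl, ← exp_nat_mul, exp_neg]
  rw [hpow, hM]
  calc _ ≤ exp 1 * (exp K * exp ((4 * K + 2) * l) * exp (-(c * u))) := by
        gcongr
        exacts [by linarith [add_one_le_exp (1 : ℝ)], add_one_le_exp _]
    _ = exp (1 + K + (4 * K + 2) * l - c * u) := by
        rw [← exp_add, ← exp_add, ← exp_add]; congr 1; ring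
    _ ≤ _ := by
        apply exp_le_exp.2
        have hKl : (K : ℝ) * l ≤ (a * l + 1) * l := by gcongr
        have hll : l ≤ l ^ 2 := by nlinarith
        have hMl : (M : ℝ) * l ≤ M * l ^ 2 := by gcongr
        have hal : a * l ≤ a * l ^ 2 := by gcongr
        rw [hC] at hsq
        linarith

lemma pow_natCeil_log_le {θ s : ℝ} (hθ : θ ∈ Set.Ioo (0 : ℝ) 1) {n : ℝ} (hn : 0 < n) :
    θ ^ ⌈s / log θ * log n⌉₊ ≤ n ^ s := by
  have hlog : log θ < 0 := log_neg hθ.1 hθ.2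
  rw [← rpow_natCast, rpow_def_of_pos hθ.1, rpow_def_of_pos hn, exp_le_exp]
  calc log θ * ⌈s / log θ * log n⌉₊ ≤ log θ * (s / log θ * log n) :=
        mul_le_mul_of_nonpos_left (Nat.le_ceil _) hlog.le
    _ = log n * s := by field_simp [hlog.ne]

theorem exists_concentration {D p θ L : ℝ} {x g : ℝ → ℝ} (hD : 0 < D)
    (hp : p ∈ Set.Icc (0 : ℝ) 1) (hθ : θ ∈ Set.Ioo (0 : ℝ) 1)
    (hcontr : ∀ q ∈ Set.Icc (0 : ℝ) 1, |sigmoid (x q) - p| ≤ θ * |q - p|)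
    (hL : 0 ≤ L) (hg : ∀ q ∈ Set.Icc (0 : ℝ) 1, |g q - g p| ≤ L * |q - p|) :
    ∃ C : ℝ, 0 ≤ C ∧ ∀ M : ℕ, ∀ᶠ n : ℕ in Filter.atTop,
      ∀ (I : Type*) [Fintype I] [DecidableEq I] (H X : (I → Bool) → ℝ),
        (Fintype.card I : ℝ) ≤ (n : ℝ) ^ 2 → (∀ s, Regular n D x (discDeriv s H)) →
        Regular n D g X →
          (gibbs H).real {y | C * (n : ℝ) ^ (-(1 / 4) : ℝ) ≤ |X y - g p|} ≤ ((n : ℝ) ^ M)⁻¹ := by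
  have hθ' : 0 < 1 - θ := sub_pos.2 hθ.2
  set a : ℝ := -(1 / 4) / log θ
  have ha : 0 ≤ a := div_nonneg_of_nonpos (by norm_num) (log_neg hθ.1 hθ.2).le
  refine ⟨L * (1 + (D + 1) / (1 - θ)) + D + 1, by positivity, fun M => ?_⟩
  filter_upwards [eventually_union_bound_le (c := 2 / D ^ 2) (s := 1 / 2) ha (by positivity)
    (by norm_num) M, Filter.eventually_ge_atTop 1] with n htail hn I _ _ H X hI hH hX
  have hn1 : (1 : ℝ) ≤ n := by exact_mod_cast hn
  have hn0 : (0 : ℝ) < n := by linarith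
  set ε : ℝ := (n : ℝ) ^ (-(1 / 4) : ℝ) with hε
  have hε0 : 0 ≤ ε := by positivity
  set K := ⌈a * log n⌉₊
  have hK : (K : ℝ) ≤ a * log n + 1 :=
    (Nat.ceil_lt_add_one (mul_nonneg ha (log_nonneg hn1))).le
  have hθK : θ ^ K ≤ ε := pow_natCeil_log_le hθ hn0
  have hDn : D / n ≤ D * ε := by
    rw [div_eq_mul_inv, hε, ← rpow_neg_one]
    gcongr
    norm_num
  have hexponent : 2 * ε ^ 2 / (D ^ 2 / n) = 2 / D ^ 2 * (n : ℝ) ^ (1 / 2 : ℝ) := by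
    have : (n : ℝ) ^ (1 / 2 : ℝ) = ε ^ 2 * n := by
      rw [hε, ← rpow_mul_natCast hn0.le, ← rpow_add_one hn0.ne']
      norm_num
    rw [this]
    field_simp
  have hbound := hX.gibbs_real_abs_sub_le hn0 hD hp ⟨hθ.1.le, hθ.2⟩ hcontr hH hε0
    (one_le_pow₀ hn1) hI hL hg K
  rw [hexponent] at hbound
  refine (measureReal_mono fun y hy => le_trans ?_ hy.out).trans (hbound.trans (htail K hK))
  calc _ ≤ L * (ε + (D * ε + ε) / (1 - θ)) + D * ε + ε := by gcongr
    _ = _ := by ring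

/-! ### The fixed point equation -/

lemma continuous_dslope {f : ℝ → ℝ} (hf : Differentiable ℝ f) (p : ℝ) :
    Continuous (dslope f p) :=
  continuousOn_univ.1 <| (continuousOn_dslope Filter.univ_mem).2
    ⟨hf.continuous.continuousOn, hf p⟩

lemma abs_sub_eq_abs_dslope_mul (f : ℝ → ℝ) (p q : ℝ) :
    |f q - f p| = |dslope f p q| * |q - p| := by
  rw [← sub_smul_dslope f p q, smul_eq_mul, abs_mul, mul_comm]

lemma exists_abs_sub_le {f : ℝ → ℝ} (hf : Differentiable ℝ f) {K : Set ℝ} (hK : IsCompact K)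
    (p : ℝ) : ∃ L : ℝ, 0 ≤ L ∧ ∀ q ∈ K, |f q - f p| ≤ L * |q - p| := by
  obtain ⟨L, hL⟩ := hK.exists_bound_of_continuousOn (continuous_dslope hf p).continuousOn
  refine ⟨max L 0, le_max_right _ _, fun q hq => ?_⟩
  rw [abs_sub_eq_abs_dslope_mul]
  gcongr
  exact (hL q hq).trans (le_max_left _ _)

lemma exists_contraction {f : ℝ → ℝ} (hf : Differentiable ℝ f) {K : Set ℝ} (hK : IsCompact K)
    {p : ℝ} (hlt : ∀ q ∈ K, q ≠ p → |f q - f p| < |q - p|) (hderiv : |deriv f p| < 1) :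
    ∃ θ ∈ Set.Ioo (0 : ℝ) 1, ∀ q ∈ K, |f q - f p| ≤ θ * |q - p| := by
  rcases K.eq_empty_or_nonempty with rfl | hne
  · exact ⟨1 / 2, by norm_num, by simp⟩
  have hslope : ∀ q ∈ K, |dslope f p q| < 1 := fun q hq => by
    rcases eq_or_ne q p with rfl | hqp
    · rwa [dslope_same]
    · have := hlt q hq hqp
      rwa [abs_sub_eq_abs_dslope_mul,
        mul_lt_iff_lt_one_left (abs_pos.2 (sub_ne_zero.2 hqp))] at this
  obtain ⟨q₀, hq₀, hmax⟩ := hK.exists_isMaxOn hne (continuous_dslope hf p).abs.continuousOn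
  refine ⟨max |dslope f p q₀| (1 / 2), ⟨by positivity, max_lt (hslope q₀ hq₀) (by norm_num)⟩,
    fun q hq => ?_⟩
  rw [abs_sub_eq_abs_dslope_mul]
  gcongr
  exact (hmax hq).trans (le_max_left _ _)

lemma abs_sub_lt_of_unique_fixedPoint {f : ℝ → ℝ} (hf : Continuous f)
    (hmono : MonotoneOn f (Set.Icc 0 1)) {p : ℝ} (hp : p ∈ Set.Ioo (0 : ℝ) 1) (hfix : f p = p)
    (huniq : ∀ q ∈ Set.Ioo (0 : ℝ) 1, f q = q → q = p) (h0 : 0 < f 0) (h1 : f 1 < 1) {q : ℝ}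
    (hq : q ∈ Set.Icc (0 : ℝ) 1) (hqp : q ≠ p) : |f q - f p| < |q - p| := by
  have hpIcc := Set.Ioo_subset_Icc_self hp
  have hcont : ContinuousOn (fun q => f q - q) (Set.Icc 0 1) := by fun_prop
  rcases hqp.lt_or_gt with hlt | hgt
  · have hqf : q < f q := by
      by_contra! hcon
      obtain ⟨r, ⟨hr0, hrq⟩, hr⟩ := intermediate_value_Icc' hq.1
        (hcont.mono (Set.Icc_subset_Icc_right hq.2))
        (show (0 : ℝ) ∈ Set.Icc (f q - q) (f 0 - 0) by constructor <;> linarith)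
      rw [sub_eq_zero] at hr
      have hne : 0 ≠ r := by rintro rfl; linarith
      linarith [huniq r ⟨hr0.lt_of_ne hne, by linarith [hp.2]⟩ hr]
    rw [abs_sub_comm, abs_sub_comm q, abs_of_nonneg (sub_nonneg.2 (hmono hq hpIcc hlt.le)),
      abs_of_pos (sub_pos.2 hlt)]
    linarith
  · have hqf : f q < q := by
      by_contra! hcon
      obtain ⟨r, ⟨hqr, hr1⟩, hr⟩ := intermediate_value_Icc' hq.2
        (hcont.mono (Set.Icc_subset_Icc_left hq.1))
        (show (0 : ℝ) ∈ Set.Icc (f 1 - 1) (f q - q) by constructor <;> linarith)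
      rw [sub_eq_zero] at hr
      have hne : r ≠ 1 := by rintro rfl; linarith
      linarith [huniq r ⟨by linarith [hp.1], hr1.lt_of_ne hne⟩ hr]
    rw [abs_of_nonneg (sub_nonneg.2 (hmono hpIcc hq hgt.le)), abs_of_pos (sub_pos.2 hgt)]
    linarith

lemma exists_sigmoid_slope_bound {c d : ℝ} (h : sigmoid c * (1 - sigmoid c) * d < 1) :
    ∃ η L : ℝ, 0 < η ∧ 0 ≤ L ∧ L * (d + η) < 1 ∧
      ∀ x, |x - c| ≤ η → sigmoid x * (1 - sigmoid x) ≤ L := by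
  have hσ' : Continuous fun x => sigmoid x * (1 - sigmoid x) :=
    continuous_sigmoid.mul (continuous_const.sub continuous_sigmoid)
  set L₀ := sigmoid c * (1 - sigmoid c)
  have hL₀ : 0 ≤ L₀ := mul_nonneg (sigmoid_nonneg c) (sub_nonneg.2 (sigmoid_le_one c))
  have htend : Filter.Tendsto (fun t : ℝ => (L₀ + t) * (d + t)) (nhdsWithin 0 (Set.Ioi 0))
      (nhds (L₀ * d)) := by
    have : Continuous fun t : ℝ => (L₀ + t) * (d + t) := by fun_prop
    simpa using (this.tendsto 0).mono_left nhdsWithin_le_nhds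
  obtain ⟨t, hlt, ht⟩ := ((htend.eventually (gt_mem_nhds h)).and self_mem_nhdsWithin).exists
  have ht : 0 < t := ht
  obtain ⟨δ, hδ, hclose⟩ := Metric.continuousAt_iff.1 (hσ'.continuousAt (x := c)) t ht
  refine ⟨min t (δ / 2), L₀ + t, by positivity, by positivity, lt_of_le_of_lt ?_ hlt,
    fun x hx => ?_⟩
  · gcongr
    exact min_le_left _ _
  · have := hclose (x := x) ((hx.trans (min_le_right _ _)).trans_lt (half_lt_self hδ))
    rw [dist_eq] at this
    linarith [(abs_lt.1 this).2]

section Phi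

variable {k : ℕ} (β : Fin (k + 1) → ℝ) (v : Fin (k + 1) → ℕ)
  (H : ∀ j : Fin (k + 1), SimpleGraph (Fin (v j)))

/-- Distinct edges attract each other: `β` is nonnegative on every graph with at least two edges.
The sign of the parameters of the remaining graphs, which only tilt the edge density, is
arbitrary. -/
def Ferromagnetic : Prop := ∀ j, 2 ≤ eCount (H j) → 0 ≤ β j

/-- The parameter `β` is subcritical, with optimal edge density `p`. -/
structure Subcritical (p : ℝ) : Prop where
  mem_Ioo : p ∈ Set.Ioo (0 : ℝ) 1
  fixedPoint : phiFn β v H p = p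
  unique : ∀ q ∈ Set.Ioo (0 : ℝ) 1, phiFn β v H q = q → q = p
  deriv_lt_one : deriv (phiFn β v H) p < 1

lemma phiFn_eq_sigmoid (a : ℝ) : phiFn β v H a = sigmoid (2 * PhiFn β v H a) := by
  rw [phiFn, sigmoid_def, exp_neg]
  field_simp

lemma hasDerivAt_PhiFn (a : ℝ) : HasDerivAt (PhiFn β v H)
    (∑ j, β j * (eCount (H j) : ℝ) * (((eCount (H j) - 1 : ℕ) : ℝ) * a ^ (eCount (H j) - 1 - 1)))
    a :=
  HasDerivAt.fun_sum fun _ _ => (hasDerivAt_pow _ a).const_mul _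

lemma differentiable_PhiFn : Differentiable ℝ (PhiFn β v H) :=
  fun a => (hasDerivAt_PhiFn β v H a).differentiableAt

lemma hasDerivAt_phiFn (a : ℝ) : HasDerivAt (phiFn β v H)
    (phiFn β v H a * (1 - phiFn β v H a) * (2 * deriv (PhiFn β v H) a)) a := by
  simp only [funext (phiFn_eq_sigmoid β v H)]
  exact (hasDerivAt_sigmoid _).comp a ((differentiable_PhiFn β v H a).hasDerivAt.const_mul 2)

variable {β v H}

lemma Ferromagnetic.deriv_PhiFn_nonneg (hβ : Ferromagnetic β v H) {a : ℝ} (ha : 0 ≤ a) :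
    0 ≤ deriv (PhiFn β v H) a := by
  rw [(hasDerivAt_PhiFn β v H a).deriv]
  refine Finset.sum_nonneg fun j _ => ?_
  rcases lt_or_ge (eCount (H j)) 2 with he | he
  · simp [Nat.sub_eq_zero_of_le (Nat.le_of_lt_succ he)]
  · have := hβ j he
    positivity

lemma Ferromagnetic.monotoneOn_phiFn (hβ : Ferromagnetic β v H) :
    MonotoneOn (phiFn β v H) (Set.Icc 0 1) := by
  have hΦ : MonotoneOn (PhiFn β v H) (Set.Icc 0 1) :=
    monotoneOn_of_deriv_nonneg (convex_Icc 0 1) (differentiable_PhiFn β v H).continuous.continuousOn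
      (differentiable_PhiFn β v H).differentiableOn fun a ha =>
        hβ.deriv_PhiFn_nonneg (interior_subset ha).1
  intro a ha b hb hab
  rw [phiFn_eq_sigmoid, phiFn_eq_sigmoid]
  exact sigmoid_le (mul_le_mul_of_nonneg_left (hΦ ha hb hab) zero_le_two)

lemma Subcritical.mul_deriv_PhiFn_lt_one {p : ℝ} (hp : Subcritical β v H p) :
    p * (1 - p) * (2 * deriv (PhiFn β v H) p) < 1 := by
  simpa only [(hasDerivAt_phiFn β v H p).deriv, hp.fixedPoint] using hp.deriv_lt_one

lemma Subcritical.exists_contraction {p : ℝ} (hp : Subcritical β v H p)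
    (hβ : Ferromagnetic β v H) : ∃ θ ∈ Set.Ioo (0 : ℝ) 1, ∀ q ∈ Set.Icc (0 : ℝ) 1,
      |sigmoid (2 * PhiFn β v H q) - p| ≤ θ * |q - p| := by
  have hdiff : Differentiable ℝ (phiFn β v H) :=
    fun a => (hasDerivAt_phiFn β v H a).differentiableAt
  have hderiv : 0 ≤ deriv (phiFn β v H) p := by
    rw [(hasDerivAt_phiFn β v H p).deriv, hp.fixedPoint]
    have := hβ.deriv_PhiFn_nonneg hp.mem_Ioo.1.le
    exact mul_nonneg (mul_nonneg hp.mem_Ioo.1.le (sub_nonneg.2 hp.mem_Ioo.2.le)) (by positivity)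
  have h := _root_.exists_contraction hdiff isCompact_Icc
    (fun q => abs_sub_lt_of_unique_fixedPoint hdiff.continuous hβ.monotoneOn_phiFn hp.mem_Ioo
      hp.fixedPoint hp.unique (by rw [phiFn_eq_sigmoid]; exact sigmoid_pos _)
      (by rw [phiFn_eq_sigmoid]; exact sigmoid_lt_one _))
    (by rw [abs_of_nonneg hderiv]; exact hp.deriv_lt_one)
  rw [hp.fixedPoint] at h
  simpa only [← phiFn_eq_sigmoid] using h

end Phi

/-! ### Counting injections with prescribed values -/

section Extensions

open Classical in
/-- The maps `V → W` that agree with `f` on `A`. -/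
def extensions {V W : Type*} [Fintype V] [Fintype W] (A : Finset V) (f : V → W) :
    Finset (V → W) :=
  {φ | ∀ z ∈ A, φ z = f z}

variable {V W : Type*} [Fintype V] [Fintype W] {A : Finset V} {f φ : V → W}

lemma mem_extensions : φ ∈ extensions A f ↔ ∀ z ∈ A, φ z = f z := by
  simp [extensions]

lemma card_extensions (A : Finset V) (f : V → W) :
    (#(extensions A f) : ℝ) = (Fintype.card W : ℝ) ^ ((Fintype.card V : ℤ) - #A) := by
  classical
  have hpi : extensions A f = Fintype.piFinset fun z => if z ∈ A then {f z} else univ := by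
    ext φ
    simp only [mem_extensions, Fintype.mem_piFinset]
    refine forall_congr' fun z => ?_
    by_cases hz : z ∈ A <;> simp [hz]
  have hcard : #(extensions A f) = Fintype.card W ^ (Fintype.card V - #A) := by
    simp only [hpi, Fintype.card_piFinset, apply_ite card, card_singleton, Finset.card_univ]
    rw [Finset.prod_ite, prod_const_one, one_mul, prod_const, Finset.filter_not,
      filter_mem_eq_inter, univ_inter, ← compl_eq_univ_sdiff, card_compl]
  rw [hcard, Nat.cast_pow, ← zpow_natCast, Nat.cast_sub (card_le_univ A)]

open Classical in
lemma card_extensions_filter_eq_le {i j : V} (hi : i ∉ A) (hij : i ≠ j) :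
    (#{φ ∈ extensions A f | φ i = φ j} : ℝ) ≤
      (Fintype.card W : ℝ) ^ ((Fintype.card V : ℤ) - #A - 1) := by
  -- Overwriting the value at `i` loses no information, since it equals the value at `j`.
  have hinj : #{φ ∈ extensions A f | φ i = φ j} ≤ #(extensions (insert i A) f) := by
    refine card_le_card_of_injOn (fun φ => Function.update φ i (f i)) (fun φ hφ => ?_)
      fun φ hφ ψ hψ heq => ?_
    · rw [mem_coe, mem_filter, mem_extensions] at hφ
      refine mem_coe.2 (mem_extensions.2 fun z hz => ?_)
      beta_reduce
      obtain rfl | hzi := eq_or_ne z i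
      · rw [Function.update_self]
      · rw [Function.update_of_ne hzi]
        exact hφ.1 z (mem_of_mem_insert_of_ne hz hzi)
    · have hoff : ∀ z, z ≠ i → φ z = ψ z := fun z hz => by
        simpa [Function.update_of_ne hz] using congrFun heq z
      funext z
      obtain rfl | hz := eq_or_ne z i
      · exact (mem_filter.1 hφ).2.trans ((hoff j hij.symm).trans (mem_filter.1 hψ).2.symm)
      · exact hoff z hz
  calc (#{φ ∈ extensions A f | φ i = φ j} : ℝ) ≤ #(extensions (insert i A) f) := mod_cast hinj
    _ = _ := by
      rw [card_extensions, card_insert_of_notMem hi, Nat.cast_succ, sub_sub]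

open Classical in
lemma le_card_injective_extensions (hf : Set.InjOn f A) :
    (Fintype.card W : ℝ) ^ ((Fintype.card V : ℤ) - #A) -
        (Fintype.card V : ℝ) ^ 2 * (Fintype.card W : ℝ) ^ ((Fintype.card V : ℤ) - #A - 1) ≤
      #{φ ∈ extensions A f | Function.Injective φ} := by
  set pairs : Finset (V × V) := {z | z.1 ∉ A ∧ z.1 ≠ z.2}
  have hcover : extensions A f ⊆ {φ ∈ extensions A f | Function.Injective φ} ∪
      pairs.biUnion fun z => {φ ∈ extensions A f | φ z.1 = φ z.2} := by
    intro φ hφ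
    rw [mem_union, mem_filter, mem_biUnion]
    by_cases hinj : Function.Injective φ
    · exact .inl ⟨hφ, hinj⟩
    · obtain ⟨i, j, hij, hne⟩ : ∃ i j, φ i = φ j ∧ i ≠ j := by
        simpa [Function.Injective] using hinj
      have hagree := mem_extensions.1 hφ
      by_cases hi : i ∈ A
      · have hj : j ∉ A := fun hj => hne <| hf hi hj <| by rw [← hagree i hi, ← hagree j hj, hij]
        exact .inr ⟨(j, i), by simp [pairs, hj, hne.symm], mem_filter.2 ⟨hφ, hij.symm⟩⟩
      · exact .inr ⟨(i, j), by simp [pairs, hi, hne], mem_filter.2 ⟨hφ, hij⟩⟩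
  have hcollide : (#(pairs.biUnion fun z => {φ ∈ extensions A f | φ z.1 = φ z.2}) : ℝ) ≤
      (Fintype.card V : ℝ) ^ 2 * (Fintype.card W : ℝ) ^ ((Fintype.card V : ℤ) - #A - 1) := calc
    _ ≤ ∑ z ∈ pairs, (#{φ ∈ extensions A f | φ z.1 = φ z.2} : ℝ) := mod_cast card_biUnion_le
    _ ≤ ∑ _z ∈ pairs, (Fintype.card W : ℝ) ^ ((Fintype.card V : ℤ) - #A - 1) :=
      Finset.sum_le_sum fun z hz =>
        card_extensions_filter_eq_le (mem_filter.1 hz).2.1 (mem_filter.1 hz).2.2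
    _ ≤ _ := by
      rw [sum_const, nsmul_eq_mul]
      have hpairs : (#pairs : ℝ) ≤ (Fintype.card V : ℝ) ^ 2 := by
        have := card_le_univ pairs
        rw [Fintype.card_prod, ← sq] at this
        exact_mod_cast this
      gcongr
  have hcard : (#(extensions A f) : ℝ) ≤ #{φ ∈ extensions A f | Function.Injective φ} +
      #(pairs.biUnion fun z => {φ ∈ extensions A f | φ z.1 = φ z.2}) :=
    mod_cast (card_le_card hcover).trans (card_union_le _ _)
  rw [card_extensions] at hcard
  linarith

end Extensions

/-! ### Copies of a graph -/

section Copies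

variable {V : Type} [Fintype V] {n : ℕ} {G : SimpleGraph V} {φ : V → Fin n} {s : EdgeIdx n}

open Classical in
/-- The ordered pairs of adjacent vertices of a graph. -/
def adjPairs (G : SimpleGraph V) : Finset (V × V) := {d | G.Adj d.1 d.2}

open Classical in
/-- The images of the edges of `G` under `φ`, as coordinates of the cube. -/
def imageEdges (G : SimpleGraph V) (φ : V → Fin n) : Finset (EdgeIdx n) :=
  {s | ∃ a b, G.Adj a b ∧ φ a = s.1.1 ∧ φ b = s.1.2}

open Classical in
/-- The injections `V → Fin n`, that is, the copies of a graph on `V` in the complete graph. -/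
def injMaps (V : Type) [Fintype V] (n : ℕ) : Finset (V → Fin n) := {φ | Function.Injective φ}

open Classical in
/-- The copies of `G` that use the edge `s`. -/
def copiesThrough (G : SimpleGraph V) (s : EdgeIdx n) : Finset (V → Fin n) :=
  {φ ∈ injMaps V n | s ∈ imageEdges G φ}

lemma mem_adjPairs {d : V × V} : d ∈ adjPairs G ↔ G.Adj d.1 d.2 := by simp [adjPairs]

lemma mem_imageEdges :
    s ∈ imageEdges G φ ↔ ∃ a b, G.Adj a b ∧ φ a = s.1.1 ∧ φ b = s.1.2 := by simp [imageEdges]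

lemma mem_injMaps : φ ∈ injMaps V n ↔ Function.Injective φ := by simp [injMaps]

lemma mem_copiesThrough :
    φ ∈ copiesThrough G s ↔ Function.Injective φ ∧ s ∈ imageEdges G φ := by
  rw [copiesThrough, mem_filter, mem_injMaps]

lemma card_adjPairs (G : SimpleGraph V) : #(adjPairs G) = 2 * eCount G := by
  classical
  rw [eCount, Nat.card_eq_fintype_card, ← SimpleGraph.edgeFinset_card,
    ← G.dart_card_eq_twice_card_edges, ← Finset.card_univ]
  exact card_bij' (fun d hd => ⟨d, mem_adjPairs.1 hd⟩) (fun d _ => d.toProd) (by simp)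
    (fun d _ => mem_adjPairs.2 d.adj) (by simp) (by simp)

lemma card_imageEdges (G : SimpleGraph V) (hφ : Function.Injective φ) :
    #(imageEdges G φ) = eCount G := by
  have hpairs : #{d ∈ adjPairs G | φ d.1 < φ d.2} = #(imageEdges G φ) := by
    refine card_bij (fun d hd => (⟨(φ d.1, φ d.2), (mem_filter.1 hd).2⟩ : EdgeIdx n))
      (fun d hd => ?_) (fun d hd d' hd' h => ?_) (fun s hs => ?_)
    · exact mem_imageEdges.2 ⟨d.1, d.2, mem_adjPairs.1 (mem_filter.1 hd).1, rfl, rfl⟩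
    · obtain ⟨h₁, h₂⟩ := Prod.ext_iff.1 (congrArg Subtype.val h)
      exact Prod.ext (hφ h₁) (hφ h₂)
    · obtain ⟨a, b, hab, ha, hb⟩ := mem_imageEdges.1 hs
      refine ⟨(a, b), mem_filter.2 ⟨mem_adjPairs.2 hab, ?_⟩, Subtype.ext (Prod.ext ha hb)⟩
      simp only [ha, hb]
      exact s.2
  have hswap : #{d ∈ adjPairs G | φ d.1 < φ d.2} = #{d ∈ adjPairs G | ¬ φ d.1 < φ d.2} := by
    refine card_bij' (fun d _ => d.swap) (fun d _ => d.swap) (fun d hd => ?_) (fun d hd => ?_)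
      (by simp) (by simp) <;> rw [mem_filter, mem_adjPairs] at hd ⊢
    · exact ⟨hd.1.symm, not_lt.2 hd.2.le⟩
    · exact ⟨hd.1.symm, lt_of_le_of_ne (not_lt.1 hd.2) fun h => hd.1.ne' (hφ h)⟩
  have hsplit := card_filter_add_card_filter_not (s := adjPairs G) (fun d => φ d.1 < φ d.2)
  rw [card_adjPairs] at hsplit
  lia

lemma forall_yAdj_iff (hφ : Function.Injective φ) {y : EdgeIdx n → Bool} :
    (∀ a b, G.Adj a b → yAdj y (φ a) (φ b) = true) ↔ ∀ s ∈ imageEdges G φ, y s = true := by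
  constructor
  · intro h s hs
    obtain ⟨a, b, hab, ha, hb⟩ := mem_imageEdges.1 hs
    have hab' := h a b hab
    rw [ha, hb, yAdj, dif_pos s.2] at hab'
    exact hab'
  · intro h a b hab
    rcases lt_trichotomy (φ a) (φ b) with hlt | heq | hgt
    · rw [yAdj, dif_pos hlt]
      exact h _ (mem_imageEdges.2 ⟨a, b, hab, rfl, rfl⟩)
    · exact absurd (hφ heq) hab.ne
    · rw [yAdj, dif_neg hgt.asymm, dif_pos hgt]
      exact h _ (mem_imageEdges.2 ⟨b, a, hab.symm, rfl, rfl⟩)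

lemma homCount_eq_sum (G : SimpleGraph V) (y : EdgeIdx n → Bool) :
    (homCount G y : ℝ) = ∑ φ ∈ injMaps V n, cubeMonomial (imageEdges G φ) y := by
  classical
  rw [homCount, Nat.card_eq_fintype_card, Fintype.card_subtype, ← filter_filter, card_filter,
    Nat.cast_sum, injMaps]
  refine sum_congr (by congr) fun φ hφ => ?_
  simp only [forall_yAdj_iff (mem_filter.1 hφ).2, cubeMonomial, Nat.cast_ite, Nat.cast_one,
    Nat.cast_zero]
  congr

open Classical in
lemma card_copiesThrough (G : SimpleGraph V) (s : EdgeIdx n) :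
    #(copiesThrough G s) =
      ∑ d ∈ adjPairs G, #{φ ∈ injMaps V n | φ d.1 = s.1.1 ∧ φ d.2 = s.1.2} := by
  rw [← card_biUnion]
  · congr 1
    ext φ
    simp only [mem_copiesThrough, mem_biUnion, mem_filter, mem_imageEdges, mem_adjPairs,
      mem_injMaps, Prod.exists]
    grind
  · intro d _ d' _ hne
    refine disjoint_left.2 fun φ hφ hφ' => hne ?_
    rw [mem_filter, mem_injMaps] at hφ hφ'
    exact Prod.ext (hφ.1 (hφ.2.1.trans hφ'.2.1.symm)) (hφ.1 (hφ.2.2.trans hφ'.2.2.symm))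

lemma card_injMaps_filter_le {a b : V} (hab : a ≠ b) (c d : Fin n) :
    (#{φ ∈ injMaps V n | φ a = c ∧ φ b = d} : ℝ) ≤ (n : ℝ) ^ ((Fintype.card V : ℤ) - 2) := by
  classical
  have hsub : {φ ∈ injMaps V n | φ a = c ∧ φ b = d} ⊆
      extensions {a, b} fun z => if z = a then c else d := fun φ hφ => by
    simpa [mem_extensions, hab.symm] using (mem_filter.1 hφ).2
  have hcard := card_extensions {a, b} fun z => if z = a then c else d
  rw [card_pair hab, Fintype.card_fin] at hcard
  exact_mod_cast (Nat.cast_le.2 (card_le_card hsub)).trans hcard.le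

lemma le_card_injMaps_filter {a b : V} (hab : a ≠ b) {c d : Fin n} (hcd : c ≠ d) :
    (n : ℝ) ^ ((Fintype.card V : ℤ) - 2) -
        (Fintype.card V : ℝ) ^ 2 * (n : ℝ) ^ ((Fintype.card V : ℤ) - 3) ≤
      #{φ ∈ injMaps V n | φ a = c ∧ φ b = d} := by
  classical
  have hinj : Set.InjOn (fun z => if z = a then c else d) ({a, b} : Finset V) := by
    simp [Set.InjOn, hab.symm, hcd, hcd.symm]
  have hcard := le_card_injective_extensions hinj
  rw [card_pair hab, Fintype.card_fin, sub_sub] at hcard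
  norm_num only at hcard
  refine hcard.trans (Nat.cast_le.2 (card_le_card fun φ hφ => ?_))
  simpa [mem_extensions, mem_injMaps, hab.symm, and_comm] using hφ

lemma exists_endpoint_ne {s u : EdgeIdx n} (hsu : s ≠ u) :
    ∃ x, (x = u.1.1 ∨ x = u.1.2) ∧ x ≠ s.1.1 ∧ x ≠ s.1.2 := by
  by_contra! hcon
  have hfst := hcon u.1.1 (.inl rfl)
  have hsnd := hcon u.1.2 (.inr rfl)
  have hs := s.2
  have hu := u.2
  have hne : ¬ (s.1.1 = u.1.1 ∧ s.1.2 = u.1.2) := fun h => hsu (Subtype.ext (Prod.ext h.1 h.2))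
  grind

open Classical in
lemma card_copiesThrough_filter_le (G : SimpleGraph V) {s u : EdgeIdx n} (hsu : s ≠ u) :
    (#{φ ∈ copiesThrough G s | u ∈ imageEdges G φ} : ℝ) ≤
      2 * eCount G * Fintype.card V * (n : ℝ) ^ ((Fintype.card V : ℤ) - 3) := by
  obtain ⟨x, hxu, hx₁, hx₂⟩ := exists_endpoint_ne hsu
  set choices := {z ∈ adjPairs G ×ˢ (univ : Finset V) | z.2 ≠ z.1.1 ∧ z.2 ≠ z.1.2} with hchoices
  set f : (V × V) × V → V → Fin n := fun z i =>
    if i = z.1.1 then s.1.1 else if i = z.1.2 then s.1.2 else x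
  have hcover : {φ ∈ copiesThrough G s | u ∈ imageEdges G φ} ⊆
      choices.biUnion fun z => extensions {z.1.1, z.1.2, z.2} (f z) := by
    intro φ hφ
    rw [mem_filter, mem_copiesThrough, mem_imageEdges, mem_imageEdges] at hφ
    obtain ⟨⟨-, a, b, hab, ha, hb⟩, c, d, -, hc, hd⟩ := hφ
    obtain ⟨i, hi⟩ : ∃ i, φ i = x := by
      rcases hxu with rfl | rfl
      exacts [⟨c, hc⟩, ⟨d, hd⟩]
    have hia : i ≠ a := fun h => hx₁ (hi.symm.trans ((congrArg φ h).trans ha))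
    have hib : i ≠ b := fun h => hx₂ (hi.symm.trans ((congrArg φ h).trans hb))
    refine mem_biUnion.2 ⟨((a, b), i), ?_, ?_⟩
    · simp [hchoices, mem_adjPairs, hab, hia, hib]
    · simp [f, mem_extensions, ha, hb, hi, hab.ne', hia, hib]
  have hcard : #choices ≤ 2 * eCount G * Fintype.card V := by
    rw [← card_adjPairs, ← Finset.card_univ, ← card_product]
    exact card_filter_le _ _
  calc _ ≤ ∑ z ∈ choices, (#(extensions {z.1.1, z.1.2, z.2} (f z)) : ℝ) :=
        mod_cast (card_le_card hcover).trans card_biUnion_le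
    _ = ∑ _z ∈ choices, (n : ℝ) ^ ((Fintype.card V : ℤ) - 3) := by
      refine sum_congr rfl fun z hz => ?_
      simp only [hchoices, mem_filter, mem_product, mem_adjPairs] at hz
      rw [card_extensions, Fintype.card_fin,
        card_eq_three.2 ⟨_, _, _, hz.1.1.ne, hz.2.1.symm, hz.2.2.symm, rfl⟩, Nat.cast_ofNat]
    _ = #choices * (n : ℝ) ^ ((Fintype.card V : ℤ) - 3) := by rw [sum_const, nsmul_eq_mul]
    _ ≤ _ := by gcongr; exact_mod_cast hcard

end Copies

/-! ### Subgraph counts -/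

section SpreadFamily

variable {I ι : Type*} {ν a b w : ℝ} {m : ℕ} {S : Finset ι} {T : ι → Finset I}

lemma sum_smul_cubeMonomial_mem_Icc (hw : 0 ≤ w) (S : Finset ι) (T : ι → Finset I)
    (y : I → Bool) : (∑ i ∈ S, w • cubeMonomial (T i)) y ∈ Set.Icc 0 (w * #S) := by
  rw [Finset.sum_apply, mul_comm, ← nsmul_eq_mul]
  exact ⟨Finset.sum_nonneg fun i _ => mul_nonneg hw (cubeMonomial_mem_Icc _ y).1,
    sum_le_card_nsmul _ _ _ fun i _ => mul_le_of_le_one_right hw (cubeMonomial_mem_Icc _ y).2⟩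

variable [DecidableEq I]

/-- An `m`-uniform family of subsets `T i`, `i ∈ S`, of `I`, each of weight `w`, whose total weight
is `a` up to an error `O(1 / ν)` and in which the sets through a given point have total weight
`O(1 / ν)`; both error terms are controlled by the constant `b`. The weighted sum of the monomials
`cubeMonomial (T i)` then behaves like `q ↦ a * q ^ m`. -/
structure SpreadFamily (ν a b w : ℝ) (m : ℕ) (S : Finset ι) (T : ι → Finset I) : Prop where
  nonneg : 0 ≤ w
  card_eq : ∀ i ∈ S, #(T i) = m
  mass_le : w * #S ≤ a
  abs_mass_sub_le : |w * #S - a| ≤ b / ν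
  degree_le : ∀ u, w * #{i ∈ S | u ∈ T i} ≤ b / ν

lemma discDeriv_sum_smul_cubeMonomial (S : Finset ι) (T : ι → Finset I) (w : ℝ) (u : I) :
    discDeriv u (∑ i ∈ S, w • cubeMonomial (T i)) =
      ∑ i ∈ S with u ∈ T i, w • cubeMonomial ((T i).erase u) := by
  simp only [map_sum, map_smul, discDeriv_cubeMonomial, smul_ite, smul_zero, Finset.sum_filter]

lemma SpreadFamily.sigma_erase (h : SpreadFamily ν a b w m S T) :
    SpreadFamily ν (m * a) (m * b) w (m - 1) (S.sigma T) fun x => (T x.1).erase x.2 := by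
  have hcard : (#(S.sigma T) : ℝ) = m * #S := by
    rw [card_sigma, sum_congr rfl h.card_eq, sum_const, smul_eq_mul, Nat.cast_mul, mul_comm]
  have hm : (0 : ℝ) ≤ m := m.cast_nonneg
  refine ⟨h.nonneg, fun x hx => ?_, ?_, ?_, fun u => ?_⟩
  · rw [mem_sigma] at hx
    rw [card_erase_of_mem hx.2, h.card_eq _ hx.1]
  · rw [hcard, mul_left_comm]
    exact mul_le_mul_of_nonneg_left h.mass_le hm
  · rw [hcard, mul_left_comm, ← mul_sub, abs_mul, abs_of_nonneg hm, mul_div_assoc]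
    exact mul_le_mul_of_nonneg_left h.abs_mass_sub_le hm
  · have hsub : {x ∈ S.sigma T | u ∈ (T x.1).erase x.2} ⊆ {i ∈ S | u ∈ T i}.sigma T := by
      intro x hx
      simp only [mem_filter, mem_sigma, mem_erase] at hx ⊢
      exact ⟨⟨hx.1.1, hx.2.2⟩, hx.1.2⟩
    have hdeg : (#{x ∈ S.sigma T | u ∈ (T x.1).erase x.2} : ℝ) ≤ m * #{i ∈ S | u ∈ T i} := by
      refine (Nat.cast_le.2 (card_le_card hsub)).trans_eq ?_
      rw [card_sigma, sum_congr rfl fun i hi => h.card_eq i (mem_filter.1 hi).1, sum_const,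
        smul_eq_mul, Nat.cast_mul, mul_comm]
    calc _ ≤ w * (m * #{i ∈ S | u ∈ T i}) := mul_le_mul_of_nonneg_left hdeg h.nonneg
      _ = m * (w * #{i ∈ S | u ∈ T i}) := mul_left_comm _ _ _
      _ ≤ m * (b / ν) := mul_le_mul_of_nonneg_left (h.degree_le u) hm
      _ = m * b / ν := (mul_div_assoc _ _ _).symm

variable [Fintype I]

lemma sum_card_filter_mem_eq_sum_card (S : Finset ι) (T : ι → Finset I) :
    ∑ u, #{i ∈ S | u ∈ T i} = ∑ i ∈ S, #(T i) := by
  simp only [card_filter]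
  rw [Finset.sum_comm]
  simp only [← card_filter, filter_mem_eq_inter, univ_inter]

lemma SpreadFamily.regular (h : SpreadFamily ν a b w m S T) (hν : 0 < ν) :
    Regular ν (m * a + b) (fun q => a * q ^ m) (∑ i ∈ S, w • cubeMonomial (T i)) := by
  have ha : 0 ≤ a := (mul_nonneg h.nonneg (Nat.cast_nonneg _)).trans h.mass_le
  have hb : 0 ≤ b := by
    simpa using (le_div_iff₀ hν).1 ((abs_nonneg _).trans h.abs_mass_sub_le)
  have hbD : b / ν ≤ (m * a + b) / ν := by gcongr; linarith [mul_nonneg m.cast_nonneg ha]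
  have hmem := fun u => sum_smul_cubeMonomial_mem_Icc h.nonneg {i ∈ S | u ∈ T i}
    fun i => (T i).erase u
  simp only [← discDeriv_sum_smul_cubeMonomial] at hmem
  refine ⟨fun u y => by simpa only [one_mul] using (hmem u y).1,
    ⟨fun u => w * #{i ∈ S | u ∈ T i}, fun u y => ?_, fun u => (h.degree_le u).trans hbD, ?_⟩,
    fun q hq y => ?_⟩
  · exact (abs_of_nonneg (hmem u y).1).le.trans (hmem u y).2
  · rw [← Finset.mul_sum, ← Nat.cast_sum, sum_card_filter_mem_eq_sum_card,
      sum_congr rfl h.card_eq, sum_const, smul_eq_mul, Nat.cast_mul]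
    linarith [mul_le_mul_of_nonneg_left h.mass_le m.cast_nonneg]
  · have hsweep : sweep q univ.toList (∑ i ∈ S, w • cubeMonomial (T i)) y = w * #S * q ^ m := by
      simp only [map_sum, map_smul, Finset.sum_apply, Pi.smul_apply, sweep_univ_cubeMonomial,
        smul_eq_mul]
      rw [sum_congr rfl fun i hi => by rw [h.card_eq i hi], sum_const, nsmul_eq_mul]
      ring
    rw [hsweep, ← sub_mul, abs_mul, abs_of_nonneg (pow_nonneg hq.1 m)]
    exact (mul_le_of_le_one_right (abs_nonneg _) (pow_le_one₀ hq.1 hq.2)).trans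
      (h.abs_mass_sub_le.trans hbD)

lemma totalDeriv_sum_smul_cubeMonomial (S : Finset ι) (T : ι → Finset I) (w : ℝ) :
    totalDeriv (∑ i ∈ S, w • cubeMonomial (T i)) =
      ∑ x ∈ S.sigma T, w • cubeMonomial ((T x.1).erase x.2) := by
  simp only [map_sum, map_smul, totalDeriv_cubeMonomial, smul_sum, sum_sigma]

end SpreadFamily

section ScaledHom

variable {V : Type} [Fintype V] {n : ℕ} (G : SimpleGraph V)

lemma zpow_mul_card_copiesThrough_mem_Icc (hn : 0 < n) (s : EdgeIdx n) :
    (n : ℝ) ^ (2 - (Fintype.card V : ℤ)) * #(copiesThrough G s) ∈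
      Set.Icc (2 * eCount G - 2 * eCount G * (Fintype.card V : ℝ) ^ 2 / n : ℝ)
        (2 * eCount G) := by
  classical
  have hn₀ : (0 : ℝ) < n := by exact_mod_cast hn
  set w := (n : ℝ) ^ (2 - (Fintype.card V : ℤ)) with hw
  have : 0 < w := zpow_pos hn₀ _
  have hw₂ : w * (n : ℝ) ^ ((Fintype.card V : ℤ) - 2) = 1 := by
    rw [hw, ← zpow_add₀ hn₀.ne', sub_add_sub_cancel, sub_self, zpow_zero]
  have hw₃ : w * (n : ℝ) ^ ((Fintype.card V : ℤ) - 3) = (n : ℝ)⁻¹ := by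
    rw [hw, ← zpow_add₀ hn₀.ne', ← zpow_neg_one]; congr 1; ring
  have hpairs : ∀ c : ℝ, ∑ _d ∈ adjPairs G, c = 2 * eCount G * c := fun c => by
    rw [sum_const, card_adjPairs, nsmul_eq_mul, Nat.cast_mul, Nat.cast_ofNat]
  rw [card_copiesThrough, Nat.cast_sum, Finset.mul_sum]
  constructor
  · calc 2 * eCount G - 2 * eCount G * (Fintype.card V : ℝ) ^ 2 / n
        = ∑ _d ∈ adjPairs G, w * ((n : ℝ) ^ ((Fintype.card V : ℤ) - 2) -
            (Fintype.card V : ℝ) ^ 2 * (n : ℝ) ^ ((Fintype.card V : ℤ) - 3)) := by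
          rw [hpairs, mul_sub, hw₂, mul_left_comm, hw₃]; ring
      _ ≤ _ := by
          gcongr with d hd
          exact le_card_injMaps_filter (mem_adjPairs.1 hd).ne s.2.ne
  · calc _ ≤ ∑ _d ∈ adjPairs G, w * (n : ℝ) ^ ((Fintype.card V : ℤ) - 2) := by
          gcongr with d hd
          exact card_injMaps_filter_le (mem_adjPairs.1 hd).ne _ _
      _ = 2 * eCount G := by rw [hpairs, hw₂, mul_one]

lemma spreadFamily_copiesThrough (hn : 0 < n) (s : EdgeIdx n) :
    SpreadFamily n (2 * eCount G) (2 * eCount G * (Fintype.card V : ℝ) ^ 2)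
      ((n : ℝ) ^ (2 - (Fintype.card V : ℤ))) (eCount G - 1) (copiesThrough G s)
      fun φ => (imageEdges G φ).erase s := by
  have hn₀ : (0 : ℝ) < n := by exact_mod_cast hn
  obtain ⟨hlower, hupper⟩ := zpow_mul_card_copiesThrough_mem_Icc G hn s
  have herr : 0 ≤ 2 * eCount G * (Fintype.card V : ℝ) ^ 2 / n := by positivity
  refine ⟨(zpow_pos hn₀ _).le, fun φ hφ => ?_, hupper, abs_le.2 ⟨by linarith, by linarith⟩,
    fun u => ?_⟩
  · rw [mem_copiesThrough] at hφ
    rw [card_erase_of_mem hφ.2, card_imageEdges G hφ.1]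
  obtain rfl | hsu := eq_or_ne s u
  · simpa using herr
  calc _ ≤ (n : ℝ) ^ (2 - (Fintype.card V : ℤ)) *
        (2 * eCount G * Fintype.card V * (n : ℝ) ^ ((Fintype.card V : ℤ) - 3)) := by
        gcongr
        simp only [mem_erase, hsu.symm, ne_eq, not_false_eq_true, true_and]
        convert card_copiesThrough_filter_le G hsu
    _ = 2 * eCount G * Fintype.card V / n := by
        rw [mul_left_comm, ← zpow_add₀ hn₀.ne', div_eq_mul_inv, ← zpow_neg_one]
        congr 2
        ring
    _ ≤ _ := by
        gcongr
        exact_mod_cast Nat.le_self_pow two_ne_zero _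

/-- The normalized count `n ^ (2 - v) * |Hom(G, G_y)|`, `v` being the number of vertices of `G`;
its discrete derivatives are of order one. -/
def scaledHom (y : EdgeIdx n → Bool) : ℝ := (n : ℝ) ^ (2 - (Fintype.card V : ℤ)) * homCount G y

/-- A constant for which the first and second derivatives of `scaledHom G` are `Regular`. -/
def regularityConst : ℝ :=
  (eCount G : ℝ) ^ 2 * (2 * eCount G + 2 * eCount G * (Fintype.card V : ℝ) ^ 2)

lemma scaledHom_eq_sum : scaledHom G (n := n) =
    ∑ φ ∈ injMaps V n, (n : ℝ) ^ (2 - (Fintype.card V : ℤ)) • cubeMonomial (imageEdges G φ) := by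
  funext y
  simp only [scaledHom, homCount_eq_sum, Finset.mul_sum, Finset.sum_apply, Pi.smul_apply,
    smul_eq_mul]

lemma discDeriv_scaledHom (s : EdgeIdx n) : discDeriv s (scaledHom G) = ∑ φ ∈ copiesThrough G s,
    (n : ℝ) ^ (2 - (Fintype.card V : ℤ)) • cubeMonomial ((imageEdges G φ).erase s) := by
  rw [scaledHom_eq_sum, discDeriv_sum_smul_cubeMonomial]
  exact sum_congr (by ext; simp [mem_copiesThrough, mem_injMaps]) fun _ _ => rfl

lemma regular_discDeriv_scaledHom (hn : 0 < n) (s : EdgeIdx n) :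
    Regular n (regularityConst G) (fun q => 2 * eCount G * q ^ (eCount G - 1))
      (discDeriv s (scaledHom G)) := by
  rw [discDeriv_scaledHom]
  refine ((spreadFamily_copiesThrough G hn s).regular (by exact_mod_cast hn)).mono
    (by exact_mod_cast hn) ?_
  have hpred : ((eCount G - 1 : ℕ) : ℝ) ≤ (eCount G : ℝ) ^ 2 := by
    exact_mod_cast (Nat.sub_le _ _).trans (Nat.le_self_pow two_ne_zero _)
  have hsq : (eCount G : ℝ) ≤ (eCount G : ℝ) ^ 3 := by
    exact_mod_cast Nat.le_self_pow three_ne_zero _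
  calc _ ≤ (eCount G : ℝ) ^ 2 * (2 * eCount G) +
        2 * (eCount G : ℝ) ^ 3 * (Fintype.card V : ℝ) ^ 2 := by gcongr
    _ = regularityConst G := by rw [regularityConst]; ring

lemma regular_totalDeriv_discDeriv_scaledHom (hn : 0 < n) (s : EdgeIdx n) :
    Regular n (regularityConst G)
      (fun q => ((eCount G - 1 : ℕ) : ℝ) * (2 * eCount G) * q ^ (eCount G - 2))
      (totalDeriv (discDeriv s (scaledHom G))) := by
  rw [discDeriv_scaledHom, totalDeriv_sum_smul_cubeMonomial]
  refine ((spreadFamily_copiesThrough G hn s).sigma_erase.regular (by exact_mod_cast hn)).mono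
    (by exact_mod_cast hn) ?_
  have hpred : ((eCount G - 1 : ℕ) : ℝ) ≤ eCount G := Nat.cast_le.2 (Nat.sub_le _ _)
  have hpred₂ : ((eCount G - 1 - 1 : ℕ) : ℝ) ≤ eCount G := Nat.cast_le.2 (by lia)
  have hsq : (eCount G : ℝ) ≤ (eCount G : ℝ) ^ 2 := by
    exact_mod_cast Nat.le_self_pow two_ne_zero _
  calc _ ≤ eCount G * (eCount G * (2 * eCount G)) +
        (eCount G : ℝ) ^ 2 * (2 * eCount G * (Fintype.card V : ℝ) ^ 2) := by
        gcongr
        exact hpred.trans hsq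
    _ = regularityConst G := by rw [regularityConst]; ring

variable {G}

lemma discDeriv_discDeriv_scaledHom_of_eCount_le_one (hG : eCount G ≤ 1) (s u : EdgeIdx n) :
    discDeriv u (discDeriv s (scaledHom G)) = 0 := by
  rw [discDeriv_scaledHom, discDeriv_sum_smul_cubeMonomial, filter_eq_empty_iff.2, sum_empty]
  intro φ hφ hu
  rw [mem_copiesThrough] at hφ
  have hcard := card_pos.2 ⟨u, hu⟩
  rw [card_erase_of_mem hφ.2, card_imageEdges G hφ.1] at hcard
  lia

end ScaledHom

/-! ### The Hamiltonian -/

section Supermodular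

variable {I : Type*} {T : Finset I}

lemma cubeMonomial_add_le (T : Finset I) (x y : I → Bool) :
    cubeMonomial T x + cubeMonomial T y ≤ cubeMonomial T (x ⊓ y) + cubeMonomial T (x ⊔ y) := by
  have hleft : (∀ u ∈ T, x u = true) → ∀ u ∈ T, (x ⊔ y) u = true := fun h u hu => by simp [h u hu]
  have hright : (∀ u ∈ T, y u = true) → ∀ u ∈ T, (x ⊔ y) u = true :=
    fun h u hu => by simp [h u hu]
  have hinf : (∀ u ∈ T, (x ⊓ y) u = true) ↔ (∀ u ∈ T, x u = true) ∧ ∀ u ∈ T, y u = true := by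
    simp [forall₂_and]
  unfold cubeMonomial
  grind

lemma cubeMonomial_inf_add_sup (hT : #T ≤ 1) (x y : I → Bool) :
    cubeMonomial T (x ⊓ y) + cubeMonomial T (x ⊔ y) = cubeMonomial T x + cubeMonomial T y := by
  rcases Nat.le_one_iff_eq_zero_or_eq_one.1 hT with hT | hT
  · simp [card_eq_zero.1 hT, cubeMonomial]
  · obtain ⟨u, rfl⟩ := card_eq_one.1 hT
    simp only [cubeMonomial, mem_singleton, forall_eq, Pi.inf_apply, Pi.sup_apply]
    cases x u <;> cases y u <;> simp

end Supermodular

section Hamiltonian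

variable {k : ℕ} (β : Fin (k + 1) → ℝ) (v : Fin (k + 1) → ℕ)
  (H : ∀ j : Fin (k + 1), SimpleGraph (Fin (v j)))

/-- The Hamiltonian of the exponential random graph model, whose Gibbs measure is the law
of the model. -/
def hamiltonian (n : ℕ) : (EdgeIdx n → Bool) → ℝ := ∑ j, β j • scaledHom (H j)

lemma exp_hamiltonian (n : ℕ) (y : EdgeIdx n → Bool) :
    exp (hamiltonian β v H n y) = ergmWeight β v H n y := by
  simp [hamiltonian, ergmWeight, scaledHom, mul_assoc]

lemma ergmExp_eq_integral (n : ℕ) (f : (EdgeIdx n → Bool) → ℝ) :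
    ergmExp β v H n f = ∫ y, f y ∂gibbs (hamiltonian β v H n) := by
  simp only [integral_gibbs, exp_hamiltonian]
  rfl

lemma ergmVar_eq_variance (n : ℕ) (f : (EdgeIdx n → Bool) → ℝ) :
    ergmVar β v H n f = Var[f; gibbs (hamiltonian β v H n)] := by
  rw [variance_eq_integral (.of_discrete), ergmVar, ergmExp_eq_integral, ergmExp_eq_integral]

/-- A constant for which the first and second derivatives of the Hamiltonian are `Regular`. -/
def hamiltonianConst : ℝ := ∑ j, |β j| * regularityConst (H j)

variable {β v H} {n : ℕ}

lemma Ferromagnetic.signedMono_discDeriv_scaledHom (hβ : Ferromagnetic β v H) (hn : 0 < n)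
    (s : EdgeIdx n) (j : Fin (k + 1)) : SignedMono (β j) (discDeriv s (scaledHom (H j))) := by
  intro u y
  rcases lt_or_ge (eCount (H j)) 2 with he | he
  · simp [discDeriv_discDeriv_scaledHom_of_eCount_le_one (Nat.le_of_lt_succ he)]
  · simpa using mul_nonneg (hβ j he) ((regular_discDeriv_scaledHom (H j) hn s).signedMono u y)

lemma Ferromagnetic.signedMono_totalDeriv_discDeriv_scaledHom (hβ : Ferromagnetic β v H)
    (hn : 0 < n) (s : EdgeIdx n) (j : Fin (k + 1)) :
    SignedMono (β j) (totalDeriv (discDeriv s (scaledHom (H j)))) := by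
  intro u y
  rcases lt_or_ge (eCount (H j)) 2 with he | he
  · simp [← totalDeriv_discDeriv,
      discDeriv_discDeriv_scaledHom_of_eCount_le_one (Nat.le_of_lt_succ he)]
  · simpa using mul_nonneg (hβ j he)
      ((regular_totalDeriv_discDeriv_scaledHom (H j) hn s).signedMono u y)

lemma Ferromagnetic.regular_discDeriv_hamiltonian (hβ : Ferromagnetic β v H) (hn : 0 < n)
    (s : EdgeIdx n) : Regular n (hamiltonianConst β v H) (fun q => 2 * PhiFn β v H q)
      (discDeriv s (hamiltonian β v H n)) := by
  have hmean : (fun q => 2 * PhiFn β v H q) =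
      fun q => ∑ j, β j * (2 * eCount (H j) * q ^ (eCount (H j) - 1)) := by
    funext q
    rw [PhiFn, Finset.mul_sum]
    exact sum_congr rfl fun j _ => by ring
  simp only [hmean, hamiltonian, map_sum, map_smul]
  exact .sum (fun j _ => hβ.signedMono_discDeriv_scaledHom hn s j)
    fun j _ => regular_discDeriv_scaledHom (H j) hn s

lemma Ferromagnetic.regular_totalDeriv_discDeriv_hamiltonian (hβ : Ferromagnetic β v H)
    (hn : 0 < n) (s : EdgeIdx n) :
    Regular n (hamiltonianConst β v H) (fun q => 2 * deriv (PhiFn β v H) q)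
      (totalDeriv (discDeriv s (hamiltonian β v H n))) := by
  have hmean : (fun q => 2 * deriv (PhiFn β v H) q) = fun q => ∑ j, β j *
      (((eCount (H j) - 1 : ℕ) : ℝ) * (2 * eCount (H j)) * q ^ (eCount (H j) - 2)) := by
    funext q
    rw [(hasDerivAt_PhiFn β v H q).deriv, Finset.mul_sum]
    exact sum_congr rfl fun j _ => by rw [Nat.sub_sub]; ring
  simp only [hmean, hamiltonian, map_sum, map_smul]
  exact .sum (fun j _ => hβ.signedMono_totalDeriv_discDeriv_scaledHom hn s j)
    fun j _ => regular_totalDeriv_discDeriv_scaledHom (H j) hn s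

lemma Ferromagnetic.supermodular_hamiltonian (hβ : Ferromagnetic β v H) (n : ℕ) :
    Supermodular (hamiltonian β v H n) := by
  intro x y
  simp only [hamiltonian, scaledHom, homCount_eq_sum, Finset.sum_apply, Pi.smul_apply, smul_eq_mul,
    ← Finset.sum_add_distrib, ← mul_add]
  refine Finset.sum_le_sum fun j _ => ?_
  rcases lt_or_ge (eCount (H j)) 2 with he | he
  · refine (congrArg _ (congrArg _ (sum_congr rfl fun φ hφ => ?_))).le
    rw [cubeMonomial_inf_add_sup]
    rw [card_imageEdges _ (mem_injMaps.1 hφ)]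
    exact Nat.le_of_lt_succ he
  · exact mul_le_mul_of_nonneg_left (mul_le_mul_of_nonneg_left
      (Finset.sum_le_sum fun φ _ => cubeMonomial_add_le _ x y) (by positivity)) (hβ j he)

end Hamiltonian

/-! ### Variance bounds -/

section CloseSet

variable {I : Type*} {ι : Sort*} {X : ι → (I → Bool) → ℝ} {c r : ℝ}

/-- The good set of configurations at which all statistics `X s` are within `r` of `c`. -/
def closeSet (X : ι → (I → Bool) → ℝ) (c r : ℝ) : Set (I → Bool) := {y | ∀ s, |X s y - c| < r}

lemma compl_closeSet : (closeSet X c r)ᶜ = ⋃ s, {y | r ≤ |X s y - c|} := by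
  ext y
  simp [closeSet]

variable [DecidableEq I]

lemma ordConnected_closeSet [Finite I] (hX : ∀ s, SignedMono 1 (X s)) :
    (closeSet X c r).OrdConnected := by
  refine ⟨fun x hx y hy z hz s => ?_⟩
  have hxz := monotone_of_signedMono (hX s) hz.1
  have hzy := monotone_of_signedMono (hX s) hz.2
  exact abs_lt.2 ⟨by linarith [(abs_lt.1 (hx s)).1], by linarith [(abs_lt.1 (hy s)).2]⟩

lemma discDeriv_sumCondProb_le [Fintype I] {H : (I → Bool) → ℝ} {L : ℝ}
    (hH : ∀ s, SignedMono 1 (discDeriv s H))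
    (hL : ∀ x, |x - c| ≤ r → sigmoid x * (1 - sigmoid x) ≤ L) {y : I → Bool} {t : I}
    (h0 : Function.update y t false ∈ closeSet (discDeriv · H) c r)
    (h1 : Function.update y t true ∈ closeSet (discDeriv · H) c r) :
    discDeriv t (sumCondProb H) y ≤ L * totalDeriv (discDeriv t H) y := by
  have hslope : ∀ u, sigmoid (discDeriv u H (Function.update y t true)) -
      sigmoid (discDeriv u H (Function.update y t false)) ≤
        L * (discDeriv u H (Function.update y t true) -
          discDeriv u H (Function.update y t false)) := fun u =>
    sigmoid_sub_sigmoid_le (convex_closedBall c r) (fun x hx => hL x (by simpa [dist_eq] using hx))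
      (by simpa [dist_eq] using (h0 u).le) (by simpa [dist_eq] using (h1 u).le)
      (by simpa [discDeriv_apply] using hH u t y)
  calc discDeriv t (sumCondProb H) y
      = ∑ u, (sigmoid (discDeriv u H (Function.update y t true)) -
          sigmoid (discDeriv u H (Function.update y t false))) := by
        rw [discDeriv_apply, sumCondProb, sumCondProb, Finset.sum_sub_distrib]
    _ ≤ ∑ u, L * discDeriv t (discDeriv u H) y := Finset.sum_le_sum fun u _ => hslope u
    _ = L * totalDeriv (discDeriv t H) y := by
        simp only [totalDeriv_eq_sum, Finset.sum_apply, Finset.mul_sum, discDeriv_comm t]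

end CloseSet

section Variance

variable {k : ℕ} {β : Fin (k + 1) → ℝ} {v : Fin (k + 1) → ℕ}
  {H : ∀ j : Fin (k + 1), SimpleGraph (Fin (v j))} {p : ℝ}

lemma card_edgeIdx_le (n : ℕ) : (Fintype.card (EdgeIdx n) : ℝ) ≤ (n : ℝ) ^ 2 := by
  have h : Fintype.card (EdgeIdx n) ≤ n ^ 2 :=
    (Fintype.card_subtype_le fun e : Fin n × Fin n => e.1 < e.2).trans (by simp [sq])
  exact_mod_cast h

lemma Subcritical.exists_gibbs_real_compl_closeSet_le (hp : Subcritical β v H p)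
    (hβ : Ferromagnetic β v H) {g : ℝ → ℝ} (hg : Differentiable ℝ g) (D : ℝ) :
    ∃ C : ℝ, 0 ≤ C ∧ ∀ M : ℕ, ∀ᶠ n : ℕ in Filter.atTop,
      ∀ X : EdgeIdx n → (EdgeIdx n → Bool) → ℝ, (∀ s, Regular n D g (X s)) →
        (gibbs (hamiltonian β v H n)).real (closeSet X (g p) (C * (n : ℝ) ^ (-(1 / 4) : ℝ)))ᶜ ≤
          ((n : ℝ) ^ M)⁻¹ := by
  obtain ⟨θ, hθ, hcontr⟩ := hp.exists_contraction hβ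
  obtain ⟨L, hL, hgL⟩ := exists_abs_sub_le hg isCompact_Icc p
  obtain ⟨C, hC, h⟩ := exists_concentration (D := max 1 (max D (hamiltonianConst β v H)))
    (by positivity) (Set.Ioo_subset_Icc_self hp.mem_Ioo) hθ hcontr hL hgL
  refine ⟨C, hC, fun M => ?_⟩
  filter_upwards [h (M + 2), Filter.eventually_gt_atTop 0] with n hn hn0 X hX
  have hn0' : (0 : ℝ) < n := Nat.cast_pos.2 hn0
  have hcoord : ∀ s, (gibbs (hamiltonian β v H n)).real
      {y | C * (n : ℝ) ^ (-(1 / 4) : ℝ) ≤ |X s y - g p|} ≤ ((n : ℝ) ^ (M + 2))⁻¹ := fun s =>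
    hn _ _ _ (card_edgeIdx_le n)
      (fun u => (hβ.regular_discDeriv_hamiltonian hn0 u).mono hn0' (by simp))
      ((hX s).mono hn0' (by simp))
  calc _ ≤ ∑ _s : EdgeIdx n, ((n : ℝ) ^ (M + 2))⁻¹ := by
        rw [compl_closeSet]
        exact (measureReal_iUnion_fintype_le _).trans (Finset.sum_le_sum fun s _ => hcoord s)
    _ = Fintype.card (EdgeIdx n) * ((n : ℝ) ^ (M + 2))⁻¹ := by simp
    _ ≤ (n : ℝ) ^ 2 * ((n : ℝ) ^ (M + 2))⁻¹ := by gcongr; exact card_edgeIdx_le n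
    _ = _ := by rw [pow_add]; field_simp

lemma eventually_const_mul_rpow_neg_lt (C : ℝ) {s η : ℝ} (hs : 0 < s) (hη : 0 < η) :
    ∀ᶠ n : ℕ in Filter.atTop, C * (n : ℝ) ^ (-s) < η := by
  have h := ((tendsto_rpow_neg_atTop hs).comp tendsto_natCast_atTop_atTop).const_mul C
  rw [mul_zero] at h
  exact h.eventually_lt_const hη

lemma differentiable_deriv_PhiFn (β : Fin (k + 1) → ℝ) (v : Fin (k + 1) → ℕ)
    (H : ∀ j : Fin (k + 1), SimpleGraph (Fin (v j))) :
    Differentiable ℝ (deriv (PhiFn β v H)) := by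
  rw [funext fun a => (hasDerivAt_PhiFn β v H a).deriv]
  fun_prop

-- On the good set the derivatives of `sumCondProb` are close to `p (1 - p) * 2 Φ'(p) < 1`, because
-- `p (1 - p)` is the slope of `sigmoid` at `2 Φ(p)`.
lemma Subcritical.exists_ordConnected_contracting (hp : Subcritical β v H p)
    (hβ : Ferromagnetic β v H) :
    ∃ θ ∈ Set.Ico (0 : ℝ) 1, ∀ M : ℕ, ∀ᶠ n : ℕ in Filter.atTop,
      ∃ G : Set (EdgeIdx n → Bool), G.OrdConnected ∧
        (gibbs (hamiltonian β v H n)).real Gᶜ ≤ 2 * ((n : ℝ) ^ M)⁻¹ ∧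
        ∀ y s, Function.update y s false ∈ G → Function.update y s true ∈ G →
          discDeriv s (sumCondProb (hamiltonian β v H n)) y ≤ θ := by
  obtain ⟨η, L, hη, hL, hLη, hslope⟩ := exists_sigmoid_slope_bound
    (c := 2 * PhiFn β v H p) (d := 2 * deriv (PhiFn β v H) p)
    (by rw [← phiFn_eq_sigmoid, hp.fixedPoint]; exact hp.mul_deriv_PhiFn_lt_one)
  have hd := hβ.deriv_PhiFn_nonneg hp.mem_Ioo.1.le
  obtain ⟨C₁, -, h₁⟩ := hp.exists_gibbs_real_compl_closeSet_le hβ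
    ((differentiable_PhiFn β v H).const_mul 2) (hamiltonianConst β v H)
  obtain ⟨C₂, -, h₂⟩ := hp.exists_gibbs_real_compl_closeSet_le hβ
    ((differentiable_deriv_PhiFn β v H).const_mul 2) (hamiltonianConst β v H)
  refine ⟨L * (2 * deriv (PhiFn β v H) p + η), ⟨by positivity, hLη⟩, fun M => ?_⟩
  filter_upwards [h₁ M, h₂ M, Filter.eventually_gt_atTop 0,
    eventually_const_mul_rpow_neg_lt C₁ (by norm_num : (0 : ℝ) < 1 / 4) hη,
    eventually_const_mul_rpow_neg_lt C₂ (by norm_num : (0 : ℝ) < 1 / 4) hη]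
    with n hn₁ hn₂ hn0 hr₁ hr₂
  set Ham := hamiltonian β v H n
  have hreg₁ := hβ.regular_discDeriv_hamiltonian hn0
  have hreg₂ := hβ.regular_totalDeriv_discDeriv_hamiltonian hn0
  refine ⟨closeSet (discDeriv · Ham) (2 * PhiFn β v H p) (C₁ * (n : ℝ) ^ (-(1 / 4) : ℝ)) ∩
      closeSet (fun s => totalDeriv (discDeriv s Ham)) (2 * deriv (PhiFn β v H) p)
        (C₂ * (n : ℝ) ^ (-(1 / 4) : ℝ)),
    (ordConnected_closeSet fun s => (hreg₁ s).signedMono).inter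
    (ordConnected_closeSet fun s => (hreg₂ s).signedMono), ?_, fun y t h0 h1 => ?_⟩
  · rw [Set.compl_inter]
    refine (measureReal_union_le _ _).trans ?_
    linarith [hn₁ _ hreg₁, hn₂ _ hreg₂]
  · refine (discDeriv_sumCondProb_le (fun s => (hreg₁ s).signedMono)
      (fun x hx => hslope x (hx.trans hr₁.le)) h0.1 h1.1).trans ?_
    have hclose := abs_lt.1 (h1.2 t)
    simp only [totalDeriv_discDeriv, discDeriv_update] at hclose
    rw [totalDeriv_discDeriv]
    gcongr
    linarith

lemma Subcritical.variance_hammingWeight_isBigO (hp : Subcritical β v H p)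
    (hβ : Ferromagnetic β v H) :
    (fun n : ℕ => Var[hammingWeight; gibbs (hamiltonian β v H n)])
      =O[Filter.atTop] fun n => (n : ℝ) ^ 2 := by
  obtain ⟨θ, hθ, h⟩ := hp.exists_ordConnected_contracting hβ
  have hθ1 : 0 < 1 - θ := sub_pos.2 hθ.2
  refine .of_bound (17 / (1 - θ)) ?_
  filter_upwards [h 4, Filter.eventually_gt_atTop 0] with n ⟨G, hG, hGprob, hcontr⟩ hn0
  have hcard := card_edgeIdx_le n
  have hn1 : (1 : ℝ) ≤ (n : ℝ) ^ 2 := one_le_pow₀ (by exact_mod_cast hn0)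
  rw [norm_of_nonneg (variance_nonneg _ _), norm_of_nonneg (by positivity), div_mul_eq_mul_div,
    le_div_iff₀' hθ1]
  calc _ ≤ Fintype.card (EdgeIdx n) + 8 * (Fintype.card (EdgeIdx n) : ℝ) ^ 2 *
        (gibbs (hamiltonian β v H n)).real Gᶜ :=
        variance_hammingWeight_le (hβ.supermodular_hamiltonian n) hG
          (Set.Ico_subset_Icc_self hθ) hcontr
    _ ≤ (n : ℝ) ^ 2 + 8 * ((n : ℝ) ^ 2) ^ 2 * (2 * ((n : ℝ) ^ 4)⁻¹) := by gcongr
    _ = (n : ℝ) ^ 2 + 16 := by field_simp; norm_num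
    _ ≤ 17 * (n : ℝ) ^ 2 := by linarith

variable {V : Type} [Fintype V]

lemma scaledHom_mem_Icc (G : SimpleGraph V) {n : ℕ} (hn : 0 < n) (y : EdgeIdx n → Bool) :
    scaledHom G y ∈ Set.Icc (0 : ℝ) ((n : ℝ) ^ 2) := by
  classical
  have hn0 : (n : ℝ) ≠ 0 := by positivity
  rw [scaledHom_eq_sum]
  refine Set.Icc_subset_Icc_right ?_ (sum_smul_cubeMonomial_mem_Icc (by positivity) _ _ y)
  calc (n : ℝ) ^ (2 - (Fintype.card V : ℤ)) * #(injMaps V n)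
      ≤ (n : ℝ) ^ (2 - (Fintype.card V : ℤ)) * (n : ℝ) ^ Fintype.card V := by
        gcongr
        exact_mod_cast (card_le_univ _).trans (by simp)
    _ = (n : ℝ) ^ 2 := by
        rw [← zpow_natCast, ← zpow_add₀ hn0, sub_add_cancel]
        norm_cast

-- On the good set every discrete derivative of the left-hand statistic is at most `r`, so there its
-- variance is dominated by that of `r` times the number of edges.
lemma variance_scaledHom_sub_le (G : SimpleGraph V) {n : ℕ} (hn : 0 < n)
    {U : (EdgeIdx n → Bool) → ℝ} (hU : Supermodular U) {c r : ℝ} (hc : 0 ≤ c) (hr : 0 ≤ r) :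
    Var[scaledHom G - c • hammingWeight; gibbs U] ≤ r ^ 2 * Var[hammingWeight; gibbs U] +
      8 * ((1 + c + r) * (n : ℝ) ^ 2) ^ 2 *
        (gibbs U).real (closeSet (discDeriv · (scaledHom G)) c r)ᶜ := by
  have hbound : ∀ y : EdgeIdx n → Bool,
      |scaledHom G y - c * hammingWeight y| + |r * hammingWeight y| ≤
        (1 + c + r) * (n : ℝ) ^ 2 := fun y => by
    have hW := Set.Icc_subset_Icc_right (card_edgeIdx_le n) (hammingWeight_mem_Icc y)
    have hS := scaledHom_mem_Icc G hn y
    calc _ ≤ scaledHom G y + c * hammingWeight y + r * hammingWeight y := by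
          rw [abs_of_nonneg (mul_nonneg hr hW.1)]
          gcongr
          refine (abs_sub _ _).trans_eq ?_
          rw [abs_of_nonneg hS.1, abs_of_nonneg (mul_nonneg hc hW.1)]
      _ ≤ (n : ℝ) ^ 2 + c * (n : ℝ) ^ 2 + r * (n : ℝ) ^ 2 := by
          gcongr
          exacts [hS.2, hW.2, hW.2]
      _ = _ := by ring
  rw [← variance_smul]
  refine variance_gibbs_le_of_abs_discDeriv_le hU
    (ordConnected_closeSet fun s => (regular_discDeriv_scaledHom G hn s).signedMono)
    (fun y s _ hs => ?_) hbound
  simpa [discDeriv_hammingWeight] using (hs s).le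

lemma Subcritical.variance_scaledHom_sub_isBigO (hp : Subcritical β v H p)
    (hβ : Ferromagnetic β v H) (G : SimpleGraph V) :
    (fun n : ℕ => Var[scaledHom G - (2 * eCount G * p ^ (eCount G - 1)) • hammingWeight;
      gibbs (hamiltonian β v H n)]) =O[Filter.atTop] fun n => (n : ℝ) ^ (3 / 2 : ℝ) := by
  obtain ⟨C₁, hC₁, h₁⟩ := hp.exists_gibbs_real_compl_closeSet_le hβ
    (g := fun q => 2 * eCount G * q ^ (eCount G - 1)) (by fun_prop) (regularityConst G)
  obtain ⟨C₂, -, h₂⟩ := (hp.variance_hammingWeight_isBigO hβ).exists_nonneg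
  set c := 2 * eCount G * p ^ (eCount G - 1)
  have hc : 0 ≤ c := by have := hp.mem_Ioo.1; positivity
  refine .of_bound (C₁ ^ 2 * C₂ + 8 * (1 + c + C₁) ^ 2) ?_
  filter_upwards [h₁ 3, h₂.bound, Filter.eventually_gt_atTop 0] with n hn₁ hn₂ hn
  have hn0 : (0 : ℝ) < n := Nat.cast_pos.2 hn
  have hn1 : (1 : ℝ) ≤ n := by exact_mod_cast hn
  rw [norm_of_nonneg (variance_nonneg _ _), norm_of_nonneg (by positivity)] at hn₂ ⊢
  set r := C₁ * (n : ℝ) ^ (-(1 / 4) : ℝ) with hr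
  have hrC : r ≤ C₁ :=
    mul_le_of_le_one_right hC₁ (rpow_le_one_of_one_le_of_nonpos hn1 (by norm_num))
  have hr2 : r ^ 2 * (n : ℝ) ^ 2 = C₁ ^ 2 * (n : ℝ) ^ (3 / 2 : ℝ) := by
    rw [hr, mul_pow, mul_assoc, ← rpow_mul_natCast hn0.le, ← rpow_natCast (n : ℝ), ← rpow_add hn0]
    norm_num
  calc _ ≤ r ^ 2 * (C₂ * (n : ℝ) ^ 2) +
          8 * ((1 + c + C₁) * (n : ℝ) ^ 2) ^ 2 * ((n : ℝ) ^ 3)⁻¹ := by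
        refine (variance_scaledHom_sub_le G hn (hβ.supermodular_hamiltonian n) hc
          (r := r) (by positivity)).trans ?_
        gcongr
        exact hn₁ _ (regular_discDeriv_scaledHom G hn)
    _ = C₁ ^ 2 * C₂ * (n : ℝ) ^ (3 / 2 : ℝ) + 8 * (1 + c + C₁) ^ 2 * n := by
        rw [mul_left_comm, hr2]
        field_simp
    _ ≤ _ := by
        rw [add_mul]
        gcongr
        exact self_le_rpow_of_one_le hn1 (by norm_num)

lemma Subcritical.sigmaSq_pos (hp : Subcritical β v H p) {n : ℕ} (hn : 2 ≤ n) :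
    0 < sigmaSq β v H p n := by
  have hp0 := hp.mem_Ioo.1
  have hp1 : 0 < 1 - p := sub_pos.2 hp.mem_Ioo.2
  have hn1 : 0 < (n : ℝ) - 1 := sub_pos.2 (by exact_mod_cast hn)
  have hdet : 0 < 1 - 2 * p * (1 - p) * deriv (PhiFn β v H) p := by
    linarith [hp.mul_deriv_PhiFn_lt_one]
  rw [sigmaSq]
  positivity

lemma Subcritical.ergmVar_homCount_sub_eq (hp : Subcritical β v H p) (G : SimpleGraph V) {n : ℕ}
    (hn : 2 ≤ n) :
    ergmVar β v H n (fun y => (homCount G y : ℝ) - 2 * (n : ℝ) ^ ((Fintype.card V : ℤ) - 2) *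
      eCount G * p ^ (eCount G - 1) * √(sigmaSq β v H p n) * Wn β v H p n y) =
    ((n : ℝ) ^ ((Fintype.card V : ℤ) - 2)) ^ 2 *
      Var[scaledHom G - (2 * eCount G * p ^ (eCount G - 1)) • hammingWeight;
        gibbs (hamiltonian β v H n)] := by
  set m := (n : ℝ) ^ ((Fintype.card V : ℤ) - 2) with hm
  set c := 2 * eCount G * p ^ (eCount G - 1)
  have hσ : √(sigmaSq β v H p n) ≠ 0 := (sqrt_pos.2 (hp.sigmaSq_pos hn)).ne'
  have hscale : ∀ y : EdgeIdx n → Bool, (homCount G y : ℝ) = m * scaledHom G y := fun y => by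
    rw [scaledHom, hm, ← mul_assoc, ← zpow_add₀ (by positivity)]
    simp
  have hfun : (fun y => (homCount G y : ℝ) - 2 * m * eCount G * p ^ (eCount G - 1) *
      √(sigmaSq β v H p n) * Wn β v H p n y) =
        fun y => m * (scaledHom G y - c * hammingWeight y) + m * c * muN β v H n := by
    funext y
    rw [Wn, mul_assoc, mul_div_cancel₀ _ hσ, hscale, show edgeSum y = hammingWeight y from rfl]
    ring
  rw [ergmVar_eq_variance, hfun, variance_add_const .of_discrete, variance_const_mul]
  rfl

theorem ergm_hom_variance_subcritical_general (hβ : Ferromagnetic β v H)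
    (hp : Subcritical β v H p) (G : SimpleGraph V) :
    ∃ C : ℝ, 0 < C ∧ ∀ n : ℕ, 2 ≤ n →
      ergmVar β v H n (fun y => (homCount G y : ℝ) -
          2 * (n : ℝ) ^ ((Fintype.card V : ℤ) - 2) * (eCount G : ℝ) * p ^ (eCount G - 1) *
            √(sigmaSq β v H p n) * Wn β v H p n y) ≤
        C * (n : ℝ) ^ ((2 * Fintype.card V : ℝ) - 5 / 2) := by
  obtain ⟨C, hC, hbound⟩ :=
    Asymptotics.bound_of_isBigO_nat_atTop (hp.variance_scaledHom_sub_isBigO hβ G)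
  refine ⟨C, hC, fun n hn => ?_⟩
  have hn0 : (0 : ℝ) < n := by positivity
  have hvar := hbound (x := n) (by positivity)
  rw [norm_of_nonneg (variance_nonneg _ _), norm_of_nonneg (by positivity)] at hvar
  rw [hp.ergmVar_homCount_sub_eq G hn]
  calc _ ≤ ((n : ℝ) ^ ((Fintype.card V : ℤ) - 2)) ^ 2 * (C * (n : ℝ) ^ (3 / 2 : ℝ)) := by gcongr
    _ = C * (n : ℝ) ^ ((2 * Fintype.card V : ℝ) - 5 / 2) := by
        rw [mul_left_comm, ← rpow_intCast, ← rpow_mul_natCast hn0.le, ← rpow_add hn0]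
        push_cast
        ring_nf

end Variance

/-- **Lemma 5.3**: higher-order variance bound for subgraph counts in the whole subcritical
region: `Var(|Hom(H,G_Y)| − 2 n^{v−2} e p^{e−1} σ_n W_n) ≤ C n^{2v − 5/2}`. -/
theorem ergm_hom_variance_subcritical {k : ℕ} (β : Fin (k + 1) → ℝ) (v : Fin (k + 1) → ℕ)
    (H : ∀ j : Fin (k + 1), SimpleGraph (Fin (v j)))
    -- `β₂, …, β_k > 0`
    (hβ : ∀ j : Fin (k + 1), j ≠ 0 → 0 < β j)
    -- `H₁` is a single edge
    (hv0 : v 0 = 2) (he0 : eCount (H 0) = 1)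
    -- the graphs have no isolated vertices
    (hnoiso : ∀ (j : Fin (k + 1)) (a : Fin (v j)), ∃ b, (H j).Adj a b)
    -- `H₂, …, H_k` have at least two edges
    (hedges : ∀ j : Fin (k + 1), j ≠ 0 → 2 ≤ eCount (H j))
    -- the subcritical region: unique fixed point `p ∈ (0,1)` with `φ_β'(p) < 1`
    (p : ℝ) (hp : p ∈ Set.Ioo (0 : ℝ) 1)
    (hfix : phiFn β v H p = p)
    (huniq : ∀ q ∈ Set.Ioo (0 : ℝ) 1, phiFn β v H q = q → q = p)
    (hsub : deriv (phiFn β v H) p < 1)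
    -- the fixed graph `H`, possibly with isolated vertices, `v ≥ 3` vertices, `e ≥ 1` edges
    (vH : ℕ) (hvH : 3 ≤ vH) (Hg : SimpleGraph (Fin vH)) (hHe : 1 ≤ eCount Hg) :
    ∃ C : ℝ, 0 < C ∧ ∀ n : ℕ, 2 ≤ n →
      ergmVar β v H n (fun y => (homCount Hg y : ℝ) -
          2 * (n : ℝ) ^ ((vH : ℤ) - 2) * (eCount Hg : ℝ) * p ^ (eCount Hg - 1) *
            Real.sqrt (sigmaSq β v H p n) * Wn β v H p n y) ≤
        C * (n : ℝ) ^ ((2 * vH : ℝ) - 5 / 2) := by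
  have hferro : Ferromagnetic β v H := fun j hj =>
    (hβ j fun h => by subst h; omega).le
  simpa using ergm_hom_variance_subcritical_general hferro ⟨hp, hfix, huniq, hsub⟩ Hg
end
end

section
/- For the Curie–Weiss model without external field at inverse temperature 0 < β < 1, there exists a constant C > 0 depending only on β such that for all N ≥ 1, d_Wass(W, Z) ≤ C/√N, where Z is a standard normal random variable. -/
open MeasureTheory ProbabilityTheory Real

noncomputable section

/-- The spin value of a Boolean coordinate: `true ↦ +1`, `false ↦ −1`. -/
def cwSpin (b : Bool) : ℝ := if b then 1 else -1

/-- The total magnetization `s(x) = x₁ + ⋯ + x_N`. -/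
def cwS {N : ℕ} (x : Fin N → Bool) : ℝ := ∑ i, cwSpin (x i)

/-- The Curie–Weiss Gibbs weight `h(x) = exp(β s(x)²/(2N))` (relative to the uniform
distribution on `{−1,1}^N`). -/
def cwWeight (β : ℝ) {N : ℕ} (x : Fin N → Bool) : ℝ :=
  Real.exp (β * (cwS x) ^ 2 / (2 * N))

/-- The Curie–Weiss normalizing constant `Σ_x h(x)`. -/
def cwZ (β : ℝ) (N : ℕ) : ℝ := ∑ x : Fin N → Bool, cwWeight β x

/-- The Curie–Weiss probability of the configuration `x` (the uniform base measure cancels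
in the tilted law). -/
def cwProb (β : ℝ) {N : ℕ} (x : Fin N → Bool) : ℝ := cwWeight β x / cwZ β N

/-- The standardized magnetization `W = s(Y)/σ_N` with `σ_N² = N/(1−β)`. -/
def cwW (β : ℝ) {N : ℕ} (x : Fin N → Bool) : ℝ :=
  cwS x / Real.sqrt ((N : ℝ) / (1 - β))

/-!
The proof is Stein's method. For a Lipschitz function `ψ`, the equation
`F' x - x F x = ψ x - E ψ(Z)` has a solution `F` such that `F`, `F'` and the Lipschitz constant
of `F'` are bounded, so it suffices to bound `E[F'(W) - W F(W)]`. Given the other spins, with sum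
`rᵢ`, the spin `Yᵢ` has mean `tanh (β rᵢ / N)`; hence `Yᵢ - tanh (β rᵢ / N)` is orthogonal to
`F(rᵢ / σ)`, and a Taylor expansion of `F` at `W` turns its product with `F(W)` into `F'(W) / σ`
up to `O(1/N)` in mean. Since `tanh y = y + O(y²)`, the conditional means sum to `β s(Y)` up to
`O(s(Y)² / N + 1)`, which has bounded expectation because `E s(Y)² = O(N)` for `β < 1`.
-/

open Set
open scoped NNReal

section Calculus

variable {E : Type*} [NormedAddCommGroup E] [NormedSpace ℝ E]

lemma hasDerivAt_integral_Iic [CompleteSpace E] {f : ℝ → E} (hf : Continuous f)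
    (hi : Integrable f) (x : ℝ) : HasDerivAt (fun x ↦ ∫ t in Iic x, f t) (f x) x := by
  have hsplit (y : ℝ) : ∫ t in Iic y, f t = (∫ t in Iic 0, f t) + ∫ t in (0)..y, f t := by
    rw [← intervalIntegral.integral_Iic_sub_Iic hi.integrableOn hi.integrableOn, add_sub_cancel]
  rw [funext hsplit]
  exact (hf.integral_hasStrictDerivAt 0 x).hasDerivAt.const_add _

lemma norm_sub_sub_smul_le_of_lipschitzWith_deriv {F F' : ℝ → E} {L : ℝ≥0}
    (hF : ∀ x, HasDerivAt F (F' x) x) (hL : LipschitzWith L F') (x y : ℝ) :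
    ‖F y - F x - (y - x) • F' x‖ ≤ L * (y - x) ^ 2 := by
  have hd (z : ℝ) : HasDerivAt (fun z ↦ F z - z • F' x) (F' z - F' x) z := by
    simpa using (hF z).fun_sub ((hasDerivAt_id z).smul_const (F' x))
  have hbound (z : ℝ) (hz : z ∈ uIcc x y) : ‖F' z - F' x‖ ≤ L * |y - x| := by
    refine (hL.norm_sub_le z x).trans ?_
    gcongr
    exact abs_sub_left_of_mem_uIcc hz
  have := (convex_uIcc x y).norm_image_sub_le_of_norm_hasDerivWithin_le
    (fun z _ ↦ (hd z).hasDerivWithinAt) hbound left_mem_uIcc right_mem_uIcc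
  calc ‖F y - F x - (y - x) • F' x‖ = ‖F y - y • F' x - (F x - x • F' x)‖ := by
        rw [sub_smul]; congr 1; abel
    _ ≤ L * |y - x| * ‖y - x‖ := this
    _ = L * (y - x) ^ 2 := by rw [norm_eq_abs, mul_assoc, ← sq, sq_abs]

end Calculus

section Tanh

lemma hasDerivAt_tanh (x : ℝ) : HasDerivAt tanh (1 - tanh x ^ 2) x := by
  have h := (hasDerivAt_sinh x).div (hasDerivAt_cosh x) (cosh_pos x).ne'
  convert! h using 1
  · ext y
    exact tanh_eq_sinh_div_cosh y
  · rw [tanh_eq_sinh_div_cosh]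
    field_simp [(cosh_pos x).ne']

lemma abs_tanh_le_abs (x : ℝ) : |tanh x| ≤ |x| := by
  have hderiv (y : ℝ) : ‖1 - tanh y ^ 2‖ ≤ 1 := by
    rw [norm_eq_abs, abs_le]
    constructor <;> linarith [tanh_sq_lt_one y, sq_nonneg (tanh y)]
  simpa using convex_univ.norm_image_sub_le_of_norm_hasDerivWithin_le
    (fun y _ ↦ (hasDerivAt_tanh y).hasDerivWithinAt) (fun y _ ↦ hderiv y)
    (mem_univ 0) (mem_univ x)

lemma abs_tanh_sub_self_le (x : ℝ) : |tanh x - x| ≤ x ^ 2 := by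
  have hd (y : ℝ) : HasDerivAt (fun y ↦ tanh y - y) (-tanh y ^ 2) y := by
    simpa using (hasDerivAt_tanh y).fun_sub (hasDerivAt_id y)
  have hbound (y : ℝ) (hy : y ∈ uIcc 0 x) : ‖-tanh y ^ 2‖ ≤ |x| := by
    have hyx : |y| ≤ |x| := by simpa using abs_sub_left_of_mem_uIcc hy
    rw [norm_neg, norm_pow, norm_eq_abs]
    nlinarith [abs_tanh_lt_one y, abs_tanh_le_abs y, abs_nonneg (tanh y)]
  have := (convex_uIcc 0 x).norm_image_sub_le_of_norm_hasDerivWithin_le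
    (fun y _ ↦ (hd y).hasDerivWithinAt) hbound left_mem_uIcc right_mem_uIcc
  simpa [abs_mul_abs_self, ← sq] using this

lemma mul_tanh_nonneg (x : ℝ) : 0 ≤ x * tanh x := by
  rw [tanh_eq_sinh_div_cosh, ← mul_div_assoc]
  refine div_nonneg ?_ (cosh_pos x).le
  rcases le_total 0 x with hx | hx
  · exact mul_nonneg hx (sinh_nonneg_iff.2 hx)
  · exact mul_nonneg_of_nonpos_of_nonpos hx (sinh_nonpos_iff.2 hx)

lemma mul_tanh_mul_le (β y : ℝ) : y * tanh (β * y) ≤ max β 0 * y ^ 2 := by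
  rcases le_or_gt 0 β with hβ | hβ
  · calc y * tanh (β * y) ≤ |y| * |tanh (β * y)| := (le_abs_self _).trans_eq (abs_mul _ _)
      _ ≤ |y| * |β * y| :=
        mul_le_mul_of_nonneg_left (abs_tanh_le_abs _) (abs_nonneg y)
      _ = max β 0 * y ^ 2 := by
        rw [abs_mul, abs_of_nonneg hβ, max_eq_left hβ, ← sq_abs y]; ring
  · rw [max_eq_right hβ.le, zero_mul]
    have := mul_tanh_nonneg (β * y)
    by_contra! hpos
    nlinarith [mul_neg_of_neg_of_pos hβ hpos]

lemma exp_mul_one_sub_tanh (x : ℝ) : rexp x * (1 - tanh x) = rexp (-x) * (1 + tanh x) := by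
  rw [tanh_eq]
  field_simp
  ring

end Tanh

section Gaussian

/-- The standard Gaussian measure. -/
local notation "γ" => gaussianReal 0 1

/-- The standard Gaussian density. -/
local notation "φ" => gaussianPDFReal 0 1

variable {K : ℝ≥0}

lemma integrable_of_lipschitzWith {E : Type*} [NormedAddCommGroup E] {μ : Measure ℝ}
    [IsFiniteMeasure μ] (hμ : Integrable (fun t ↦ t) μ) {ψ : ℝ → E} (hψ : LipschitzWith K ψ) :
    Integrable ψ μ := by
  refine ((integrable_const ‖ψ 0‖).add (hμ.norm.const_mul K)).mono'
    hψ.continuous.aestronglyMeasurable (.of_forall fun t ↦ ?_)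
  simpa [add_comm] using (norm_le_norm_sub_add (ψ t) (ψ 0)).trans
    (add_le_add_left (hψ.norm_sub_le t 0) _)

lemma integrable_sq_gaussianReal : Integrable (fun t ↦ t ^ 2) γ :=
  (memLp_id_gaussianReal 2).integrable_sq

lemma integrable_id_gaussianReal : Integrable (fun t ↦ t) γ :=
  memLp_one_iff_integrable.1 (memLp_id_gaussianReal 1)

lemma integral_sq_gaussianReal : ∫ t, t ^ 2 ∂γ = 1 := by
  have := variance_eq_sub (memLp_id_gaussianReal (μ := 0) (v := 1) 2)
  simpa using this.symm

lemma abs_sub_integral_gaussianReal_le {ψ : ℝ → ℝ} (hψ : LipschitzWith K ψ) (x : ℝ) :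
    |ψ x - ∫ t, ψ t ∂γ| ≤ K * (|x| + 1) := by
  have hsq := integrable_sq_gaussianReal.div_const 2
  have hi : Integrable (fun t ↦ K * (t ^ 2 / 2 + (|x| + 1 / 2))) γ :=
    (hsq.add (integrable_const _)).const_mul _
  calc |ψ x - ∫ t, ψ t ∂γ| = ‖∫ t, (ψ x - ψ t) ∂γ‖ := by
        rw [integral_sub (integrable_const _)
          (integrable_of_lipschitzWith integrable_id_gaussianReal hψ)]
        simp
    _ ≤ ∫ t, K * (t ^ 2 / 2 + (|x| + 1 / 2)) ∂γ := by
        refine norm_integral_le_of_norm_le hi (.of_forall fun t ↦ (hψ.norm_sub_le x t).trans ?_)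
        gcongr
        refine (norm_sub_le x t).trans ?_
        simp only [norm_eq_abs]
        nlinarith [sq_nonneg (|t| - 1), sq_abs t]
    _ = K * (|x| + 1) := by
        rw [integral_const_mul, integral_add hsq (integrable_const _), integral_div,
          integral_sq_gaussianReal, integral_const, probReal_univ, one_smul]
        ring

lemma gaussianPDFReal_zero_neg (v : ℝ≥0) (x : ℝ) :
    gaussianPDFReal 0 v (-x) = gaussianPDFReal 0 v x := by
  simp [gaussianPDFReal]

section NormedSpace

variable {E : Type*} [NormedAddCommGroup E] [NormedSpace ℝ E] {μ : ℝ} {v : ℝ≥0}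

lemma setIntegral_gaussianReal (hv : v ≠ 0) (f : ℝ → E) {s : Set ℝ} (hs : MeasurableSet s) :
    ∫ t in s, f t ∂gaussianReal μ v = ∫ t in s, gaussianPDFReal μ v t • f t := by
  rw [← integral_indicator hs, integral_gaussianReal_eq_integral_smul hv,
    ← integral_indicator hs]
  congr 1 with t
  by_cases ht : t ∈ s <;> simp [ht]

lemma integrable_gaussianReal_iff (hv : v ≠ 0) {f : ℝ → E} :
    Integrable f (gaussianReal μ v) ↔ Integrable fun t ↦ gaussianPDFReal μ v t • f t := by
  rw [gaussianReal_of_var_ne_zero μ hv,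
    integrable_withDensity_iff_integrable_smul' (measurable_gaussianPDF μ v)
      (.of_forall fun _ ↦ gaussianPDF_lt_top)]
  simp

lemma integral_comp_neg_gaussianReal (f : ℝ → E) :
    ∫ z, f (-z) ∂gaussianReal 0 v = ∫ z, f z ∂gaussianReal 0 v := by
  have h := (MeasurableEquiv.neg ℝ).measurableEmbedding.integral_map (μ := gaussianReal 0 v) f
  simpa [gaussianReal_map_neg] using h.symm

end NormedSpace

lemma hasDerivAt_gaussianPDFReal (x : ℝ) : HasDerivAt φ (-(x * φ x)) x := by
  have := ((((hasDerivAt_id x).pow 2).neg.div_const 2).exp).const_mul (√(2 * π))⁻¹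
  convert! this using 1
  · ext y
    simp [gaussianPDFReal]
  · simp only [gaussianPDFReal, NNReal.coe_one, mul_one, sub_zero, id, Pi.pow_apply, Pi.neg_apply]
    ring

/-- Stein's identity on a half-line. -/
lemma setIntegral_Ioi_mul_sub_deriv {g g' : ℝ → ℝ} (hg : ∀ t, HasDerivAt g (g' t) t)
    (hgi : Integrable g γ) (hi : Integrable (fun t ↦ t * g t - g' t) γ) (x : ℝ) :
    ∫ t in Ioi x, (t * g t - g' t) ∂γ = φ x * g x := by
  have hd (t : ℝ) : HasDerivAt (fun t ↦ φ t * g t) (-(φ t * (t * g t - g' t))) t := by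
    convert! (hasDerivAt_gaussianPDFReal t).mul (hg t) using 1
    ring
  rw [integrable_gaussianReal_iff one_ne_zero] at hgi hi
  have hlim := tendsto_zero_of_hasDerivAt_of_integrableOn_Ioi (a := x) (fun t _ ↦ hd t)
    hi.neg.integrableOn hgi.integrableOn
  have := integral_Ioi_of_hasDerivAt_of_tendsto' (a := x) (fun t _ ↦ hd t) hi.neg.integrableOn hlim
  rw [integral_neg] at this
  simp only [setIntegral_gaussianReal one_ne_zero _ measurableSet_Ioi, smul_eq_mul]
  linarith

lemma setIntegral_Ioi_id_gaussianReal (x : ℝ) : ∫ t in Ioi x, t ∂γ = φ x := by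
  simpa using setIntegral_Ioi_mul_sub_deriv (fun t ↦ hasDerivAt_const t 1) (integrable_const 1)
    (by simpa using integrable_id_gaussianReal) x

lemma setIntegral_Ioi_sq_gaussianReal (x : ℝ) :
    ∫ t in Ioi x, t ^ 2 ∂γ = (γ).real (Ioi x) + φ x * x := by
  have := setIntegral_Ioi_mul_sub_deriv hasDerivAt_id integrable_id_gaussianReal
    (by simpa [← sq, sub_eq_add_neg] using integrable_sq_gaussianReal.add (integrable_const (-1))) x
  simp only [id, ← sq] at this
  rw [integral_sub integrable_sq_gaussianReal.integrableOn (integrable_const 1)] at this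
  simp only [integral_const, measureReal_restrict_apply_univ, smul_eq_mul, mul_one] at this
  linarith

section MillsRatio

/-- The Mills ratio of the standard Gaussian: its upper tail divided by its density. -/
def millsRatio (x : ℝ) : ℝ := (γ).real (Ioi x) / φ x

lemma millsRatio_nonneg (x : ℝ) : 0 ≤ millsRatio x :=
  div_nonneg measureReal_nonneg (gaussianPDFReal_nonneg _ _ _)

lemma setIntegral_Ioi_sub_gaussianReal (x : ℝ) :
    ∫ t in Ioi x, (t - x) ∂γ = φ x * (1 - x * millsRatio x) := by
  rw [integral_sub integrable_id_gaussianReal.integrableOn (integrable_const x),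
    setIntegral_Ioi_id_gaussianReal, setIntegral_const, millsRatio, smul_eq_mul]
  field_simp [(gaussianPDFReal_pos 0 1 x one_ne_zero).ne']

lemma mul_millsRatio_le_one (x : ℝ) : x * millsRatio x ≤ 1 := by
  have h : 0 ≤ ∫ t in Ioi x, (t - x) ∂γ :=
    setIntegral_nonneg measurableSet_Ioi fun t ht ↦ sub_nonneg.2 (mem_Ioi.1 ht).le
  rw [setIntegral_Ioi_sub_gaussianReal] at h
  exact sub_nonneg.1 (nonneg_of_mul_nonneg_right h (gaussianPDFReal_pos 0 1 x one_ne_zero))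

lemma le_one_add_sq_mul_millsRatio (x : ℝ) : x ≤ (1 + x ^ 2) * millsRatio x := by
  have hφ := gaussianPDFReal_pos 0 1 x one_ne_zero
  have hsq := integrable_sq_gaussianReal.integrableOn (s := Ioi x)
  have hid := integrable_id_gaussianReal.integrableOn (s := Ioi x)
  have hsub : IntegrableOn (fun t ↦ t ^ 2 - 2 * x * t) (Ioi x) γ := hsq.sub (hid.const_mul _)
  have h : 0 ≤ ∫ t in Ioi x, (t - x) ^ 2 ∂γ := integral_nonneg fun t ↦ sq_nonneg _
  have hexpand : ∫ t in Ioi x, (t - x) ^ 2 ∂γ = (1 + x ^ 2) * (γ).real (Ioi x) - x * φ x := by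
    have hpt (t : ℝ) : (t - x) ^ 2 = t ^ 2 - 2 * x * t + x ^ 2 := by ring
    simp_rw [hpt]
    rw [integral_add hsub (integrable_const _), integral_sub hsq (hid.const_mul _),
      integral_const_mul, setIntegral_Ioi_sq_gaussianReal,
      setIntegral_Ioi_id_gaussianReal, setIntegral_const, smul_eq_mul]
    ring
  rw [millsRatio, ← mul_div_assoc, le_div_iff₀ hφ]
  linarith

lemma one_add_sq_mul_one_sub_mul_millsRatio_le {x : ℝ} (hx : 0 ≤ x) :
    (1 + x ^ 2) * (1 - x * millsRatio x) ≤ 1 := by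
  nlinarith [mul_le_mul_of_nonneg_left (le_one_add_sq_mul_millsRatio x) hx]

lemma inv_gaussianPDFReal_zero_le : (φ 0)⁻¹ ≤ 3 := by
  have h : √(2 * π) ≤ 3 := sqrt_le_iff.2 ⟨by norm_num, by linarith [pi_lt_four]⟩
  simpa [gaussianPDFReal] using h

lemma millsRatio_le {x : ℝ} (hx : 0 ≤ x) : millsRatio x ≤ 3 := by
  refine le_trans ?_ inv_gaussianPDFReal_zero_le
  have hpdf (t : ℝ) (ht : x < t) : φ 0 * φ t ≤ φ x * gaussianPDFReal x 1 t := by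
    simp only [gaussianPDFReal, mul_mul_mul_comm _ (rexp _) _ (rexp _), ← exp_add]
    refine mul_le_mul_of_nonneg_left (exp_le_exp.2 ?_) (by positivity)
    simp only [NNReal.coe_one]
    nlinarith [mul_nonneg hx (sub_nonneg.2 ht.le)]
  have htail : φ 0 * (γ).real (Ioi x) ≤ φ x := calc
    φ 0 * (γ).real (Ioi x) = ∫ t in Ioi x, φ 0 * φ t := by
      have := setIntegral_gaussianReal (μ := 0) one_ne_zero (fun _ ↦ (1 : ℝ))
        (measurableSet_Ioi (a := x))
      simp only [setIntegral_const, smul_eq_mul, mul_one] at this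
      rw [this, integral_const_mul]
    _ ≤ ∫ t in Ioi x, φ x * gaussianPDFReal x 1 t :=
      setIntegral_mono_on ((integrable_gaussianPDFReal 0 1).const_mul _).integrableOn
        ((integrable_gaussianPDFReal x 1).const_mul _).integrableOn measurableSet_Ioi hpdf
    _ ≤ ∫ t, φ x * gaussianPDFReal x 1 t :=
      setIntegral_le_integral ((integrable_gaussianPDFReal x 1).const_mul _)
        (.of_forall fun t ↦ mul_nonneg (gaussianPDFReal_nonneg _ _ _)
          (gaussianPDFReal_nonneg _ _ _))
    _ = φ x := by
      rw [integral_const_mul, integral_gaussianPDFReal_eq_one x one_ne_zero, mul_one]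
  rw [millsRatio, div_le_iff₀ (gaussianPDFReal_pos 0 1 x one_ne_zero),
    le_inv_mul_iff₀ (gaussianPDFReal_pos 0 1 0 one_ne_zero)]
  exact htail

end MillsRatio

section SteinEquation

/-- The bounded solution `F` of Stein's equation `F' x - x F x = ψ x - E ψ(Z)`,
where `Z` is a standard normal variable. -/
def steinSolution (ψ : ℝ → ℝ) (x : ℝ) : ℝ :=
  (φ x)⁻¹ * ∫ t in Iic x, (ψ t - ∫ z, ψ z ∂γ) ∂γ

/-- The derivative of `steinSolution ψ`, read off from Stein's equation. -/
def steinSolutionDeriv (ψ : ℝ → ℝ) (x : ℝ) : ℝ :=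
  x * steinSolution ψ x + (ψ x - ∫ z, ψ z ∂γ)

variable {ψ : ℝ → ℝ}

lemma hasDerivAt_steinSolution (hc : Continuous ψ) (hi : Integrable ψ γ) (x : ℝ) :
    HasDerivAt (steinSolution ψ) (steinSolutionDeriv ψ x) x := by
  have hφ := (gaussianPDFReal_pos 0 1 x one_ne_zero).ne'
  have hφc : Continuous φ :=
    continuous_iff_continuousAt.2 fun t ↦ (hasDerivAt_gaussianPDFReal t).continuousAt
  have hint := hasDerivAt_integral_Iic (f := fun t ↦ φ t * (ψ t - ∫ z, ψ z ∂γ))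
    (hφc.mul (hc.sub continuous_const))
    ((integrable_gaussianReal_iff one_ne_zero).1 (hi.sub (integrable_const (∫ z, ψ z ∂γ)))) x
  convert! ((hasDerivAt_gaussianPDFReal x).inv hφ).mul hint using 1
  · ext y
    rw [steinSolution, setIntegral_gaussianReal one_ne_zero _ measurableSet_Iic]
    rfl
  · rw [steinSolutionDeriv, steinSolution, setIntegral_gaussianReal one_ne_zero _ measurableSet_Iic]
    simp only [Pi.inv_apply, smul_eq_mul]
    field_simp

lemma steinSolution_eq_neg_integral_Ioi (hi : Integrable ψ γ) (x : ℝ) :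
    steinSolution ψ x = -((φ x)⁻¹ * ∫ t in Ioi x, (ψ t - ∫ z, ψ z ∂γ) ∂γ) := by
  have hi' := hi.sub (integrable_const (∫ z, ψ z ∂γ))
  have hsum := intervalIntegral.integral_Iic_add_Ioi (b := x) hi'.integrableOn hi'.integrableOn
  have hzero : ∫ t, (ψ t - ∫ z, ψ z ∂γ) ∂γ = 0 := by
    rw [integral_sub hi (integrable_const _)]
    simp
  simp only [Pi.sub_apply, hzero] at hsum
  rw [steinSolution]
  linear_combination (φ x)⁻¹ * hsum

lemma steinSolution_comp_neg (hi : Integrable ψ γ) (x : ℝ) :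
    steinSolution (fun t ↦ ψ (-t)) x = -steinSolution ψ (-x) := by
  rw [steinSolution_eq_neg_integral_Ioi hi, neg_neg, steinSolution, gaussianPDFReal_zero_neg,
    integral_comp_neg_gaussianReal, setIntegral_gaussianReal one_ne_zero _ measurableSet_Iic,
    setIntegral_gaussianReal one_ne_zero _ measurableSet_Ioi,
    ← integral_comp_neg_Iic x (fun t ↦ φ t • (ψ t - ∫ z, ψ z ∂γ))]
  simp_rw [gaussianPDFReal_zero_neg]

lemma steinSolutionDeriv_comp_neg (hi : Integrable ψ γ) (x : ℝ) :
    steinSolutionDeriv (fun t ↦ ψ (-t)) x = steinSolutionDeriv ψ (-x) := by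
  rw [steinSolutionDeriv, steinSolutionDeriv, steinSolution_comp_neg hi,
    integral_comp_neg_gaussianReal]
  ring

lemma abs_steinSolution_add_mul_millsRatio_le (hψ : LipschitzWith K ψ) (x : ℝ) :
    |steinSolution ψ x + (ψ x - ∫ z, ψ z ∂γ) * millsRatio x| ≤ K * (1 - x * millsRatio x) := by
  have hφ := gaussianPDFReal_pos 0 1 x one_ne_zero
  have hi := integrable_of_lipschitzWith integrable_id_gaussianReal hψ
  -- Freezing `ψ` at `x` in the upper-tail formula for the solution yields the Mills ratio.
  have heq : steinSolution ψ x + (ψ x - ∫ z, ψ z ∂γ) * millsRatio x =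
      (φ x)⁻¹ * ∫ t in Ioi x, (ψ x - ψ t) ∂γ := by
    rw [steinSolution_eq_neg_integral_Ioi hi, integral_sub hi.integrableOn (integrable_const _),
      integral_sub (integrable_const _) hi.integrableOn, setIntegral_const, setIntegral_const,
      millsRatio]
    simp only [smul_eq_mul]
    ring
  have hle : ‖∫ t in Ioi x, (ψ x - ψ t) ∂γ‖ ≤ ∫ t in Ioi x, K * (t - x) ∂γ := by
    refine norm_integral_le_of_norm_le
      ((integrable_id_gaussianReal.sub (integrable_const x)).const_mul _).integrableOn ?_
    filter_upwards [ae_restrict_mem measurableSet_Ioi] with t ht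
    rw [← abs_of_pos (sub_pos.2 (mem_Ioi.1 ht)), abs_sub_comm]
    exact hψ.norm_sub_le x t
  rw [integral_const_mul, setIntegral_Ioi_sub_gaussianReal, norm_eq_abs] at hle
  rw [heq, abs_mul, abs_inv, abs_of_pos hφ, inv_mul_le_iff₀ hφ]
  linarith

lemma abs_steinSolution_le_of_nonneg (hψ : LipschitzWith K ψ) {x : ℝ} (hx : 0 ≤ x) :
    |steinSolution ψ x| ≤ 4 * K := by
  set h := ψ x - ∫ z, ψ z ∂γ
  set m := millsRatio x
  have hm : 0 ≤ m := millsRatio_nonneg x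
  have hh : |h| ≤ K * (x + 1) := by
    simpa [abs_of_nonneg hx] using abs_sub_integral_gaussianReal_le hψ x
  calc |steinSolution ψ x| = |(steinSolution ψ x + h * m) - h * m| := by rw [add_sub_cancel_right]
    _ ≤ |steinSolution ψ x + h * m| + |h| * m := by
      simpa [abs_mul, abs_of_nonneg hm] using abs_sub (steinSolution ψ x + h * m) (h * m)
    _ ≤ K * (1 - x * m) + K * (x + 1) * m := by
      gcongr
      exact abs_steinSolution_add_mul_millsRatio_le hψ x
    _ = K * (1 + m) := by ring
    _ ≤ K * (1 + 3) := by gcongr; exact millsRatio_le hx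
    _ = 4 * K := by ring

lemma one_add_mul_abs_steinSolutionDeriv_le_of_nonneg (hψ : LipschitzWith K ψ) {x : ℝ}
    (hx : 0 ≤ x) : (1 + x) * |steinSolutionDeriv ψ x| ≤ 4 * K := by
  set h := ψ x - ∫ z, ψ z ∂γ with h_def
  set m := millsRatio x
  have hm : 0 ≤ 1 - x * m := sub_nonneg.2 (mul_millsRatio_le_one x)
  have hh : |h| ≤ K * (x + 1) := by
    simpa [abs_of_nonneg hx] using abs_sub_integral_gaussianReal_le hψ x
  have hderiv : |steinSolutionDeriv ψ x| ≤ K * ((2 * x + 1) * (1 - x * m)) := calc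
    |steinSolutionDeriv ψ x| = |x * (steinSolution ψ x + h * m) + h * (1 - x * m)| := by
      rw [steinSolutionDeriv, ← h_def]; ring_nf
    _ ≤ x * |steinSolution ψ x + h * m| + |h| * (1 - x * m) := by
      simpa [abs_mul, abs_of_nonneg hx, abs_of_nonneg hm] using
        abs_add_le (x * (steinSolution ψ x + h * m)) (h * (1 - x * m))
    _ ≤ x * (K * (1 - x * m)) + K * (x + 1) * (1 - x * m) := by
      gcongr
      exact abs_steinSolution_add_mul_millsRatio_le hψ x
    _ = K * ((2 * x + 1) * (1 - x * m)) := by ring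
  have hpoly : (1 + x) * (2 * x + 1) ≤ 4 * (1 + x ^ 2) := by nlinarith [sq_nonneg (x - 1)]
  calc (1 + x) * |steinSolutionDeriv ψ x|
      ≤ (1 + x) * (K * ((2 * x + 1) * (1 - x * m))) := by gcongr
    _ = K * (((1 + x) * (2 * x + 1)) * (1 - x * m)) := by ring
    _ ≤ K * ((4 * (1 + x ^ 2)) * (1 - x * m)) :=
      mul_le_mul_of_nonneg_left (mul_le_mul_of_nonneg_right hpoly hm) K.2
    _ = 4 * K * ((1 + x ^ 2) * (1 - x * m)) := by ring
    _ ≤ 4 * K := mul_le_of_le_one_right (by positivity)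
      (one_add_sq_mul_one_sub_mul_millsRatio_le hx)

lemma lipschitzWith_comp_neg (hψ : LipschitzWith K ψ) : LipschitzWith K fun t ↦ ψ (-t) :=
  fun x y ↦ by simpa using hψ (-x) (-y)

lemma abs_steinSolution_le (hψ : LipschitzWith K ψ) (x : ℝ) : |steinSolution ψ x| ≤ 4 * K := by
  rcases le_total 0 x with hx | hx
  · exact abs_steinSolution_le_of_nonneg hψ hx
  · have := abs_steinSolution_le_of_nonneg (lipschitzWith_comp_neg hψ) (neg_nonneg.2 hx)
    rwa [steinSolution_comp_neg (integrable_of_lipschitzWith integrable_id_gaussianReal hψ),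
      neg_neg, abs_neg] at this

lemma one_add_abs_mul_abs_steinSolutionDeriv_le (hψ : LipschitzWith K ψ) (x : ℝ) :
    (1 + |x|) * |steinSolutionDeriv ψ x| ≤ 4 * K := by
  rcases le_total 0 x with hx | hx
  · simpa [abs_of_nonneg hx] using one_add_mul_abs_steinSolutionDeriv_le_of_nonneg hψ hx
  · have := one_add_mul_abs_steinSolutionDeriv_le_of_nonneg (lipschitzWith_comp_neg hψ)
      (neg_nonneg.2 hx)
    rwa [steinSolutionDeriv_comp_neg (integrable_of_lipschitzWith integrable_id_gaussianReal hψ),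
      neg_neg, ← abs_of_nonpos hx] at this

lemma abs_steinSolutionDeriv_le (hψ : LipschitzWith K ψ) (x : ℝ) :
    |steinSolutionDeriv ψ x| ≤ 4 * K :=
  (le_mul_of_one_le_left (abs_nonneg _) (by simp)).trans
    (one_add_abs_mul_abs_steinSolutionDeriv_le hψ x)

lemma lipschitzWith_steinSolutionDeriv (hψ : LipschitzWith K ψ) :
    LipschitzWith (9 * K) (steinSolutionDeriv ψ) := by
  have hi := integrable_of_lipschitzWith integrable_id_gaussianReal hψ
  -- `ψ` need not be differentiable, so only the term `x * steinSolution ψ x` is differentiated.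
  have hd (x : ℝ) : HasDerivAt (fun x ↦ x * steinSolution ψ x)
      (steinSolution ψ x + x * steinSolutionDeriv ψ x) x := by
    simpa using (hasDerivAt_id x).fun_mul (hasDerivAt_steinSolution hψ.continuous hi x)
  have hbound (x : ℝ) : ‖steinSolution ψ x + x * steinSolutionDeriv ψ x‖ ≤ (8 * K : ℝ≥0) := by
    refine (norm_add_le _ _).trans ?_
    push_cast
    simp only [norm_mul, norm_eq_abs]
    linarith [abs_steinSolution_le hψ x, one_add_abs_mul_abs_steinSolutionDeriv_le hψ x,
      abs_nonneg (steinSolutionDeriv ψ x)]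
  have hmul : LipschitzWith (8 * K) (fun x ↦ x * steinSolution ψ x) :=
    lipschitzWith_of_nnnorm_deriv_le (fun x ↦ (hd x).differentiableAt) fun x ↦ by
      rw [(hd x).deriv]
      exact hbound x
  convert! hmul.add (hψ.sub (LipschitzWith.const (∫ z, ψ z ∂γ))) using 1
  ring

end SteinEquation

end Gaussian

section Spin

variable {N : ℕ}

lemma cwSpin_not (b : Bool) : cwSpin (!b) = -cwSpin b := by
  cases b <;> simp [cwSpin]

lemma cwSpin_sq (b : Bool) : cwSpin b ^ 2 = 1 := by
  cases b <;> simp [cwSpin]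

lemma abs_cwSpin (b : Bool) : |cwSpin b| = 1 := by
  cases b <;> simp [cwSpin]

/-- The magnetization of all spins but the `i`-th. -/
def cwRest (i : Fin N) (x : Fin N → Bool) : ℝ := ∑ j ∈ Finset.univ.erase i, cwSpin (x j)

/-- The configuration `x` with its `i`-th spin reversed. -/
def cwFlip (i : Fin N) (x : Fin N → Bool) : Fin N → Bool := Function.update x i (!x i)

lemma cwRest_add_cwSpin (i : Fin N) (x : Fin N → Bool) : cwRest i x + cwSpin (x i) = cwS x :=
  Finset.sum_erase_add _ _ (Finset.mem_univ i)

lemma cwFlip_cwFlip (i : Fin N) (x : Fin N → Bool) : cwFlip i (cwFlip i x) = x := by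
  simp [cwFlip]

lemma cwFlip_ne (i : Fin N) (x : Fin N → Bool) : cwFlip i x ≠ x := by
  simp [cwFlip]

lemma cwSpin_cwFlip (i : Fin N) (x : Fin N → Bool) : cwSpin (cwFlip i x i) = -cwSpin (x i) := by
  rw [cwFlip, Function.update_self, cwSpin_not]

lemma cwRest_cwFlip (i : Fin N) (x : Fin N → Bool) : cwRest i (cwFlip i x) = cwRest i x :=
  Finset.sum_congr rfl fun _ hj ↦ by
    rw [cwFlip, Function.update_of_ne (Finset.ne_of_mem_erase hj)]

lemma cwRest_sq_le (i : Fin N) (x : Fin N → Bool) : cwRest i x ^ 2 ≤ 2 * cwS x ^ 2 + 2 := by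
  rw [eq_sub_of_add_eq (cwRest_add_cwSpin i x)]
  linarith [sq_nonneg (cwS x + cwSpin (x i)), cwSpin_sq (x i)]

lemma sum_cwSpin (x : Fin N → Bool) : ∑ i, cwSpin (x i) = cwS x := rfl

lemma sum_cwRest_sq_le (x : Fin N → Bool) : ∑ i, cwRest i x ^ 2 ≤ N * (cwS x ^ 2 + 1) := by
  have hrest (i : Fin N) : cwRest i x ^ 2 = cwS x ^ 2 + 1 - 2 * cwS x * cwSpin (x i) := by
    rw [eq_sub_of_add_eq (cwRest_add_cwSpin i x)]
    linear_combination cwSpin_sq (x i)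
  simp only [hrest, Finset.sum_sub_distrib, ← Finset.mul_sum, sum_cwSpin, Finset.sum_const,
    Finset.card_univ, Fintype.card_fin, nsmul_eq_mul]
  nlinarith [sq_nonneg (cwS x)]

end Spin

section GibbsMean

variable {β : ℝ} {N : ℕ}

/-- The expectation of `f` under the Curie–Weiss law. -/
def cwMean (β : ℝ) {N : ℕ} (f : (Fin N → Bool) → ℝ) : ℝ := ∑ x, cwProb β x * f x

/-- The mean of the `i`-th spin under the Curie–Weiss law, conditionally on the other spins. -/
def cwCondMean (β : ℝ) {N : ℕ} (i : Fin N) (x : Fin N → Bool) : ℝ := tanh (β / N * cwRest i x)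

lemma cwZ_pos (β : ℝ) (N : ℕ) : 0 < cwZ β N :=
  Finset.sum_pos (fun _ _ ↦ exp_pos _) Finset.univ_nonempty

lemma cwProb_nonneg (x : Fin N → Bool) : 0 ≤ cwProb β x :=
  div_nonneg (exp_pos _).le (cwZ_pos β N).le

lemma sum_cwProb (β : ℝ) (N : ℕ) : ∑ x : Fin N → Bool, cwProb β x = 1 :=
  (Finset.sum_div _ _ _).symm.trans (div_self (cwZ_pos β N).ne')

lemma cwMean_const (c : ℝ) : cwMean β (fun _ : Fin N → Bool ↦ c) = c := by
  rw [cwMean, ← Finset.sum_mul, sum_cwProb, one_mul]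

lemma cwMean_add (f g : (Fin N → Bool) → ℝ) :
    cwMean β (fun x ↦ f x + g x) = cwMean β f + cwMean β g := by
  simp only [cwMean, mul_add, Finset.sum_add_distrib]

lemma cwMean_sub (f g : (Fin N → Bool) → ℝ) :
    cwMean β (fun x ↦ f x - g x) = cwMean β f - cwMean β g := by
  simp only [cwMean, mul_sub, Finset.sum_sub_distrib]

lemma cwMean_const_mul (c : ℝ) (f : (Fin N → Bool) → ℝ) :
    cwMean β (fun x ↦ c * f x) = c * cwMean β f := by
  simp only [cwMean, Finset.mul_sum, mul_left_comm]

lemma cwMean_sum {ι : Type*} (s : Finset ι) (f : ι → (Fin N → Bool) → ℝ) :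
    cwMean β (fun x ↦ ∑ i ∈ s, f i x) = ∑ i ∈ s, cwMean β (f i) := by
  simp only [cwMean, Finset.mul_sum]
  exact Finset.sum_comm

lemma cwMean_mono {f g : (Fin N → Bool) → ℝ} (hfg : ∀ x, f x ≤ g x) :
    cwMean β f ≤ cwMean β g :=
  Finset.sum_le_sum fun x _ ↦ mul_le_mul_of_nonneg_left (hfg x) (cwProb_nonneg x)

lemma abs_cwMean_le {f g : (Fin N → Bool) → ℝ} (hfg : ∀ x, |f x| ≤ g x) :
    |cwMean β f| ≤ cwMean β g := by
  refine (Finset.abs_sum_le_sum_abs _ _).trans (Finset.sum_le_sum fun x _ ↦ ?_)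
  rw [abs_mul, abs_of_nonneg (cwProb_nonneg x)]
  exact mul_le_mul_of_nonneg_left (hfg x) (cwProb_nonneg x)

lemma cwWeight_eq_mul_exp (β : ℝ) (i : Fin N) (x : Fin N → Bool) :
    cwWeight β x = rexp (β * (cwRest i x ^ 2 + 1) / (2 * N)) *
      rexp (cwSpin (x i) * (β / N * cwRest i x)) := by
  rw [cwWeight, ← exp_add, ← cwRest_add_cwSpin i x]
  congr 1
  linear_combination β / (2 * N) * cwSpin_sq (x i)

lemma cwProb_mul_sub_cwCondMean_add_cwFlip (i : Fin N) (x : Fin N → Bool) :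
    cwProb β x * (cwSpin (x i) - cwCondMean β i x) +
      cwProb β (cwFlip i x) * (cwSpin (cwFlip i x i) - cwCondMean β i (cwFlip i x)) = 0 := by
  have htanh := exp_mul_one_sub_tanh (β / N * cwRest i x)
  simp only [cwProb, cwCondMean, cwWeight_eq_mul_exp β i, cwRest_cwFlip, cwSpin_cwFlip]
  rcases eq_or_eq_neg_of_abs_eq (abs_cwSpin (x i)) with hspin | hspin <;>
  · simp only [hspin, neg_neg, neg_mul, one_mul]
    linear_combination (rexp (β * (cwRest i x ^ 2 + 1) / (2 * N)) / cwZ β N) * htanh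

lemma cwMean_sub_cwCondMean_mul_eq_zero (i : Fin N) {k : (Fin N → Bool) → ℝ}
    (hk : ∀ x, k (cwFlip i x) = k x) :
    cwMean β (fun x ↦ (cwSpin (x i) - cwCondMean β i x) * k x) = 0 := by
  refine Finset.sum_involution (fun x _ ↦ cwFlip i x) (fun x _ ↦ ?_)
    (fun x _ _ ↦ cwFlip_ne i x) (fun x _ ↦ Finset.mem_univ _) (fun x _ ↦ cwFlip_cwFlip i x)
  beta_reduce
  rw [hk, ← mul_assoc, ← mul_assoc, ← add_mul, cwProb_mul_sub_cwCondMean_add_cwFlip, zero_mul]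

lemma cwMean_sub_sum_sub_cwCondMean_mul (f : (Fin N → Bool) → ℝ)
    {k : Fin N → (Fin N → Bool) → ℝ} (hk : ∀ i x, k i (cwFlip i x) = k i x) :
    cwMean β (fun x ↦ f x - ∑ i, (cwSpin (x i) - cwCondMean β i x) * k i x) = cwMean β f := by
  rw [cwMean_sub, cwMean_sum,
    Finset.sum_eq_zero fun i _ ↦ cwMean_sub_cwCondMean_mul_eq_zero i (hk i), sub_zero]

lemma cwMean_cwS_sq_le (hβ : β < 1) (hN : N ≠ 0) :
    cwMean β (fun x : Fin N → Bool ↦ cwS x ^ 2) ≤ 2 / (1 - max β 0) * N := by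
  have hN' : (1 : ℝ) ≤ N := Nat.one_le_cast.2 (Nat.one_le_iff_ne_zero.2 hN)
  have hm : 0 < 1 - max β 0 := sub_pos.2 (max_lt hβ one_pos)
  have hsplit (x : Fin N → Bool) :
      cwS x ^ 2 - ∑ i, (cwSpin (x i) - cwCondMean β i x) * cwRest i x =
        N + ∑ i, cwRest i x * cwCondMean β i x := by
    have hsite (i : Fin N) : (cwSpin (x i) - cwCondMean β i x) * cwRest i x =
        cwSpin (x i) * cwS x - 1 - cwRest i x * cwCondMean β i x := by
      linear_combination cwSpin (x i) * cwRest_add_cwSpin i x - cwSpin_sq (x i)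
    simp only [hsite, Finset.sum_sub_distrib, ← Finset.sum_mul, sum_cwSpin, Finset.sum_const,
      Finset.card_univ, Fintype.card_fin, nsmul_eq_mul]
    ring
  have hdrift (x : Fin N → Bool) :
      ∑ i, cwRest i x * cwCondMean β i x ≤ max β 0 * (cwS x ^ 2 + 1) := calc
    _ ≤ ∑ i, max (β / N) 0 * cwRest i x ^ 2 :=
      Finset.sum_le_sum fun i _ ↦ mul_tanh_mul_le (β / N) (cwRest i x)
    _ ≤ max (β / N) 0 * (N * (cwS x ^ 2 + 1)) := by
      rw [← Finset.mul_sum]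
      exact mul_le_mul_of_nonneg_left (sum_cwRest_sq_le x) (le_max_right _ _)
    _ = max β 0 * (cwS x ^ 2 + 1) := by
      rw [← mul_assoc, max_mul_of_nonneg _ _ (Nat.cast_nonneg N), zero_mul,
        div_mul_cancel₀ β (by positivity)]
  have hself : cwMean β (fun x : Fin N → Bool ↦ cwS x ^ 2) ≤
      N + max β 0 * (cwMean β (fun x : Fin N → Bool ↦ cwS x ^ 2) + 1) := calc
    _ = cwMean β (fun x : Fin N → Bool ↦ N + ∑ i, cwRest i x * cwCondMean β i x) := by
      rw [← cwMean_sub_sum_sub_cwCondMean_mul _ cwRest_cwFlip]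
      simp only [hsplit]
    _ ≤ cwMean β (fun x : Fin N → Bool ↦ N + max β 0 * (cwS x ^ 2 + 1)) :=
      cwMean_mono fun x ↦ add_le_add_right (hdrift x) _
    _ = _ := by simp only [cwMean_add, cwMean_const_mul, cwMean_const]
  rw [div_mul_eq_mul_div, le_div_iff₀ hm]
  linarith

end GibbsMean

section SteinMethod

variable {N : ℕ} {β : ℝ} {F F' : ℝ → ℝ} {L : ℝ≥0}

lemma abs_site_remainder_le (hF : ∀ x, HasDerivAt F (F' x) x) (hF'L : LipschitzWith L F')
    (hFL : ∀ x, |F x| ≤ L) (hF'_le : ∀ x, |F' x| ≤ L) {σ : ℝ} (hσ : 0 < σ) (i : Fin N)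
    (x : Fin N → Bool) :
    |F' (cwS x / σ) -
        σ * (cwSpin (x i) - cwCondMean β i x) * (F (cwS x / σ) - F (cwRest i x / σ)) -
        σ * (cwCondMean β i x - β / N * cwS x) * F (cwS x / σ)| ≤
      L * (|β / N * cwRest i x| + 2 / σ + σ * (|β| / N + (β / N * cwRest i x) ^ 2)) := by
  set ε := cwSpin (x i)
  set t := cwCondMean β i x
  set y := β / N * cwRest i x with hy
  set w := cwS x / σ
  set R := F (cwRest i x / σ) - F w - (cwRest i x / σ - w) * F' w with hR
  have hε : |ε| = 1 := abs_cwSpin _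
  have hgap : cwRest i x / σ - w = -ε / σ := by
    rw [← sub_div, ← cwRest_add_cwSpin i x, sub_add_cancel_left]
  have hR_le : |R| ≤ L / σ ^ 2 := by
    have := norm_sub_sub_smul_le_of_lipschitzWith_deriv hF hF'L w (cwRest i x / σ)
    rwa [hgap, div_pow, neg_sq, cwSpin_sq, mul_one_div, ← hgap, smul_eq_mul, norm_eq_abs] at this
  have ht_le : |t| ≤ |y| := abs_tanh_le_abs y
  have hsub_le : |ε - t| ≤ 2 := by
    have ht_le_one : |t| ≤ 1 := (abs_tanh_lt_one y).le
    linarith [abs_sub ε t]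
  calc _ = |t * ε * F' w + σ * (ε - t) * R + -(σ * (t - y) * F w) + σ * (β / N) * ε * F w| := by
        congr 1
        rw [hR, hgap, hy, ← cwRest_add_cwSpin i x]
        field_simp
        linear_combination -F' w * cwSpin_sq (x i)
    _ ≤ |y| * 1 * L + σ * 2 * (L / σ ^ 2) + σ * y ^ 2 * L + σ * (|β| / N) * 1 * L := by
        refine (abs_add_le _ _).trans (add_le_add ((abs_add_three _ _ _).trans ?_) ?_)
        · simp only [abs_mul, abs_neg, abs_of_pos hσ, hε]
          gcongr
          exacts [hF'_le w, abs_tanh_sub_self_le y, hFL w]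
        · simp only [abs_mul, abs_div, abs_of_pos hσ, hε, Nat.abs_cast]
          gcongr
          exact hFL w
    _ = L * (|y| + 2 / σ + σ * (|β| / N + y ^ 2)) := by
        field_simp
        ring

lemma deriv_sub_mul_sub_sum_eq (u v : ℝ) (k : Fin N → ℝ) {σ : ℝ} (hN : N ≠ 0)
    (hσ : σ ^ 2 * (1 - β) = N) (x : Fin N → Bool) :
    u - cwS x / σ * v - ∑ i, (cwSpin (x i) - cwCondMean β i x) * -(σ / N * k i) =
      (∑ i, (u - σ * (cwSpin (x i) - cwCondMean β i x) * (v - k i) -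
        σ * (cwCondMean β i x - β / N * cwS x) * v)) / N := by
  have hN' : (N : ℝ) ≠ 0 := Nat.cast_ne_zero.2 hN
  have hσ_ne : σ ≠ 0 := by
    rintro rfl
    simp [hN'.symm] at hσ
  have hsite (i : Fin N) : u - σ * (cwSpin (x i) - cwCondMean β i x) * (v - k i) -
      σ * (cwCondMean β i x - β / N * cwS x) * v =
      u - σ * v * cwSpin (x i) - N * ((cwSpin (x i) - cwCondMean β i x) * -(σ / N * k i)) +
        σ * v * β * cwS x / N := by
    field_simp
    ring
  simp only [hsite, Finset.sum_add_distrib, Finset.sum_sub_distrib, ← Finset.mul_sum,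
    sum_cwSpin, Finset.sum_const, Finset.card_univ, Fintype.card_fin, nsmul_eq_mul]
  field_simp
  linear_combination cwS x * v * hσ

lemma site_error_le {q b : ℝ} (hq : 0 < q) (hb : 0 < b) (β y : ℝ) :
    |y| + 2 / (q / b) + q / b * (|β| / q ^ 2 + y ^ 2) ≤
      (1 + 2 * b + |β| / b + (1 + 1 / b) * (q ^ 2 * y ^ 2)) / q := by
  have hamgm : q * |y| ≤ 1 + q ^ 2 * y ^ 2 := by
    rw [← sq_abs y]
    nlinarith [sq_nonneg (q * |y| - 1)]
  rw [le_div_iff₀ hq]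
  calc (|y| + 2 / (q / b) + q / b * (|β| / q ^ 2 + y ^ 2)) * q
      = q * |y| + 2 * b + |β| / b + 1 / b * (q ^ 2 * y ^ 2) := by
        field_simp
        ring
    _ ≤ 1 + q ^ 2 * y ^ 2 + 2 * b + |β| / b + 1 / b * (q ^ 2 * y ^ 2) := by gcongr
    _ = _ := by ring

lemma abs_deriv_sub_mul_sub_sum_le (hF : ∀ x, HasDerivAt F (F' x) x) (hF'L : LipschitzWith L F')
    (hFL : ∀ x, |F x| ≤ L) (hF'_le : ∀ x, |F' x| ≤ L) (hβ : β < 1) (hN : N ≠ 0)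
    (x : Fin N → Bool) :
    |F' (cwW β x) - cwW β x * F (cwW β x) -
        ∑ i, (cwSpin (x i) - cwCondMean β i x) *
          -(√(N / (1 - β)) / N * F (cwRest i x / √(N / (1 - β))))| ≤
      L / √N * (1 + 2 * √(1 - β) + |β| / √(1 - β) +
        (1 + 1 / √(1 - β)) * β ^ 2 * ((2 * cwS x ^ 2 + 2) / N)) := by
  have hN' : (0 : ℝ) < N := Nat.cast_pos.2 (Nat.pos_of_ne_zero hN)
  have hβ' : 0 < 1 - β := sub_pos.2 hβ
  have hq : 0 < √(N : ℝ) := sqrt_pos.2 hN'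
  have hb : 0 < √(1 - β) := sqrt_pos.2 hβ'
  have hσ : √((N : ℝ) / (1 - β)) ^ 2 * (1 - β) = N := by
    rw [sq_sqrt (by positivity), div_mul_cancel₀ _ hβ'.ne']
  rw [cwW, deriv_sub_mul_sub_sum_eq _ _ _ hN hσ, abs_div, Nat.abs_cast, div_le_iff₀' hN']
  refine (Finset.abs_sum_le_sum_abs _ _).trans
    ((Finset.sum_le_card_nsmul _ _ _ fun i _ ↦ ?_).trans_eq
      (by rw [Finset.card_univ, Fintype.card_fin, nsmul_eq_mul]))
  have hy : √(N : ℝ) ^ 2 * (β / N * cwRest i x) ^ 2 ≤ β ^ 2 * ((2 * cwS x ^ 2 + 2) / N) := by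
    calc _ = β ^ 2 * (cwRest i x ^ 2 / N) := by
          rw [sq_sqrt hN'.le]
          field_simp
      _ ≤ _ := by
          gcongr
          exact cwRest_sq_le i x
  calc _ ≤ L * (|β / N * cwRest i x| + 2 / (√N / √(1 - β)) +
          √N / √(1 - β) * (|β| / √N ^ 2 + (β / N * cwRest i x) ^ 2)) := by
        rw [← sqrt_div' _ hβ'.le, sq_sqrt hN'.le]
        exact abs_site_remainder_le hF hF'L hFL hF'_le (sqrt_pos.2 (div_pos hN' hβ')) i x
    _ ≤ L * ((1 + 2 * √(1 - β) + |β| / √(1 - β) +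
          (1 + 1 / √(1 - β)) * (√N ^ 2 * (β / N * cwRest i x) ^ 2)) / √N) := by
        gcongr
        exact site_error_le hq hb β _
    _ ≤ L * ((1 + 2 * √(1 - β) + |β| / √(1 - β) +
          (1 + 1 / √(1 - β)) * (β ^ 2 * ((2 * cwS x ^ 2 + 2) / N))) / √N) := by gcongr
    _ = _ := by ring

/-- The constant produced by Stein's method for the Curie–Weiss model; its last summand comes from
`2 * (E s² + 1) ≤ (4 / (1 - max β 0) + 2) * N`. -/
def cwSteinConst (β : ℝ) : ℝ :=
  1 + 2 * √(1 - β) + |β| / √(1 - β) +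
    (1 + 1 / √(1 - β)) * β ^ 2 * (4 / (1 - max β 0) + 2)

lemma cwSteinConst_pos (hβ : β < 1) : 0 < cwSteinConst β := by
  have hm : 0 < 1 - max β 0 := sub_pos.2 (max_lt hβ one_pos)
  rw [cwSteinConst]
  positivity

lemma abs_cwMean_deriv_sub_mul_le (hF : ∀ x, HasDerivAt F (F' x) x) (hF'L : LipschitzWith L F')
    (hFL : ∀ x, |F x| ≤ L) (hF'_le : ∀ x, |F' x| ≤ L) (hβ : β < 1) (hN : N ≠ 0) :
    |cwMean β fun x : Fin N → Bool ↦ F' (cwW β x) - cwW β x * F (cwW β x)| ≤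
      L / √N * cwSteinConst β := by
  have hN' : (1 : ℝ) ≤ N := Nat.one_le_cast.2 (Nat.one_le_iff_ne_zero.2 hN)
  have hsecond : (2 * cwMean β (fun x : Fin N → Bool ↦ cwS x ^ 2) + 2) / N ≤
      4 / (1 - max β 0) + 2 := by
    rw [div_le_iff₀ (by positivity)]
    linear_combination 2 * cwMean_cwS_sq_le hβ hN + 2 * hN'
  rw [← cwMean_sub_sum_sub_cwCondMean_mul
    (k := fun i x ↦ -(√(N / (1 - β)) / N * F (cwRest i x / √(N / (1 - β)))))
    _ fun i x ↦ by rw [cwRest_cwFlip]]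
  refine (abs_cwMean_le (abs_deriv_sub_mul_sub_sum_le hF hF'L hFL hF'_le hβ hN)).trans ?_
  simp only [div_eq_inv_mul (_ + _) (N : ℝ), cwMean_const_mul, cwMean_add, cwMean_const,
    cwSteinConst] at hsecond ⊢
  gcongr

lemma abs_cwMean_sub_integral_gaussianReal_le {ψ : ℝ → ℝ} {K : ℝ≥0} (hψ : LipschitzWith K ψ)
    (hβ : β < 1) (hN : N ≠ 0) :
    |cwMean β (fun x : Fin N → Bool ↦ ψ (cwW β x)) - ∫ z, ψ z ∂(gaussianReal 0 1)| ≤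
      (9 * K) / √N * cwSteinConst β := by
  have hi := integrable_of_lipschitzWith integrable_id_gaussianReal hψ
  have hK : 4 * (K : ℝ) ≤ (9 * K : ℝ≥0) := by
    push_cast
    gcongr
    norm_num
  have hstein := abs_cwMean_deriv_sub_mul_le (N := N) (hasDerivAt_steinSolution hψ.continuous hi)
    (lipschitzWith_steinSolutionDeriv hψ) (fun x ↦ (abs_steinSolution_le hψ x).trans hK)
    (fun x ↦ (abs_steinSolutionDeriv_le hψ x).trans hK) hβ hN
  simpa [steinSolutionDeriv, cwMean_sub, cwMean_const] using hstein

end SteinMethod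

theorem curie_weiss_wasserstein_clt_general (β : ℝ) (hβ : β < 1) :
    ∃ C : ℝ, 0 < C ∧ ∀ N : ℕ, 1 ≤ N → ∀ ψ : ℝ → ℝ, LipschitzWith 1 ψ →
      |(∑ x : Fin N → Bool, cwProb β x * ψ (cwW β x)) -
          ∫ z, ψ z ∂(gaussianReal 0 1)| ≤ C / √N := by
  refine ⟨9 * cwSteinConst β, mul_pos (by norm_num) (cwSteinConst_pos hβ), fun N hN ψ hψ ↦ ?_⟩
  have h := abs_cwMean_sub_integral_gaussianReal_le hψ hβ (Nat.one_le_iff_ne_zero.1 hN)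
  rwa [NNReal.coe_one, mul_one, div_mul_eq_mul_div] at h

/-- **CLT for the subcritical Curie–Weiss model (Wasserstein distance)**:
`d_Wass(W, Z) ≤ C/√N`. -/
theorem curie_weiss_wasserstein_clt (β : ℝ) (hβ0 : 0 < β) (hβ1 : β < 1) :
    ∃ C : ℝ, 0 < C ∧ ∀ N : ℕ, 1 ≤ N → ∀ ψ : ℝ → ℝ, LipschitzWith 1 ψ →
      |(∑ x : Fin N → Bool, cwProb β x * ψ (cwW β x)) -
          ∫ z, ψ z ∂(gaussianReal 0 1)| ≤ C / Real.sqrt N :=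
  curie_weiss_wasserstein_clt_general β hβ1
end
end
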